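/- arXiv:alg-geom/9506002 — 3 statements merged into one kernel-verified Lean document; each statement's English description precedes it below -/
import Mathlib

section
/- Let f : ℝ² → ℝ be a nonconstant real polynomial function of degree d in two variables with only finitely many critical points, and suppose that the homogeneous part f_d of degree d has no repeated real linear factors, i.e., for every (a,b) ≠ (0,0) the square (b·x − a·y)² does not divide f_d. Then for every admissible radius R the index i of grad f around the circle of radius R equals 1 − d_R, where d_R is the real degree of f. -/
open MvPolynomial Filter

/-- Evaluation of a polynomial in two variables at the point `(x, y)`. -/
noncomputable def evalP (f : MvPolynomial (Fin 2) ℝ) (x y : ℝ) : ℝ :=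
  MvPolynomial.eval ![x, y] f

/-- `p` is a critical point of `f`: both partial derivatives vanish at `p`. -/
def IsCriticalPt (f : MvPolynomial (Fin 2) ℝ) (p : ℝ × ℝ) : Prop :=
  evalP (pderiv 0 f) p.1 p.2 = 0 ∧ evalP (pderiv 1 f) p.1 p.2 = 0

/-- `u(t) = f_x(R cos t, R sin t)`. -/
noncomputable def uFun (f : MvPolynomial (Fin 2) ℝ) (R t : ℝ) : ℝ :=
  evalP (pderiv 0 f) (R * Real.cos t) (R * Real.sin t)

/-- `v(t) = f_y(R cos t, R sin t)`. -/
noncomputable def vFun (f : MvPolynomial (Fin 2) ℝ) (R t : ℝ) : ℝ :=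
  evalP (pderiv 1 f) (R * Real.cos t) (R * Real.sin t)

/-- The index of `grad f` around the circle of radius `R`, as the winding-number
integral `(1/(2π)) ∫₀^{2π} (u v' - v u')/(u² + v²) dt`. -/
noncomputable def gradIndex (f : MvPolynomial (Fin 2) ℝ) (R : ℝ) : ℝ :=
  (1 / (2 * Real.pi)) *
    ∫ t in (0:ℝ)..(2 * Real.pi),
      (uFun f R t * deriv (vFun f R) t - vFun f R t * deriv (uFun f R) t) /
        ((uFun f R t) ^ 2 + (vFun f R t) ^ 2)

/-- The multiplicity of the real linear form `b·x − a·y` in `F`: the largest `m`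
such that `(b·x − a·y)^m` divides `F` in `ℝ[x,y]`. -/
noncomputable def linMult (F : MvPolynomial (Fin 2) ℝ) (a b : ℝ) : ℕ :=
  sSup {m : ℕ | (C b * X 0 - C a * X 1) ^ m ∣ F}

/-- The "real degree" of a homogeneous polynomial `F`: the sum, over the points
`[a : b]` of the real projective line (represented by `[a : 1]` for `a ∈ ℝ`,
together with `[1 : 0]`), of the multiplicity of the real linear factor
`b·x − a·y` in `F`; i.e. the sum of the multiplicities of the real linear
factors of `F`. -/
noncomputable def realDegreeOf (F : MvPolynomial (Fin 2) ℝ) : ℕ :=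
  (∑ᶠ a : ℝ, linMult F a 1) + linMult F 1 0

/-!
For `s = 1 / r`, the polynomial `s ^ d * f (x / s, y / s)` has on the unit circle the same gradient
index as `f` on the circle of radius `r`. It tends to the leading form `F = f_d` as `s → 0`, and its
gradient does not vanish on the circle for `r ≥ R`, nor at `s = 0` because at a zero of `∇F` the
square of the corresponding linear form would divide `F`. So the index is that of `∇F`.

With `h t = F (cos t, sin t)`, the gradient of `F` at `exp (t * I)` is `exp (t * I)` times
`d * h + h' * I`, which contributes one full turn from the factor `exp (t * I)`. The other factor is
multiplied by the real number `(-1) ^ d` when `t` increases by `π`, and it crosses the imaginary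
axis clockwise whenever `h` vanishes, so its argument changes by `-π` for every zero of `h` in
`[0, π)`, that is, for every real linear factor of `F`.
-/

section LogDeriv

open Complex

theorem continuous_logDeriv {γ : ℝ → ℂ} (hγ : ContDiff ℝ 1 γ) (hγ0 : ∀ t, γ t ≠ 0) :
    Continuous (logDeriv γ) :=
  hγ.continuous_deriv_one.div hγ.continuous hγ0

theorem eq_mul_exp_integral_logDeriv {γ : ℝ → ℂ} (hγ : ContDiff ℝ 1 γ) (hγ0 : ∀ t, γ t ≠ 0)
    (a b : ℝ) : γ b = γ a * exp (∫ t in a..b, logDeriv γ t) := by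
  have hL (t : ℝ) : HasDerivAt (fun t ↦ ∫ s in a..t, logDeriv γ s) (logDeriv γ t) t :=
    (continuous_logDeriv hγ hγ0).integral_hasStrictDerivAt a t |>.hasDerivAt
  have hg (t : ℝ) : HasDerivAt (fun t ↦ γ t * exp (-∫ s in a..t, logDeriv γ s)) 0 t := by
    refine ((hγ.differentiable one_ne_zero t).hasDerivAt.mul (hL t).neg.cexp).congr_deriv ?_
    rw [logDeriv_apply]
    field_simp [hγ0 t]
    ring
  have hconst := is_const_of_deriv_eq_zero (fun t ↦ (hg t).differentiableAt)
    (fun t ↦ (hg t).deriv) b a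
  simp only [intervalIntegral.integral_same, neg_zero, exp_zero, mul_one] at hconst
  rw [← hconst, mul_assoc, ← exp_add, neg_add_cancel, exp_zero, mul_one]

theorem integral_logDeriv_mem_zmultiples {γ : ℝ → ℂ} {a b : ℝ} (hγ : ContDiff ℝ 1 γ)
    (hγ0 : ∀ t, γ t ≠ 0) (hab : γ b = γ a) :
    ∫ t in a..b, logDeriv γ t ∈ AddSubgroup.zmultiples (2 * Real.pi * I) := by
  have hexp : exp (∫ t in a..b, logDeriv γ t) = 1 := by
    have h := eq_mul_exp_integral_logDeriv hγ hγ0 a b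
    rwa [hab, eq_comm, mul_eq_left₀ (hγ0 a)] at h
  obtain ⟨n, hn⟩ := exp_eq_one_iff.1 hexp
  exact ⟨n, by simp [hn]⟩

theorem integral_logDeriv_eq_of_preconnected {X : Type*} [TopologicalSpace X]
    [PreconnectedSpace X] {γ : X → ℝ → ℂ} {a b : ℝ} (hγ : ∀ x, ContDiff ℝ 1 (γ x))
    (hγ0 : ∀ x t, γ x t ≠ 0) (hab : ∀ x, γ x b = γ x a)
    (hlog : Continuous fun q : X × ℝ ↦ logDeriv (γ q.1) q.2) (x y : X) :
    ∫ t in a..b, logDeriv (γ x) t = ∫ t in a..b, logDeriv (γ y) t :=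
  have : DiscreteTopology (AddSubgroup.zmultiples (2 * Real.pi * I)) :=
    NormedSpace.discreteTopology_zmultiples _
  isPreconnected_univ.constant_of_mapsTo
    (T := (AddSubgroup.zmultiples (2 * Real.pi * I) : Set ℂ)) ⟨inferInstance⟩
    (intervalIntegral.continuous_parametric_intervalIntegral_of_continuous' hlog a b).continuousOn
    (fun z _ ↦ integral_logDeriv_mem_zmultiples (hγ z) (hγ0 z) (hab z)) trivial trivial

theorem im_integral_logDeriv {γ : ℝ → ℂ} (hγ : ContDiff ℝ 1 γ) (hγ0 : ∀ t, γ t ≠ 0) (a b : ℝ) :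
    (∫ t in a..b, logDeriv γ t).im = ∫ t in a..b, (logDeriv γ t).im :=
  (imCLM.intervalIntegral_comp_comm
    ((continuous_logDeriv hγ hγ0).intervalIntegrable a b)).symm

theorem eq_norm_mul_exp_arg_add_integral {γ : ℝ → ℂ} (hγ : ContDiff ℝ 1 γ)
    (hγ0 : ∀ t, γ t ≠ 0) (a b : ℝ) :
    γ b = ‖γ b‖ * exp (↑((γ a).arg + ∫ t in a..b, (logDeriv γ t).im) * I) := by
  have hexp := eq_mul_exp_integral_logDeriv hγ hγ0 a b
  rw [← im_integral_logDeriv hγ hγ0]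
  generalize ∫ t in a..b, logDeriv γ t = L at hexp ⊢
  calc γ b = ‖γ a‖ * exp ((γ a).arg * I) * exp (L.re + L.im * I) := by
        rw [norm_mul_exp_arg_mul_I, re_add_im, hexp]
    _ = ‖γ b‖ * exp (↑((γ a).arg + L.im) * I) := by
        rw [hexp, norm_mul, norm_exp, exp_add, ofReal_add, add_mul, exp_add]
        push_cast
        ring

theorem logDeriv_ofReal_add_ofReal_mul_I_im {u v : ℝ → ℝ} {u' v' t : ℝ} (hu : HasDerivAt u u' t)
    (hv : HasDerivAt v v' t) :
    (logDeriv (fun t ↦ (u t + v t * I : ℂ)) t).im =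
      (u t * v' - v t * u') / (u t ^ 2 + v t ^ 2) := by
  have hderiv := (hu.ofReal_comp.fun_add (hv.ofReal_comp.mul_const I)).deriv
  rw [logDeriv_apply, hderiv, div_im, normSq_add_mul_I]
  simp only [add_re, add_im, mul_re, mul_im, ofReal_re, ofReal_im, I_re, I_im]
  ring

theorem continuous_logDeriv_sum {ι X : Type*} [TopologicalSpace X] {s : Finset ι}
    {c : ι → X → ℂ} {γ : ι → ℝ → ℂ} (hc : ∀ i, Continuous (c i)) (hγ : ∀ i, ContDiff ℝ 1 (γ i))
    (h0 : ∀ x t, ∑ i ∈ s, c i x * γ i t ≠ 0) :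
    Continuous fun q : X × ℝ ↦ logDeriv (fun t ↦ ∑ i ∈ s, c i q.1 * γ i t) q.2 := by
  have hderiv (x : X) (t : ℝ) :
      deriv (fun t ↦ ∑ i ∈ s, c i x * γ i t) t = ∑ i ∈ s, c i x * deriv (γ i) t :=
    (HasDerivAt.fun_sum fun i _ ↦
      ((hγ i).differentiable one_ne_zero t).hasDerivAt.const_mul (c i x)).deriv
  simp only [logDeriv_apply, hderiv]
  refine .div ?_ ?_ fun q ↦ h0 q.1 q.2
  · exact continuous_finsetSum _ fun i _ ↦ ((hc i).comp continuous_fst).mul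
      ((hγ i).continuous_deriv_one.comp continuous_snd)
  · exact continuous_finsetSum _ fun i _ ↦ ((hc i).comp continuous_fst).mul
      ((hγ i).continuous.comp continuous_snd)

theorem periodic_logDeriv_of_map_add {γ : ℝ → ℂ} {T : ℝ} {c : ℂ} (hc : c ≠ 0)
    (hγ : ∀ t, γ (t + T) = c * γ t) : Function.Periodic (logDeriv γ) T := by
  intro t
  rw [← logDeriv_const_mul t c hc, ← funext hγ, logDeriv_apply, logDeriv_apply,
    deriv_comp_add_const]

end LogDeriv

section Crossing

open Set Real

theorem lt_of_le_of_deriv_neg_of_eq {φ : ℝ → ℝ} {c s t : ℝ} (hφ : Differentiable ℝ φ)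
    (hc : ∀ x, φ x = c → deriv φ x < 0) (hst : s < t) (hs : φ s ≤ c) : φ t < c := by
  have hle : ∀ ⦃x⦄, x ∈ Icc s t → φ x ≤ c :=
    image_le_of_deriv_right_lt_deriv_boundary hφ.continuous.continuousOn
      (fun x _ ↦ (hφ x).hasDerivAt.hasDerivWithinAt) hs (fun x ↦ hasDerivAt_const x c)
      (fun x _ ↦ hc x)
  refine (hle ⟨hst.le, le_rfl⟩).lt_of_ne fun htc ↦ ?_
  have hsign := eventually_nhdsWithin_sign_eq_of_deriv_neg (f := fun x ↦ φ x - c) (x₀ := t)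
    (by simpa using hc t htc) (sub_eq_zero.2 htc)
  obtain ⟨r, hr, hsr, hrt⟩ := ((hsign.filter_mono nhdsWithin_le_nhds).and
    (Ioo_mem_nhdsLT hst)).exists
  rw [sign_pos (sub_pos.2 hrt), sign_eq_one_iff, sub_pos] at hr
  exact hr.not_ge (hle ⟨hsr.le, hrt.le⟩)

theorem bijOn_level_crossings {φ : ℝ → ℝ} {S : Set ℝ} {a b : ℝ} (hφ : Differentiable ℝ φ)
    (hS : ∀ t, φ t ∈ S → deriv φ t < 0) (hab : a ≤ b) :
    BijOn φ {t ∈ Ico a b | φ t ∈ S} (S ∩ Ioc (φ b) (φ a)) := by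
  have cross {s t : ℝ} (hs : φ s ∈ S) : s < t → φ t < φ s := fun hst ↦
    lt_of_le_of_deriv_neg_of_eq hφ (fun x hx ↦ hS x (hx ▸ hs)) hst le_rfl
  refine ⟨?_, ?_, ?_⟩
  · rintro t ⟨⟨hat, htb⟩, ht⟩
    refine ⟨ht, cross ht htb, not_lt.1 fun hlt ↦ ?_⟩
    rcases hat.eq_or_lt with rfl | hat
    · exact hlt.false
    · exact (lt_of_le_of_deriv_neg_of_eq hφ (fun x hx ↦ hS x (hx ▸ ht)) hat hlt.le).false
  · rintro s ⟨-, hs⟩ t ⟨-, ht⟩ hst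
    rcases lt_trichotomy s t with h | h | h
    · exact absurd hst (cross hs h).ne'
    · exact h
    · exact absurd hst (cross ht h).ne
  · rintro c ⟨hcS, hbc, hca⟩
    obtain ⟨t, ⟨hat, htb⟩, rfl⟩ :=
      intermediate_value_Icc' hab hφ.continuous.continuousOn ⟨hbc.le, hca⟩
    exact ⟨t, ⟨⟨hat, htb.lt_of_ne fun h ↦ hbc.ne (h ▸ rfl)⟩, hcS⟩, rfl⟩

theorem bijOn_intCast_mul_pi_sin_zeros (a b : ℝ) :
    BijOn (fun k : ℤ ↦ k * π) (Ioc ⌊a / π⌋ ⌊b / π⌋) ({x | sin x = 0} ∩ Ioc a b) := by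
  rw [← Int.preimage_Ioc]
  refine ⟨fun k hk ↦ ⟨sin_int_mul_pi k, (div_lt_iff₀ pi_pos).1 hk.1,
    (le_div_iff₀ pi_pos).1 hk.2⟩, ?_, ?_⟩
  · exact fun k _ l _ h ↦ Int.cast_injective (mul_right_cancel₀ pi_ne_zero h)
  · rintro x ⟨hx, hax, hxb⟩
    obtain ⟨k, rfl⟩ := sin_eq_zero_iff.1 hx
    exact ⟨k, ⟨(div_lt_iff₀ pi_pos).2 hax, (le_div_iff₀ pi_pos).2 hxb⟩, rfl⟩

theorem finite_sin_zeros_and_eq_sub_ncard_mul_pi {φ : ℝ → ℝ} {a b : ℝ} {n : ℤ}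
    (hφ : Differentiable ℝ φ) (hneg : ∀ t, sin (φ t) = 0 → deriv φ t < 0) (hab : a < b)
    (hn : φ b = φ a - n * π) :
    {t ∈ Ico a b | sin (φ t) = 0}.Finite ∧
      φ b = φ a - {t ∈ Ico a b | sin (φ t) = 0}.ncard * π := by
  have hcross := bijOn_level_crossings (S := {x | sin x = 0}) hφ hneg hab.le
  have hlevels := bijOn_intCast_mul_pi_sin_zeros (φ b) (φ a)
  have hn0 : 0 ≤ n := by
    -- Otherwise `φ` ends at or above the first level `≥ φ a`, which it can only cross downwards.
    by_contra! hlt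
    have hlevel : ⌈φ a / π⌉ * π ≤ φ b := by
      have hceil := (Int.ceil_lt_add_one (φ a / π)).le
      have hn1 : (n : ℝ) ≤ -1 := by exact_mod_cast Int.le_sub_one_of_lt hlt
      rw [← sub_le_iff_le_add, le_div_iff₀ pi_pos] at hceil
      nlinarith [pi_pos]
    refine hlevel.not_gt (lt_of_le_of_deriv_neg_of_eq hφ (fun t ht ↦ hneg t ?_) hab ?_)
    · rw [ht, sin_int_mul_pi]
    · exact (div_le_iff₀ pi_pos).1 (Int.le_ceil _)
  have hfloor : ⌊φ b / π⌋ = ⌊φ a / π⌋ - n := by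
    rw [hn, sub_div, mul_div_cancel_right₀ _ pi_ne_zero, Int.floor_sub_intCast]
  have hcard : ({t ∈ Ico a b | sin (φ t) = 0}.ncard : ℤ) = n := by
    have hcount := hcross.ncard_eq.trans hlevels.ncard_eq.symm
    rw [← Finset.coe_Ioc, ncard_coe_finset, Int.card_Ioc, hfloor, sub_sub_cancel] at hcount
    exact (congrArg Nat.cast hcount).trans (Int.toNat_of_nonneg hn0)
  refine ⟨hcross.finite_iff_finite.2 (hlevels.finite_iff_finite.1 (finite_Ioc _ _)), ?_⟩
  rw [hn, ← hcard, Int.cast_natCast]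

theorem finite_im_zeros_and_integral_logDeriv_im_eq {ζ : ℝ → ℂ} {a b r : ℝ}
    (hζ : ContDiff ℝ 1 ζ) (hζ0 : ∀ t, ζ t ≠ 0)
    (hneg : ∀ t, (ζ t).im = 0 → (logDeriv ζ t).im < 0) (hab : a < b) (hr : ζ b = r * ζ a) :
    {t ∈ Ico a b | (ζ t).im = 0}.Finite ∧
      ∫ t in a..b, (logDeriv ζ t).im = -({t ∈ Ico a b | (ζ t).im = 0}.ncard * π) := by
  set φ : ℝ → ℝ := fun t ↦ (ζ a).arg + ∫ s in a..t, (logDeriv ζ s).im with hφ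
  have hφ' (t : ℝ) : HasDerivAt φ (logDeriv ζ t).im t :=
    ((Complex.continuous_im.comp (continuous_logDeriv hζ hζ0)).integral_hasStrictDerivAt
      a t).hasDerivAt.const_add _
  have him (t : ℝ) : (ζ t).im = 0 ↔ sin (φ t) = 0 := by
    have h := congrArg Complex.im (eq_norm_mul_exp_arg_add_integral hζ hζ0 a t)
    rw [Complex.im_ofReal_mul, Complex.exp_ofReal_mul_I_im] at h
    rw [h, mul_eq_zero, or_iff_right (norm_ne_zero_iff.2 (hζ0 t))]
  obtain ⟨n, hn⟩ : ∃ n : ℤ, n * π = ∫ t in a..b, (logDeriv ζ t).im := by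
    have hexp := eq_mul_exp_integral_logDeriv hζ hζ0 a b
    rw [hr, mul_comm, mul_right_inj' (hζ0 a)] at hexp
    rw [← sin_eq_zero_iff, ← im_integral_logDeriv hζ hζ0]
    simpa [Complex.exp_im] using congrArg Complex.im hexp.symm
  simp only [him] at hneg ⊢
  obtain ⟨hfin, hcount⟩ := finite_sin_zeros_and_eq_sub_ncard_mul_pi (n := -n)
    (fun t ↦ (hφ' t).differentiableAt) (fun t ht ↦ (hφ' t).deriv ▸ hneg t ht) hab
    (by simp [hφ, hn])
  refine ⟨hfin, ?_⟩
  simp only [hφ, intervalIntegral.integral_same, add_zero] at hcount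
  linarith

end Crossing

section BinaryForm

theorem sq_dvd_aeval_add_mul_sub {σ R A : Type*} [Fintype σ] [CommRing R] [CommRing A]
    [Algebra R A] (p : MvPolynomial σ R) (x e : σ → A) (l : A) :
    l ^ 2 ∣ aeval (fun i ↦ x i + l * e i) p - aeval x p - l * ∑ i, aeval x (pderiv i p) * e i := by
  classical
  induction p using MvPolynomial.induction_on with
  | C r => simp
  | add p q hp hq =>
    convert hp.add hq using 1
    simp only [map_add, add_mul, Finset.sum_add_distrib]
    ring
  | mul_X p i hp =>
    obtain ⟨w, hw⟩ := hp
    have hsum : ∑ j, aeval x (pderiv j (p * X i)) * e j =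
        x i * ∑ j, aeval x (pderiv j p) * e j + aeval x p * e i := by
      simp [pderiv_X, Pi.single_apply, apply_ite, add_mul, Finset.sum_add_distrib, Finset.mul_sum,
        add_comm, mul_assoc]
    refine ⟨w * (x i + l * e i) + (∑ j, aeval x (pderiv j p) * e j) * e i, ?_⟩
    rw [hsum, map_mul, map_mul, aeval_X, aeval_X]
    linear_combination (x i + l * e i) * hw

theorem aeval_mul_eq_pow_mul_aeval {σ R A : Type*} [CommSemiring R] [CommSemiring A] [Algebra R A]
    {p : MvPolynomial σ R} {n : ℕ} (hp : p.IsHomogeneous n) (c : A) (x : σ → A) :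
    aeval (fun i ↦ c * x i) p = c ^ n * aeval x p := by
  simp only [aeval_def, eval₂_eq, Finset.mul_sum]
  refine Finset.sum_congr rfl fun m hm ↦ ?_
  rw [hp.degree_eq_sum_deg_support hm]
  simp only [mul_pow, Finset.prod_mul_distrib, Finset.prod_pow_eq_pow_sum]
  ring

variable {R : Type*} [CommRing R] {F : MvPolynomial (Fin 2) R} {n : ℕ} {a b u v : R}

theorem linear_sq_dvd_sub_of_isHomogeneous (hF : F.IsHomogeneous n) (huv : u * a + v * b = 1) :
    (C b * X 0 - C a * X 1) ^ 2 ∣ F - (C u * X 0 + C v * X 1) ^ n * C (eval ![a, b] F) -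
      (C b * X 0 - C a * X 1) * ((C u * X 0 + C v * X 1) ^ (n - 1) *
        C (v * eval ![a, b] (pderiv 0 F) - u * eval ![a, b] (pderiv 1 F))) := by
  set l : MvPolynomial (Fin 2) R := C b * X 0 - C a * X 1 with hl
  set m : MvPolynomial (Fin 2) R := C u * X 0 + C v * X 1 with hm
  have hscale {G : MvPolynomial (Fin 2) R} {k : ℕ} (hG : G.IsHomogeneous k) :
      aeval (fun i ↦ m * C (![a, b] i)) G = m ^ k * C (eval ![a, b] G) := by
    have h := aeval_algebraMap_apply (MvPolynomial (Fin 2) R) ![a, b] G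
    rw [aeval_mul_eq_pow_mul_aeval hG, ← algebraMap_eq, ← coe_aeval_eq_eval]
    exact congrArg _ h
  -- `X = m • (a, b) + l • (v, -u)`: the claim is the Taylor expansion of `F` in powers of `l`.
  have hX : (fun i ↦ m * C (![a, b] i) + l * ![C v, -C u] i) = X := by
    have huv' : (C u * C a + C v * C b : MvPolynomial (Fin 2) R) = 1 := by
      simp only [← C_mul, ← C_add, huv, C_1]
    funext i
    fin_cases i
    · simp only [hl, hm, Fin.zero_eta, Matrix.cons_val]
      linear_combination X 0 * huv'
    · simp only [hl, hm, Fin.mk_one, Matrix.cons_val]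
      linear_combination X 1 * huv'
  have h := sq_dvd_aeval_add_mul_sub F (fun i ↦ m * C (![a, b] i)) ![C v, -C u] l
  rw [hX, aeval_X_left_apply, hscale hF, Fin.sum_univ_two, hscale hF.pderiv, hscale hF.pderiv] at h
  convert h using 3
  simp only [Matrix.cons_val, C_sub, C_mul]
  ring

theorem linear_dvd_iff_eval_eq_zero (hF : F.IsHomogeneous n) (hab : IsCoprime a b) :
    C b * X 0 - C a * X 1 ∣ F ↔ eval ![a, b] F = 0 := by
  obtain ⟨u, v, huv⟩ := hab
  refine ⟨?_, fun h ↦ ?_⟩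
  · rintro ⟨G, rfl⟩
    simp [mul_comm]
  · have hdvd := (dvd_pow_self _ two_ne_zero).trans (linear_sq_dvd_sub_of_isHomogeneous hF huv)
    rw [dvd_sub_left (Dvd.intro _ rfl)] at hdvd
    simpa [h] using hdvd

theorem linear_sq_dvd_of_eval_pderiv_eq_zero [NoZeroDivisors R] (hF : F.IsHomogeneous n)
    (hn : (n : R) ≠ 0) (hab : IsCoprime a b) (h0 : eval ![a, b] (pderiv 0 F) = 0)
    (h1 : eval ![a, b] (pderiv 1 F) = 0) : (C b * X 0 - C a * X 1) ^ 2 ∣ F := by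
  obtain ⟨u, v, huv⟩ := hab
  have heuler : eval ![a, b] F = 0 := by
    have h := congrArg (eval ![a, b]) hF.sum_X_mul_pderiv
    simpa [h0, h1, hn] using h.symm
  simpa [h0, h1, heuler] using linear_sq_dvd_sub_of_isHomogeneous hF huv

end BinaryForm

section RealDegree

open Real

variable {F : MvPolynomial (Fin 2) ℝ} {n : ℕ}

/-- The restriction of `p` to the unit circle, as a function of the angle. -/
noncomputable def onCircle (p : MvPolynomial (Fin 2) ℝ) (t : ℝ) : ℝ :=
  evalP p (cos t) (sin t)

theorem isCoprime_cos_sin (t : ℝ) : IsCoprime (cos t) (sin t) :=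
  ⟨cos t, sin t, by rw [← sq, ← sq, cos_sq_add_sin_sq]⟩

theorem evalP_mul_mul (hF : F.IsHomogeneous n) (c x y : ℝ) :
    evalP F (c * x) (c * y) = c ^ n * evalP F x y := by
  have hvec : ![c * x, c * y] = fun i ↦ c * ![x, y] i := (Matrix.smul_vec2 c x y).symm
  rw [evalP, evalP, hvec, ← coe_aeval_eq_eval]
  exact aeval_mul_eq_pow_mul_aeval hF c ![x, y]

theorem linMult_eq_ite {a b : ℝ} (hF : F.IsHomogeneous n) (hab : IsCoprime a b)
    (hsq : ¬ (C b * X 0 - C a * X 1) ^ 2 ∣ F) :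
    linMult F a b = if evalP F a b = 0 then 1 else 0 := by
  have hdvd := linear_dvd_iff_eval_eq_zero hF hab
  split_ifs with h
  · exact IsGreatest.csSup_eq ⟨by simpa using hdvd.2 h,
      fun m hm ↦ not_lt.1 fun hm1 ↦ hsq ((pow_dvd_pow _ hm1).trans hm)⟩
  · exact IsGreatest.csSup_eq ⟨by simp,
      fun m hm ↦ not_lt.1 fun hm0 ↦ h (hdvd.1 ((dvd_pow_self _ hm0.ne').trans hm))⟩

theorem onCircle_pi_div_two_sub_arctan (hF : F.IsHomogeneous n) (a : ℝ) :
    onCircle F (π / 2 - arctan a) = cos (arctan a) ^ n * evalP F a 1 := by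
  rw [← evalP_mul_mul hF, onCircle, cos_pi_div_two_sub, sin_pi_div_two_sub, mul_one,
    ← tan_mul_cos (cos_arctan_pos a).ne', tan_arctan, mul_comm]

theorem bijOn_pi_div_two_sub_arctan_zeros (hF : F.IsHomogeneous n) :
    Set.BijOn (fun a ↦ π / 2 - arctan a) {a | evalP F a 1 = 0}
      ({t ∈ Set.Ico 0 π | onCircle F t = 0} \ {0}) := by
  have hzero (a : ℝ) : onCircle F (π / 2 - arctan a) = 0 ↔ evalP F a 1 = 0 := by
    simp [onCircle_pi_div_two_sub_arctan hF, (cos_arctan_pos a).ne']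
  refine ⟨fun a ha ↦ ?_, fun a _ b _ hab ↦ arctan_injective (sub_right_injective hab), ?_⟩
  · have hlt := arctan_lt_pi_div_two a
    have hgt := neg_pi_div_two_lt_arctan a
    exact ⟨⟨⟨by linarith, by linarith⟩, (hzero a).2 ha⟩, ne_of_gt (by linarith)⟩
  · rintro t ⟨⟨⟨h0t, htπ⟩, ht⟩, ht0⟩
    have h0t : 0 < t := h0t.lt_of_ne' ht0
    have harctan : π / 2 - arctan (tan (π / 2 - t)) = t := by
      rw [arctan_tan (by linarith) (by linarith), sub_sub_cancel]
    exact ⟨tan (π / 2 - t), (hzero _).1 (harctan.symm ▸ ht), harctan⟩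

theorem realDegreeOf_eq_ncard (hF : F.IsHomogeneous n)
    (hsq : ∀ a b : ℝ, (a, b) ≠ (0, 0) → ¬ (C b * X 0 - C a * X 1) ^ 2 ∣ F)
    (hfin : {t ∈ Set.Ico 0 π | onCircle F t = 0}.Finite) :
    realDegreeOf F = {t ∈ Set.Ico 0 π | onCircle F t = 0}.ncard := by
  have hfinite_part : ∑ᶠ a : ℝ, linMult F a 1 = {a | evalP F a 1 = 0}.ncard := by
    simp_rw [fun a ↦ linMult_eq_ite hF isCoprime_one_right (hsq a 1 (by simp))]
    rw [← finsum_one, finsum_mem_def]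
    rfl
  have hzero_mem : 0 ∈ {t ∈ Set.Ico 0 π | onCircle F t = 0} ↔ evalP F 1 0 = 0 := by
    simp [onCircle, pi_pos]
  rw [realDegreeOf, hfinite_part, (bijOn_pi_div_two_sub_arctan_zeros hF).ncard_eq,
    linMult_eq_ite hF isCoprime_one_left (hsq 1 0 (by simp))]
  split_ifs with h
  · exact Set.ncard_sdiff_singleton_add_one (hzero_mem.2 h) hfin
  · rw [Set.sdiff_singleton_eq_self (mt hzero_mem.1 h), add_zero]

end RealDegree

section GradLoop

open Complex

/-- The gradient of `f` along the circle of radius `R`, with `ℝ²` identified with `ℂ`. -/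
noncomputable def gradLoop (f : MvPolynomial (Fin 2) ℝ) (R t : ℝ) : ℂ :=
  uFun f R t + vFun f R t * I

theorem contDiff_evalP (p : MvPolynomial (Fin 2) ℝ) {x y : ℝ → ℝ} {n : WithTop ℕ∞}
    (hx : ContDiff ℝ n x) (hy : ContDiff ℝ n y) : ContDiff ℝ n fun t ↦ evalP p (x t) (y t) := by
  simp only [evalP, eval_eq', Fin.prod_univ_two, Matrix.cons_val]
  fun_prop

theorem hasDerivAt_evalP (p : MvPolynomial (Fin 2) ℝ) {x y : ℝ → ℝ} {x' y' t : ℝ}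
    (hx : HasDerivAt x x' t) (hy : HasDerivAt y y' t) :
    HasDerivAt (fun t ↦ evalP p (x t) (y t))
      (evalP (pderiv 0 p) (x t) (y t) * x' + evalP (pderiv 1 p) (x t) (y t) * y') t := by
  simp only [evalP]
  induction p using MvPolynomial.induction_on with
  | C r => simpa using hasDerivAt_const t r
  | add p q hp hq =>
    simp only [map_add]
    exact (hp.fun_add hq).congr_deriv (by ring)
  | mul_X p i hp =>
    simp only [map_mul, eval_X, Derivation.leibniz, pderiv_X, smul_eq_mul, map_add]
    fin_cases i
    · refine (hp.fun_mul hx).congr_deriv ?_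
      simp only [Fin.zero_eta, Matrix.cons_val, Pi.single_eq_same, Pi.single_eq_of_ne zero_ne_one,
        map_one, map_zero]
      ring
    · refine (hp.fun_mul hy).congr_deriv ?_
      simp only [Fin.mk_one, Matrix.cons_val, Pi.single_eq_same, Pi.single_eq_of_ne one_ne_zero,
        map_one, map_zero]
      ring

theorem contDiff_uFun (f : MvPolynomial (Fin 2) ℝ) (R : ℝ) {n : WithTop ℕ∞} :
    ContDiff ℝ n (uFun f R) :=
  contDiff_evalP _ (by fun_prop) (by fun_prop)

theorem contDiff_vFun (f : MvPolynomial (Fin 2) ℝ) (R : ℝ) {n : WithTop ℕ∞} :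
    ContDiff ℝ n (vFun f R) :=
  contDiff_evalP _ (by fun_prop) (by fun_prop)

theorem contDiff_gradLoop (f : MvPolynomial (Fin 2) ℝ) (R : ℝ) {n : WithTop ℕ∞} :
    ContDiff ℝ n (gradLoop f R) :=
  (ofRealCLM.contDiff.comp (contDiff_uFun f R)).add
    ((ofRealCLM.contDiff.comp (contDiff_vFun f R)).mul contDiff_const)

theorem gradLoop_two_pi (f : MvPolynomial (Fin 2) ℝ) (R : ℝ) :
    gradLoop f R (2 * Real.pi) = gradLoop f R 0 := by
  simp [gradLoop, uFun, vFun]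

theorem gradLoop_eq_zero_iff {f : MvPolynomial (Fin 2) ℝ} {R t : ℝ} :
    gradLoop f R t = 0 ↔ IsCriticalPt f (R * Real.cos t, R * Real.sin t) := by
  simp [gradLoop, Complex.ext_iff, IsCriticalPt, uFun, vFun]

theorem gradIndex_eq_integral_logDeriv_im (f : MvPolynomial (Fin 2) ℝ) (R : ℝ) :
    gradIndex f R =
      1 / (2 * Real.pi) * ∫ t in (0 : ℝ)..2 * Real.pi, (logDeriv (gradLoop f R) t).im := by
  have hu := (contDiff_uFun f R).differentiable one_ne_zero
  have hv := (contDiff_vFun f R).differentiable one_ne_zero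
  simp_rw [gradIndex, ← logDeriv_ofReal_add_ofReal_mul_I_im (hu _).hasDerivAt (hv _).hasDerivAt]
  rfl

end GradLoop

section Rescale

variable {f : MvPolynomial (Fin 2) ℝ}

/-- The polynomial `s ^ d * f (x / s, y / s)`, `d` the degree of `f`; at `s = 0` it becomes the
leading form of `f`. -/
noncomputable def rescale (f : MvPolynomial (Fin 2) ℝ) (s : ℝ) : MvPolynomial (Fin 2) ℝ :=
  ∑ k ∈ Finset.range (f.totalDegree + 1), s ^ (f.totalDegree - k) • homogeneousComponent k f

theorem rescale_zero : rescale f 0 = homogeneousComponent f.totalDegree f := by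
  have hlower {k : ℕ} (hk : k ∈ Finset.range f.totalDegree) :
      (0 : ℝ) ^ (f.totalDegree - k) • homogeneousComponent k f = 0 := by
    rw [zero_pow (Nat.sub_ne_zero_of_lt (Finset.mem_range.1 hk)), zero_smul]
  rw [rescale, Finset.sum_range_succ, Finset.sum_eq_zero fun k hk ↦ hlower hk]
  simp

theorem evalP_pderiv_rescale (i : Fin 2) (s x y : ℝ) :
    evalP (pderiv i (rescale f s)) (s * x) (s * y) =
      s ^ (f.totalDegree - 1) * evalP (pderiv i f) x y := by
  have hterm {k : ℕ} (hk : k ∈ Finset.range (f.totalDegree + 1)) :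
      s ^ (f.totalDegree - k) * evalP (pderiv i (homogeneousComponent k f)) (s * x) (s * y) =
        s ^ (f.totalDegree - 1) * evalP (pderiv i (homogeneousComponent k f)) x y := by
    rw [evalP_mul_mul (homogeneousComponent_isHomogeneous k f).pderiv, ← mul_assoc, ← pow_add]
    rcases k.eq_zero_or_pos with rfl | hk0
    · simp [homogeneousComponent_zero, evalP]
    · rw [Finset.mem_range] at hk
      congr 2
      lia
  have hsum : evalP (pderiv i f) x y = ∑ k ∈ Finset.range (f.totalDegree + 1),
      evalP (pderiv i (homogeneousComponent k f)) x y := by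
    conv_lhs => rw [← sum_homogeneousComponent f]
    simp only [evalP, map_sum]
  rw [hsum, Finset.mul_sum, ← Finset.sum_congr rfl fun k hk ↦ hterm hk]
  simp only [evalP, rescale, map_sum, Derivation.map_smul, smul_eval]

theorem gradLoop_rescale (s R t : ℝ) :
    gradLoop (rescale f s) (s * R) t = (s : ℂ) ^ (f.totalDegree - 1) * gradLoop f R t := by
  simp only [gradLoop, uFun, vFun, mul_assoc s R, evalP_pderiv_rescale]
  push_cast
  ring

theorem gradLoop_rescale_eq_sum (s R t : ℝ) :
    gradLoop (rescale f s) R t = ∑ k ∈ Finset.range (f.totalDegree + 1),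
      (s : ℂ) ^ (f.totalDegree - k) * gradLoop (homogeneousComponent k f) R t := by
  simp only [gradLoop, uFun, vFun, evalP, rescale, map_sum, Derivation.map_smul, smul_eval]
  push_cast
  simp only [Finset.sum_mul, ← Finset.sum_add_distrib]
  exact Finset.sum_congr rfl fun k _ ↦ by ring

theorem gradLoop_rescale_one_ne_zero {R s : ℝ} (h0 : ∀ r, R ≤ r → ∀ t, gradLoop f r t ≠ 0)
    (htop : ∀ t, gradLoop (homogeneousComponent f.totalDegree f) 1 t ≠ 0)
    (hs : s ∈ Set.Icc 0 R⁻¹) (t : ℝ) : gradLoop (rescale f s) 1 t ≠ 0 := by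
  rcases hs.1.eq_or_lt with rfl | hs0
  · rw [rescale_zero]
    exact htop t
  · have hR : R ≤ s⁻¹ := le_inv_of_le_inv₀ hs0 hs.2
    rw [← mul_inv_cancel₀ hs0.ne', gradLoop_rescale]
    exact mul_ne_zero (pow_ne_zero _ (Complex.ofReal_ne_zero.2 hs0.ne')) (h0 _ hR t)

theorem gradIndex_rescale {s : ℝ} (hs : s ≠ 0) (R : ℝ) :
    gradIndex (rescale f s) (s * R) = gradIndex f R := by
  have hs' : (s : ℂ) ^ (f.totalDegree - 1) ≠ 0 := pow_ne_zero _ (Complex.ofReal_ne_zero.2 hs)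
  simp only [gradIndex_eq_integral_logDeriv_im, funext (gradLoop_rescale s R),
    logDeriv_const_mul _ _ hs']

theorem gradIndex_rescale_eq_gradIndex_rescale_zero {R S : ℝ} (hS : 0 ≤ S)
    (hne : ∀ s ∈ Set.Icc 0 S, ∀ t, gradLoop (rescale f s) R t ≠ 0) :
    gradIndex (rescale f S) R = gradIndex (rescale f 0) R := by
  have : PreconnectedSpace (Set.Icc 0 S) := Subtype.preconnectedSpace isPreconnected_Icc
  have hlog : Continuous fun q : Set.Icc 0 S × ℝ ↦ logDeriv (gradLoop (rescale f q.1) R) q.2 := by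
    simp only [funext (gradLoop_rescale_eq_sum _ R)]
    exact continuous_logDeriv_sum (c := fun k (s : Set.Icc 0 S) ↦ (s : ℂ) ^ (f.totalDegree - k))
      (fun k ↦ by fun_prop) (fun k ↦ contDiff_gradLoop _ _)
      fun s t ↦ gradLoop_rescale_eq_sum s R t ▸ hne s s.2 t
  have hhomotopy := integral_logDeriv_eq_of_preconnected (fun s ↦ contDiff_gradLoop _ _)
    (fun s : Set.Icc 0 S ↦ hne s s.2) (fun s ↦ gradLoop_two_pi _ _) hlog
    ⟨S, hS, le_rfl⟩ ⟨0, le_rfl, hS⟩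
  rw [gradIndex_eq_integral_logDeriv_im, gradIndex_eq_integral_logDeriv_im,
    ← im_integral_logDeriv (contDiff_gradLoop _ _) (hne S ⟨hS, le_rfl⟩), hhomotopy,
    im_integral_logDeriv (contDiff_gradLoop _ _) (hne 0 ⟨le_rfl, hS⟩)]

theorem gradIndex_eq_gradIndex_homogeneousComponent {R : ℝ} (hR : 0 < R)
    (h0 : ∀ r, R ≤ r → ∀ t, gradLoop f r t ≠ 0)
    (htop : ∀ t, gradLoop (homogeneousComponent f.totalDegree f) 1 t ≠ 0) :
    gradIndex f R = gradIndex (homogeneousComponent f.totalDegree f) 1 := by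
  have hR' : 0 < R⁻¹ := inv_pos.2 hR
  rw [← gradIndex_rescale hR'.ne' R, inv_mul_cancel₀ hR.ne', ← rescale_zero]
  exact gradIndex_rescale_eq_gradIndex_rescale_zero hR'.le fun s hs ↦
    gradLoop_rescale_one_ne_zero h0 htop hs

end Rescale

section LeadingForm

open Real

variable {F : MvPolynomial (Fin 2) ℝ} {n : ℕ}

/-- The polar form of the gradient of an `n`-homogeneous `F`: with `h` the restriction of `F` to
the unit circle, the gradient at angle `t` has radial component `n * h t` and angular component
`h' t`, so that `∇F = I * exp (t * I) * (h' t - n * h t * I)`. The factor `I` is split off so that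
the zeros of `F` are those of the imaginary part. -/
noncomputable def polarGrad (F : MvPolynomial (Fin 2) ℝ) (n : ℕ) (t : ℝ) : ℂ :=
  deriv (onCircle F) t + (-(n * onCircle F t) : ℝ) * Complex.I

theorem contDiff_onCircle (F : MvPolynomial (Fin 2) ℝ) {m : WithTop ℕ∞} :
    ContDiff ℝ m (onCircle F) :=
  contDiff_evalP _ contDiff_cos contDiff_sin

theorem deriv_onCircle (F : MvPolynomial (Fin 2) ℝ) (t : ℝ) :
    deriv (onCircle F) t = cos t * vFun F 1 t - sin t * uFun F 1 t := by
  refine (hasDerivAt_evalP F (hasDerivAt_cos t) (hasDerivAt_sin t)).deriv.trans ?_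
  simp only [uFun, vFun, one_mul]
  ring

theorem contDiff_polarGrad (F : MvPolynomial (Fin 2) ℝ) (n : ℕ) : ContDiff ℝ 1 (polarGrad F n) := by
  have h : ContDiff ℝ (1 + 1) (onCircle F) := contDiff_onCircle F
  have h' : ContDiff ℝ 1 (onCircle F) := contDiff_onCircle F
  exact (Complex.ofRealCLM.contDiff.comp h.deriv').add
    ((Complex.ofRealCLM.contDiff.comp (contDiff_const.mul h').neg).mul contDiff_const)

theorem gradLoop_one_eq_mul_polarGrad (hF : F.IsHomogeneous n) (t : ℝ) :
    gradLoop F 1 t = Complex.I * Complex.exp (t * Complex.I) * polarGrad F n t := by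
  have heuler : n * onCircle F t = cos t * uFun F 1 t + sin t * vFun F 1 t := by
    have h := congrArg (fun p ↦ evalP p (cos t) (sin t)) hF.sum_X_mul_pderiv
    simpa [evalP, onCircle, uFun, vFun] using h.symm
  rw [gradLoop, polarGrad, deriv_onCircle, heuler, Complex.exp_mul_I]
  push_cast
  linear_combination ((Complex.cos t + Complex.sin t * Complex.I) *
      (Complex.cos t * uFun F 1 t + Complex.sin t * vFun F 1 t) -
      Complex.sin t * (Complex.cos t * vFun F 1 t - Complex.sin t * uFun F 1 t)) * Complex.I_sq -
    (uFun F 1 t + vFun F 1 t * Complex.I) * Complex.cos_sq_add_sin_sq t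

theorem gradLoop_one_ne_zero (hF : F.IsHomogeneous n) (hn : n ≠ 0)
    (hsq : ∀ a b : ℝ, (a, b) ≠ (0, 0) → ¬ (C b * X 0 - C a * X 1) ^ 2 ∣ F) (t : ℝ) :
    gradLoop F 1 t ≠ 0 := by
  rw [Ne, gradLoop_eq_zero_iff, one_mul, one_mul]
  rintro ⟨h0, h1⟩
  have hcop := isCoprime_cos_sin t
  refine hsq _ _ ?_ (linear_sq_dvd_of_eval_pderiv_eq_zero hF (Nat.cast_ne_zero.2 hn) hcop h0 h1)
  simpa [Prod.ext_iff, or_iff_not_imp_left] using hcop.ne_zero_or_ne_zero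

theorem polarGrad_im_eq_zero_iff (hn : n ≠ 0) {t : ℝ} :
    (polarGrad F n t).im = 0 ↔ onCircle F t = 0 := by
  simp [polarGrad, hn]

theorem logDeriv_polarGrad_im_neg (hn : n ≠ 0) {t : ℝ} (ht : onCircle F t = 0)
    (h0 : polarGrad F n t ≠ 0) : (logDeriv (polarGrad F n) t).im < 0 := by
  have h : ContDiff ℝ (1 + 1) (onCircle F) := contDiff_onCircle F
  have h' : HasDerivAt (onCircle F) (deriv (onCircle F) t) t :=
    ((contDiff_onCircle F).differentiable one_ne_zero t).hasDerivAt
  have hderiv : deriv (onCircle F) t ≠ 0 := by simpa [polarGrad, ht] using h0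
  calc (logDeriv (polarGrad F n) t).im = -n := by
        unfold polarGrad
        rw [logDeriv_ofReal_add_ofReal_mul_I_im
          (h.deriv'.differentiable one_ne_zero t).hasDerivAt (h'.const_mul (n : ℝ)).fun_neg, ht]
        field_simp
        ring
    _ < 0 := by simpa [Nat.pos_iff_ne_zero] using hn

theorem onCircle_add_pi (hF : F.IsHomogeneous n) (t : ℝ) :
    onCircle F (t + π) = (-1) ^ n * onCircle F t := by
  simp only [onCircle, ← evalP_mul_mul hF, cos_add_pi, sin_add_pi, neg_one_mul]

theorem polarGrad_add_pi (hF : F.IsHomogeneous n) (t : ℝ) :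
    polarGrad F n (t + π) = ((-1) ^ n : ℝ) * polarGrad F n t := by
  rw [polarGrad, ← deriv_comp_add_const, funext (onCircle_add_pi hF), deriv_const_mul_field,
    onCircle_add_pi hF, polarGrad]
  push_cast
  ring

theorem logDeriv_gradLoop_one_im (hF : F.IsHomogeneous n) {t : ℝ} (h0 : polarGrad F n t ≠ 0) :
    (logDeriv (gradLoop F 1) t).im = 1 + (logDeriv (polarGrad F n) t).im := by
  have hrot : HasDerivAt (fun t : ℝ ↦ Complex.I * Complex.exp (t * Complex.I))
      (Complex.I * (Complex.exp (t * Complex.I) * Complex.I)) t := by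
    simpa using (((hasDerivAt_id t).ofReal_comp.mul_const Complex.I).cexp.const_mul Complex.I)
  rw [funext (gradLoop_one_eq_mul_polarGrad hF), logDeriv_mul t (by simp) h0
    hrot.differentiableAt ((contDiff_polarGrad F n).differentiable one_ne_zero t),
    logDeriv_apply, hrot.deriv]
  simp [← mul_assoc]

theorem gradIndex_one_eq_one_add_integral_polarGrad (hF : F.IsHomogeneous n)
    (h0 : ∀ t, polarGrad F n t ≠ 0) :
    gradIndex F 1 = 1 + 1 / π * ∫ t in (0 : ℝ)..π, (logDeriv (polarGrad F n) t).im := by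
  have hcont : Continuous fun t ↦ (logDeriv (polarGrad F n) t).im :=
    Complex.continuous_im.comp (continuous_logDeriv (contDiff_polarGrad F n) h0)
  have hper : Function.Periodic (fun t ↦ (logDeriv (polarGrad F n) t).im) π :=
    (periodic_logDeriv_of_map_add (by simp) (polarGrad_add_pi hF)).comp Complex.im
  have hdouble := hper.intervalIntegral_add_eq_add 0 π fun _ _ ↦ hcont.intervalIntegrable _ _
  rw [gradIndex_eq_integral_logDeriv_im]
  simp_rw [logDeriv_gradLoop_one_im hF (h0 _)]
  rw [intervalIntegral.integral_add (by simp) (hcont.intervalIntegrable _ _),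
    intervalIntegral.integral_const, two_mul, hdouble]
  field_simp
  simp only [smul_eq_mul, sub_zero, mul_one, zero_add]
  ring

theorem gradIndex_one_eq_one_sub_realDegreeOf (hF : F.IsHomogeneous n) (hn : n ≠ 0)
    (hsq : ∀ a b : ℝ, (a, b) ≠ (0, 0) → ¬ (C b * X 0 - C a * X 1) ^ 2 ∣ F) :
    gradIndex F 1 = 1 - realDegreeOf F := by
  have h0 (t : ℝ) : polarGrad F n t ≠ 0 :=
    right_ne_zero_of_mul (gradLoop_one_eq_mul_polarGrad hF t ▸ gradLoop_one_ne_zero hF hn hsq t)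
  obtain ⟨hfin, hcount⟩ := finite_im_zeros_and_integral_logDeriv_im_eq (contDiff_polarGrad F n) h0
    (fun t ht ↦ logDeriv_polarGrad_im_neg hn ((polarGrad_im_eq_zero_iff hn).1 ht) (h0 t)) pi_pos
    (by simpa only [zero_add] using polarGrad_add_pi hF 0)
  simp only [polarGrad_im_eq_zero_iff hn] at hfin hcount
  rw [gradIndex_one_eq_one_add_integral_polarGrad hF h0, hcount, realDegreeOf_eq_ncard hF hsq hfin]
  field_simp
  ring

end LeadingForm

theorem index_eq_one_sub_real_degree_of_no_repeated_factor_general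
    (f : MvPolynomial (Fin 2) ℝ) (d : ℕ) (hd : f.totalDegree = d) (hd1 : 1 ≤ d)
    (hsq : ∀ a b : ℝ, (a, b) ≠ ((0 : ℝ), (0 : ℝ)) →
      ¬ ((C b * X 0 - C a * X 1) ^ 2 ∣ homogeneousComponent d f))
    (R : ℝ) (hR : 0 < R)
    (hadm : ∀ p : ℝ × ℝ, IsCriticalPt f p → p.1 ^ 2 + p.2 ^ 2 < R ^ 2) :
    gradIndex f R = 1 - (realDegreeOf (homogeneousComponent d f) : ℝ) := by
  subst hd
  have hF := homogeneousComponent_isHomogeneous f.totalDegree f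
  have hd0 : f.totalDegree ≠ 0 := Nat.one_le_iff_ne_zero.1 hd1
  have hne (r : ℝ) (hr : R ≤ r) (t : ℝ) : gradLoop f r t ≠ 0 := by
    rw [Ne, gradLoop_eq_zero_iff]
    intro hcrit
    have hlt := hadm _ hcrit
    simp only [mul_pow, ← mul_add, Real.cos_sq_add_sin_sq, mul_one] at hlt
    exact hlt.not_ge (pow_le_pow_left₀ hR.le hr 2)
  rw [gradIndex_eq_gradIndex_homogeneousComponent hR hne (gradLoop_one_ne_zero hF hd0 hsq),
    gradIndex_one_eq_one_sub_realDegreeOf hF hd0 hsq]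

theorem index_eq_one_sub_real_degree_of_no_repeated_factor
    (f : MvPolynomial (Fin 2) ℝ) (d : ℕ) (hd : f.totalDegree = d) (hd1 : 1 ≤ d)
    (hfin : {p : ℝ × ℝ | IsCriticalPt f p}.Finite)
    (hsq : ∀ a b : ℝ, (a, b) ≠ ((0 : ℝ), (0 : ℝ)) →
      ¬ ((C b * X 0 - C a * X 1) ^ 2 ∣ homogeneousComponent d f))
    (R : ℝ) (hR : 0 < R)
    (hadm : ∀ p : ℝ × ℝ, IsCriticalPt f p → p.1 ^ 2 + p.2 ^ 2 < R ^ 2)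
    (i : ℤ) (hi : (i : ℝ) = gradIndex f R) :
    i = 1 - (realDegreeOf (homogeneousComponent d f) : ℤ) := by
  exact_mod_cast hi.trans
    (index_eq_one_sub_real_degree_of_no_repeated_factor_general f d hd hd1 hsq R hR hadm)
end

section
/- Let f : ℝ² → ℝ be a nonconstant real polynomial function in two variables with only finitely many critical points, and suppose every level set {(x,y) : f(x,y) = t}, t ∈ ℝ, is compact. Then there exists A₀ > 0 such that for every A ≥ A₀, exactly one of the two sets {(x,y) : f(x,y) = A} and {(x,y) : f(x,y) = −A} is nonempty, and the nonempty one is homeomorphic to the circle S¹. -/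
open MvPolynomial Filter

/-!
The complement of a large ball is connected, so an unbounded function with compact levels tends to
`+∞` or to `-∞` at infinity; up to sign, to `+∞`. A level `A` above all critical values is then a
compact set of regular points. It is connected: the gradient flow, normalised so that it raises `F`
at unit speed, lets every point of the level escape through a fixed large sphere, so flowing back
down maps that sphere continuously onto the level. The Hamiltonian flow preserves the level, and by
the implicit function theorem its orbits there are open. By connectedness the level is a single
orbit, and by compactness it is `ℝ ⧸ aℤ` for some `a > 0`.
-/

namespace LevelCircle

open Set Metric Topology NNReal

section VectorFieldFlow

variable {E : Type*} [NormedAddCommGroup E] [NormedSpace ℝ E] {V : E → E} {K : ℝ≥0}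

theorem eqOn_Ioo_of_hasDerivAt (hK : LipschitzWith K V) {a b t₀ : ℝ} (ht₀ : t₀ ∈ Ioo a b)
    {γ γ' : ℝ → E} (hγ : ∀ t ∈ Ioo a b, HasDerivAt γ (V (γ t)) t)
    (hγ' : ∀ t ∈ Ioo a b, HasDerivAt γ' (V (γ' t)) t) (h : γ t₀ = γ' t₀) :
    EqOn γ γ' (Ioo a b) :=
  ODE_solution_unique_of_mem_Ioo (v := fun _ => V) (s := fun _ => univ) (K := K)
    (fun _ _ => hK.lipschitzOnWith) ht₀
    (fun t ht => ⟨hγ t ht, trivial⟩) (fun t ht => ⟨hγ' t ht, trivial⟩) h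

theorem eq_of_isIntegralCurve (hK : LipschitzWith K V) {γ γ' : ℝ → E}
    (hγ : IsIntegralCurve γ fun _ => V) (hγ' : IsIntegralCurve γ' fun _ => V) {t₀ : ℝ}
    (h : γ t₀ = γ' t₀) : γ = γ' :=
  ODE_solution_unique_univ (v := fun _ => V) (s := fun _ => univ) (K := K)
    (fun _ => hK.lipschitzOnWith) (fun t => ⟨hγ t, trivial⟩) (fun t => ⟨hγ' t, trivial⟩) h

theorem dist_integralCurve_le (hK : LipschitzWith K V) {γ γ' : ℝ → E}
    (hγ : IsIntegralCurve γ fun _ => V) (hγ' : IsIntegralCurve γ' fun _ => V) (t : ℝ) :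
    dist (γ t) (γ' t) ≤ dist (γ 0) (γ' 0) * Real.exp (K * |t|) := by
  have forward : ∀ {W : E → E}, LipschitzWith K W → ∀ {c c' : ℝ → E},
      IsIntegralCurve c (fun _ => W) → IsIntegralCurve c' (fun _ => W) → ∀ s, 0 ≤ s →
      dist (c s) (c' s) ≤ dist (c 0) (c' 0) * Real.exp (K * s) := by
    intro W hW c c' hc hc' s hs
    simpa only [sub_zero] using dist_le_of_trajectories_ODE (fun _ => hW)
      hc.continuous.continuousOn (fun r _ => (hc r).hasDerivWithinAt)
      hc'.continuous.continuousOn (fun r _ => (hc' r).hasDerivWithinAt) le_rfl s ⟨hs, le_rfl⟩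
  rcases le_total 0 t with ht | ht
  · simpa only [abs_of_nonneg ht] using forward hK hγ hγ' t ht
  · have hneg : LipschitzWith K fun x => -V x := hK.neg
    have reversed : ∀ {c : ℝ → E}, IsIntegralCurve c (fun _ => V) →
        IsIntegralCurve (fun s => c (-s)) fun _ x => -V x := fun hc s => by
      simpa [Function.comp_def] using (hc (-s)).scomp s (hasDerivAt_neg s)
    simpa only [abs_of_nonpos ht, neg_neg, neg_zero] using
      forward hneg (reversed hγ) (reversed hγ') (-t) (neg_nonneg.2 ht)

theorem hasStrictDerivAt_of_isIntegralCurve (hV : Continuous V) {γ : ℝ → E}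
    (hγ : IsIntegralCurve γ fun _ => V) (t : ℝ) : HasStrictDerivAt γ (V (γ t)) t :=
  hasStrictDerivAt_of_hasDerivAt_of_continuousAt (.of_forall hγ)
    (hV.comp hγ.continuous).continuousAt

variable [CompleteSpace E] {M : ℝ≥0}

theorem exists_hasDerivAt_Ioo (hK : LipschitzWith K V) (hM : ∀ x, ‖V x‖ ≤ M) (x : E) (T : ℝ≥0) :
    ∃ γ : ℝ → E, γ 0 = x ∧ ∀ t ∈ Ioo (-T : ℝ) T, HasDerivAt γ (V (γ t)) t := by
  have picard : IsPicardLindelof (fun _ => V) (tmin := -T) (tmax := T) ⟨0, by simp⟩ x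
      (M * T) 0 M K :=
    .of_time_independent (fun y _ => hM y) hK.lipschitzOnWith (by simp)
  obtain ⟨γ, hγ0, hγ⟩ := picard.exists_eq_forall_mem_Icc_hasDerivWithinAt₀
  exact ⟨γ, hγ0, fun t ht =>
    (hγ t (Ioo_subset_Icc_self ht)).hasDerivAt (Icc_mem_nhds ht.1 ht.2)⟩

theorem exists_isIntegralCurve (hK : LipschitzWith K V) (hM : ∀ x, ‖V x‖ ≤ M) (x : E) :
    ∃ γ : ℝ → E, γ 0 = x ∧ IsIntegralCurve γ fun _ => V := by
  choose γ hγ0 hγ using exists_hasDerivAt_Ioo hK hM x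
  have agree : ∀ {S T : ℝ≥0}, S ≤ T → EqOn (γ S) (γ T) (Ioo (-S) S) := by
    intro S T hST t ht
    have hS : (0 : ℝ) < S := by linarith [ht.1, ht.2]
    have hST' : (S : ℝ) ≤ T := hST
    exact eqOn_Ioo_of_hasDerivAt hK (t₀ := 0) ⟨neg_lt_zero.2 hS, hS⟩ (hγ S)
      (fun s hs => hγ T s (Ioo_subset_Ioo (neg_le_neg hST') hST' hs))
      ((hγ0 S).trans (hγ0 T).symm) ht
  refine ⟨fun t => γ (‖t‖₊ + 1) t, hγ0 _, fun t => ?_⟩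
  have near : (fun s => γ (‖s‖₊ + 1) s) =ᶠ[𝓝 t] γ (‖t‖₊ + 2) := by
    filter_upwards [ball_mem_nhds t one_pos] with s hs
    have hs' : ‖s‖₊ + 1 ≤ ‖t‖₊ + 2 := by
      have := norm_le_norm_add_norm_sub t s
      rw [mem_ball, dist_eq_norm, norm_sub_rev] at hs
      rw [← NNReal.coe_le_coe]
      push_cast
      linarith
    refine agree hs' (abs_lt.1 ?_)
    simp [← Real.norm_eq_abs]
  have ht : t ∈ Ioo (-(‖t‖₊ + 2 : ℝ≥0) : ℝ) (‖t‖₊ + 2 : ℝ≥0) :=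
    abs_lt.1 (by simp [← Real.norm_eq_abs])
  have hval : γ (‖t‖₊ + 1) t = γ (‖t‖₊ + 2) t := near.eq_of_nhds
  simpa only [hval] using (hγ _ t ht).congr_of_eventuallyEq near

theorem exists_flow_of_lipschitzWith (hK : LipschitzWith K V) (hM : ∀ x, ‖V x‖ ≤ M) :
    ∃ φ : Flow ℝ E, ∀ x, IsIntegralCurve (φ · x) fun _ => V := by
  choose γ hγ0 hγ using exists_isIntegralCurve hK hM
  have lipschitz : ∀ n : ℕ, ∀ t ∈ ball (0 : ℝ) n,
      LipschitzOnWith (Real.exp (K * n)).toNNReal (γ · t) univ := by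
    intro n t ht
    refine LipschitzOnWith.of_dist_le_mul fun x _ y _ => ?_
    rw [Real.coe_toNNReal _ (Real.exp_nonneg _), mul_comm]
    refine (dist_integralCurve_le hK (hγ x) (hγ y) t).trans ?_
    rw [hγ0, hγ0]
    gcongr
    simpa using (mem_ball_zero_iff.1 ht).le
  refine ⟨⟨fun t x => γ x t, ?_, fun s t x => ?_, hγ0⟩, hγ⟩
  · refine continuous_iff_continuousAt.2 fun ⟨t, x⟩ => ?_
    obtain ⟨n, hn⟩ := exists_nat_gt ‖t‖
    have hcont : ContinuousOn (fun z : ℝ × E => γ z.2 z.1) (ball 0 n ×ˢ univ) :=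
      continuousOn_prod_of_continuousOn_lipschitzOnWith' _ _ (lipschitz n)
        fun y _ => (hγ y).continuous.continuousOn
    exact hcont.continuousAt
      (prod_mem_nhds (isOpen_ball.mem_nhds (mem_ball_zero_iff.2 hn)) univ_mem)
  · refine congrFun (eq_of_isIntegralCurve hK ((hγ x).comp_add t) (hγ (γ x t)) (t₀ := 0) ?_) s
    simp [hγ0]

theorem exists_flow_of_hasCompactSupport (hV : ContDiff ℝ 1 V) (hsupp : HasCompactSupport V) :
    ∃ φ : Flow ℝ E, ∀ x, IsIntegralCurve (φ · x) fun _ => V := by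
  obtain ⟨K, hK⟩ := hV.lipschitzWith_of_hasCompactSupport hsupp one_ne_zero
  obtain ⟨C, hC⟩ := hsupp.exists_bound_of_continuous hV.continuous
  exact exists_flow_of_lipschitzWith hK (M := C.toNNReal)
    fun x => (hC x).trans (Real.le_coe_toNNReal C)

end VectorFieldFlow

section FlowWithOpenOrbits

variable {X : Type*} [TopologicalSpace X] (φ : Flow ℝ X)

theorem isOpen_orbit (h : ∀ x, φ.orbit x ∈ 𝓝 x) (x : X) : IsOpen (φ.orbit x) := by
  refine isOpen_iff_mem_nhds.2 ?_
  rintro _ ⟨t, rfl⟩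
  refine mem_of_superset (h (φ t x)) ?_
  rintro _ ⟨s, rfl⟩
  exact ⟨s + t, φ.map_add s t x⟩

theorem orbit_eq_univ [PreconnectedSpace X] (h : ∀ x, φ.orbit x ∈ 𝓝 x) (x : X) :
    φ.orbit x = univ := by
  have closed : IsClosed (φ.orbit x) := by
    refine isOpen_compl_iff.1 (isOpen_iff_mem_nhds.2 fun y hy => mem_of_superset (h y) ?_)
    rintro _ ⟨t, rfl⟩ (hty : φ t y ∈ φ.orbit x)
    apply hy
    simpa [← φ.map_add] using φ.isInvariant_orbit x (-t) hty
  exact IsClopen.eq_univ ⟨closed, isOpen_orbit φ h x⟩ (φ.nonempty_orbit x)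

theorem flow_apply_eq_iff (s t : ℝ) (x : X) : φ s x = φ t x ↔ φ (-s + t) x = x := by
  rw [φ.map_add, ← (φ.toHomeomorph s).injective.eq_iff (a := φ (-s) (φ t x))]
  simp [← φ.map_add, eq_comm]

variable [T2Space X] [CompactSpace X] {x : X}

theorem not_injective_orbitMap (h : φ.orbit x = univ) : ¬ Function.Injective (φ · x) := by
  intro hinj
  let _ : AddAction ℝ X := φ.toAddAction
  have _ : ContinuousVAdd ℝ X := ⟨φ.cont'⟩
  have _ : AddAction.IsPretransitive ℝ X :=
    (AddAction.isPretransitive_iff_orbit_eq_univ x).2 h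
  let e : ℝ ≃ₜ X :=
    (Equiv.ofBijective (φ · x) ⟨hinj, range_eq_univ.1 h⟩).toHomeomorphOfContinuousOpen
      (φ.continuous continuous_id continuous_const) (isOpenMap_vadd_of_sigmaCompact x)
  exact not_compactSpace_iff.2 (inferInstance : NoncompactSpace ℝ) e.symm.compactSpace

theorem exists_period (h : φ.orbit x = univ) (hmove : ∃ t, φ t x ≠ x) :
    ∃ a > 0, ∀ t, φ t x = x ↔ t ∈ AddSubgroup.zmultiples a := by
  let _ : AddAction ℝ X := φ.toAddAction
  set G : AddSubgroup ℝ := AddAction.stabilizer ℝ x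
  have closed : IsClosed (G : Set ℝ) :=
    isClosed_eq (φ.continuous continuous_id continuous_const) continuous_const
  obtain ⟨a, ha⟩ : ∃ a, G = AddSubgroup.zmultiples a := by
    rcases G.dense_or_cyclic with hdense | ⟨a, ha⟩
    · obtain ⟨t, ht⟩ := hmove
      have huniv : (G : Set ℝ) = univ := by rw [← closed.closure_eq, hdense.closure_eq]
      exact absurd (huniv ▸ mem_univ t : t ∈ (G : Set ℝ)) ht
    · exact ⟨a, ha.trans (AddSubgroup.zmultiples_eq_closure a).symm⟩
  have ha0 : a ≠ 0 := by
    rintro rfl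
    refine not_injective_orbitMap φ h fun s t hst => ?_
    have hmem : -s + t ∈ G := (flow_apply_eq_iff φ s t x).1 hst
    rw [ha, AddSubgroup.zmultiples_zero_eq_bot, AddSubgroup.mem_bot] at hmem
    linarith
  refine ⟨|a|, abs_pos.2 ha0, fun t => ?_⟩
  have habs : AddSubgroup.zmultiples |a| = AddSubgroup.zmultiples a := by
    rcases abs_choice a with h' | h' <;> simp [h']
  rw [habs, ← ha]
  rfl

theorem nonempty_homeomorph_circle_of_flow [PreconnectedSpace X]
    (h : ∀ y, φ.orbit y ∈ 𝓝 y) (hmove : ∃ t, φ t x ≠ x) : Nonempty (X ≃ₜ Circle) := by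
  have htrans := orbit_eq_univ φ h x
  obtain ⟨a, ha, hper⟩ := exists_period φ htrans hmove
  have hperiodic : Function.Periodic (φ · x) a := fun t => by
    simp only [φ.map_add, (hper a).2 (AddSubgroup.mem_zmultiples a)]
  have : Fact (0 < a) := ⟨ha⟩
  have hcont : Continuous (hperiodic.lift : AddCircle a → X) :=
    (φ.continuous continuous_id continuous_const).quotient_lift _
  have hbij : Function.Bijective (hperiodic.lift : AddCircle a → X) := by
    refine ⟨fun u v => ?_, fun y => ?_⟩
    · induction u using QuotientAddGroup.induction_on with | H s =>
      induction v using QuotientAddGroup.induction_on with | H t =>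
      intro hst
      exact QuotientAddGroup.eq.2 ((hper _).1 ((flow_apply_eq_iff φ s t x).1 hst))
    · obtain ⟨t, rfl⟩ : y ∈ φ.orbit x := htrans ▸ mem_univ y
      exact ⟨(t : AddCircle a), rfl⟩
  let e : AddCircle a ≃ₜ X := hcont.homeoOfEquivCompactToT2 (f := .ofBijective _ hbij)
  exact ⟨e.symm.trans (AddCircle.homeomorphCircle ha.ne')⟩

end FlowWithOpenOrbits

section FieldsAlongBasis

open Module

variable {E ι : Type*} [NormedAddCommGroup E] [NormedSpace ℝ E] {F : E → ℝ}

theorem contDiff_fderiv_apply_const (hF : ContDiff ℝ 2 F) (v : E) :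
    ContDiff ℝ 1 fun p => fderiv ℝ F p v :=
  (hF.fderiv_right (m := 1) (by norm_num)).clm_apply contDiff_const

/-- The gradient of `F` for the inner product on `E` making the basis `b` orthonormal. Only the
norm of `E` need be given, so the plane can be `ℝ × ℝ` as well as `EuclideanSpace ℝ (Fin 2)`. -/
noncomputable def coordGradient [Fintype ι] (b : Basis ι ℝ E) (F : E → ℝ) (p : E) : E :=
  ∑ i, fderiv ℝ F p (b i) • b i

theorem contDiff_coordGradient [Fintype ι] (b : Basis ι ℝ E) (hF : ContDiff ℝ 2 F) :
    ContDiff ℝ 1 (coordGradient b F) :=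
  ContDiff.sum fun i _ => (contDiff_fderiv_apply_const hF (b i)).smul contDiff_const

theorem fderiv_coordGradient_pos [Fintype ι] (b : Basis ι ℝ E) {p : E} (h : fderiv ℝ F p ≠ 0) :
    0 < fderiv ℝ F p (coordGradient b F p) := by
  obtain ⟨i, hi⟩ : ∃ i, fderiv ℝ F p (b i) ≠ 0 := by
    by_contra! hzero
    exact h (ContinuousLinearMap.coe_injective (b.ext hzero))
  simp only [coordGradient, map_sum, map_smul, smul_eq_mul]
  exact Finset.sum_pos' (fun j _ => mul_self_nonneg _) ⟨i, Finset.mem_univ i, mul_self_pos.2 hi⟩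

/-- The Hamiltonian vector field of `F` on a plane, for the area form whose value on the
basis `b` is one. -/
noncomputable def coordHamiltonian (b : Basis (Fin 2) ℝ E) (F : E → ℝ) (p : E) : E :=
  fderiv ℝ F p (b 0) • b 1 - fderiv ℝ F p (b 1) • b 0

theorem contDiff_coordHamiltonian (b : Basis (Fin 2) ℝ E) (hF : ContDiff ℝ 2 F) :
    ContDiff ℝ 1 (coordHamiltonian b F) :=
  ((contDiff_fderiv_apply_const hF _).smul contDiff_const).sub
    ((contDiff_fderiv_apply_const hF _).smul contDiff_const)

theorem fderiv_coordHamiltonian (b : Basis (Fin 2) ℝ E) (p : E) :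
    fderiv ℝ F p (coordHamiltonian b F p) = 0 := by
  simp only [coordHamiltonian, map_sub, map_smul, smul_eq_mul]
  ring

theorem coordHamiltonian_ne_zero (b : Basis (Fin 2) ℝ E) {p : E} (h : fderiv ℝ F p ≠ 0) :
    coordHamiltonian b F p ≠ 0 := by
  intro hzero
  have hcoord : ∀ i, b.coord i (coordHamiltonian b F p) = 0 := by simp [hzero]
  refine h (ContinuousLinearMap.coe_injective (b.ext (Fin.forall_fin_two.2 ⟨?_, ?_⟩)))
  · simpa [coordHamiltonian] using hcoord 1
  · simpa [coordHamiltonian] using hcoord 0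

theorem ker_fderiv_eq_span_coordHamiltonian (b : Basis (Fin 2) ℝ E) {p : E}
    (h : fderiv ℝ F p ≠ 0) :
    (fderiv ℝ F p).ker = ℝ ∙ coordHamiltonian b F p := by
  refine le_antisymm (fun v hv => Submodule.mem_span_singleton.2 ?_) ?_
  · have hD := fderiv_coordGradient_pos b h
    obtain ⟨x, y, rfl⟩ : ∃ x y : ℝ, x • b 0 + y • b 1 = v :=
      ⟨b.repr v 0, b.repr v 1, by rw [← Fin.sum_univ_two fun i => b.repr v i • b i, b.sum_repr]⟩
    replace hv : fderiv ℝ F p (x • b 0 + y • b 1) = 0 := hv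
    simp only [coordGradient, coordHamiltonian, Fin.sum_univ_two, map_add, map_smul,
      smul_eq_mul] at hD hv ⊢
    set c₀ := fderiv ℝ F p (b 0)
    set c₁ := fderiv ℝ F p (b 1)
    have hD' : c₀ ^ 2 + c₁ ^ 2 ≠ 0 := by linarith
    refine ⟨(y * c₀ - x * c₁) / (c₀ ^ 2 + c₁ ^ 2), ?_⟩
    match_scalars
    · field_simp
      linear_combination (-c₁) * hv
    · field_simp
      linear_combination (-c₀) * hv
  · rw [Submodule.span_singleton_le_iff_mem]
    exact fderiv_coordHamiltonian b p

end FieldsAlongBasis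

section GradientFlow

open Module

variable {E : Type*} [NormedAddCommGroup E] [NormedSpace ℝ E] {F : E → ℝ}

theorem hasDerivAt_comp_integralCurve (hF : Differentiable ℝ F) {V : E → E} {γ : ℝ → E}
    (hγ : IsIntegralCurve γ fun _ => V) (t : ℝ) :
    HasDerivAt (F ∘ γ) (fderiv ℝ F (γ t) (V (γ t))) t :=
  (hF (γ t)).hasFDerivAt.comp_hasDerivAt t (hγ t)

variable [FiniteDimensional ℝ E]

theorem exists_field_fderiv_eq (hF : ContDiff ℝ 2 F) {ψ : ℝ → ℝ} (hψ : ContDiff ℝ 1 ψ)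
    (hcpt : IsCompact (F ⁻¹' tsupport ψ))
    (hreg : ∀ p, F p ∈ tsupport ψ → fderiv ℝ F p ≠ 0) :
    ∃ V : E → E, ContDiff ℝ 1 V ∧ HasCompactSupport V ∧ ∀ p, fderiv ℝ F p (V p) = ψ (F p) := by
  let b := finBasis ℝ E
  set D : E → ℝ := fun p => fderiv ℝ F p (coordGradient b F p)
  have hsupp : tsupport (fun p => (ψ (F p) / D p) • coordGradient b F p) ⊆ F ⁻¹' tsupport ψ := by
    refine closure_minimal (fun p hp => subset_tsupport ψ fun hzero => hp ?_)
      ((isClosed_tsupport ψ).preimage hF.continuous)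
    simp only [hzero, zero_div, zero_smul]
  have hD : ContDiff ℝ 1 D :=
    (hF.fderiv_right (m := 1) (by norm_num)).clm_apply (contDiff_coordGradient b hF)
  refine ⟨fun p => (ψ (F p) / D p) • coordGradient b F p, ?_,
    hcpt.of_isClosed_subset (isClosed_tsupport _) hsupp, fun p => ?_⟩
  · refine contMDiff_iff_contDiff.1 (contMDiff_of_tsupport fun p hp => ContDiffAt.contMDiffAt ?_)
    refine ContDiffAt.smul ?_ (contDiff_coordGradient b hF).contDiffAt
    exact (hψ.comp (hF.of_le one_le_two)).contDiffAt.div hD.contDiffAt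
      (fderiv_coordGradient_pos b (hreg p (hsupp hp))).ne'
  · by_cases hp : ψ (F p) = 0
    · simp [hp]
    · have hDp : D p ≠ 0 := (fderiv_coordGradient_pos b (hreg p (subset_tsupport ψ hp))).ne'
      rw [map_smul, smul_eq_mul, div_mul_cancel₀ _ hDp]

theorem exists_flow_translating_values (hF : ContDiff ℝ 2 F) {a b δ : ℝ}
    (hab : a < b) (hδ : 0 < δ) (hcpt : IsCompact (F ⁻¹' Icc (a - δ) (b + δ)))
    (hreg : ∀ p, F p ∈ Icc (a - δ) (b + δ) → fderiv ℝ F p ≠ 0) :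
    ∃ φ : Flow ℝ E, ∀ x t, F x ∈ Ioo a b → F x + t ∈ Ioo a b → F (φ t x) = F x + t := by
  let ψ : ContDiffBump ((a + b) / 2) :=
    ⟨(b - a) / 2, (b - a) / 2 + δ, by linarith, by linarith⟩
  have hsupp : tsupport ψ = Icc (a - δ) (b + δ) := by
    rw [ψ.tsupport_eq, Real.closedBall_eq_Icc]
    congr 1 <;> ring
  have hone : ∀ s ∈ Ioo a b, ψ s = 1 := fun s hs => ψ.one_of_mem_closedBall <| by
    change s ∈ closedBall _ ((b - a) / 2)
    rw [Real.closedBall_eq_Icc]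
    constructor <;> linarith [hs.1, hs.2]
  obtain ⟨V, hV, hVsupp, hFV⟩ := exists_field_fderiv_eq hF ψ.contDiff
    (by rwa [hsupp]) (by rwa [hsupp])
  have := FiniteDimensional.complete ℝ E
  obtain ⟨φ, hφ⟩ := exists_flow_of_hasCompactSupport hV hVsupp
  obtain ⟨K, hK⟩ :=
    ψ.contDiff.lipschitzWith_of_hasCompactSupport ψ.hasCompactSupport (n := 1) one_ne_zero
  refine ⟨φ, fun x t hx ht => ?_⟩
  refine eqOn_Ioo_of_hasDerivAt hK (a := a - F x) (b := b - F x) (t₀ := 0)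
    (γ := F ∘ (φ · x)) (γ' := fun s => F x + s) ?_ (fun s _ => ?_) (fun s hs => ?_) ?_ ?_
  · constructor <;> linarith [hx.1, hx.2]
  · rw [Function.comp_apply, ← hFV]
    exact hasDerivAt_comp_integralCurve (hF.differentiable two_ne_zero) (hφ x) s
  · rw [hone _ ⟨by linarith [hs.1], by linarith [hs.2]⟩]
    exact (hasDerivAt_id s).const_add (F x)
  · simp
  · constructor <;> linarith [ht.1, ht.2]

end GradientFlow

theorem eventually_mem_range_of_range_fderiv_eq_ker {G E H : Type*}
    [NormedAddCommGroup G] [NormedSpace ℝ G] [CompleteSpace G]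
    [NormedAddCommGroup E] [NormedSpace ℝ E] [CompleteSpace E]
    [NormedAddCommGroup H] [NormedSpace ℝ H] [FiniteDimensional ℝ H]
    {F : E → H} {F' : E →L[ℝ] H} {γ : G → E} {γ' : G →L[ℝ] E} {t₀ : G}
    (hF : HasStrictFDerivAt F F' (γ t₀)) (hγ : HasStrictFDerivAt γ γ' t₀)
    (hsurj : F'.range = ⊤) (hexact : γ'.range = F'.ker) (hconst : ∀ t, F (γ t) = F (γ t₀)) :
    ∀ᶠ q in 𝓝 (γ t₀), F q = F (γ t₀) → q ∈ range γ := by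
  have := FiniteDimensional.complete ℝ H
  obtain ⟨π, hπ⟩ := F'.ker_closedComplemented_of_finiteDimensional_range
  let chart : ImplicitFunctionData ℝ E H F'.ker :=
    { leftFun := F
      leftDeriv := F'
      rightFun := π
      rightDeriv := π
      pt := γ t₀
      hasStrictFDerivAt_leftFun := hF
      hasStrictFDerivAt_rightFun := π.hasStrictFDerivAt
      range_leftDeriv := hsurj
      range_rightDeriv := LinearMap.range_eq_of_proj hπ
      isCompl_ker := LinearMap.isCompl_of_proj hπ }
  have hsource : chart.toOpenPartialHomeomorph.source ∈ 𝓝 (γ t₀) :=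
    chart.toOpenPartialHomeomorph.open_source.mem_nhds chart.pt_mem_toOpenPartialHomeomorph_source
  have honto : (π ∘L γ').range = ⊤ := by
    refine LinearMap.range_eq_top.2 fun k => ?_
    obtain ⟨s, hs⟩ : (k : E) ∈ γ'.range := by rw [hexact]; exact k.2
    exact ⟨s, (congrArg π hs).trans (hπ k)⟩
  have hmap : Filter.map (π ∘ γ) (𝓝 t₀) = 𝓝 (π (γ t₀)) :=
    (π.hasStrictFDerivAt.comp t₀ hγ).map_nhds_eq_of_surj honto
  have hopen : (π ∘ γ) '' (γ ⁻¹' chart.toOpenPartialHomeomorph.source) ∈ 𝓝 (π (γ t₀)) :=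
    hmap ▸ image_mem_map (hγ.continuousAt hsource)
  filter_upwards [hsource, π.continuous.continuousAt hopen]
  rintro q hq ⟨t, ht, hπt⟩ hFq
  refine ⟨t, chart.toOpenPartialHomeomorph.injOn ht hq (Prod.ext ?_ hπt)⟩
  exact (hconst t).trans hFq.symm

section ConnectedLevels

variable {E : Type*} [NormedAddCommGroup E] [NormedSpace ℝ E] {F : E → ℝ}

theorem isCompact_preimage_Iic_of_tendsto_atTop {X : Type*} [TopologicalSpace X] {F : X → ℝ}
    (hF : Continuous F) (hlim : Tendsto F (cocompact X) atTop) (c : ℝ) :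
    IsCompact (F ⁻¹' Iic c) := by
  obtain ⟨K, hK, hKc⟩ := mem_cocompact.1 (hlim.eventually_gt_atTop c)
  refine hK.of_isClosed_subset (isClosed_Iic.preimage hF) fun p (hp : F p ≤ c) => ?_
  by_contra hpK
  exact (hKc hpK).not_ge hp

theorem isPreconnected_levelSet_of_flow (hE : 1 < Module.rank ℝ E) (hF : Continuous F)
    (φ : Flow ℝ E) {a b A B R : ℝ} (hA : A ∈ Ioo a b) (hB : B ∈ Ioo a b)
    (htrans : ∀ x t, F x ∈ Ioo a b → F x + t ∈ Ioo a b → F (φ t x) = F x + t)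
    (hin : F ⁻¹' Iic A ⊆ ball 0 R) (hmax : closedBall 0 R ⊆ F ⁻¹' Iio B) :
    IsPreconnected (F ⁻¹' {A}) := by
  have himage : F ⁻¹' {A} = (fun q => φ (A - F q) q) '' sphere 0 R := by
    refine Subset.antisymm (fun x (hx : F x = A) => ?_) ?_
    · have hxR : ‖x‖ < R := mem_ball_zero_iff.1 (hin hx.le)
      have hAB : A < B := hx ▸ hmax (mem_closedBall_zero_iff.2 hxR.le)
      have hout : R < ‖φ (B - A) x‖ := by
        by_contra! hle
        have hlt : F (φ (B - A) x) < B := hmax (mem_closedBall_zero_iff.2 hle)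
        rw [htrans x _ (hx ▸ hA) (by rwa [hx, add_sub_cancel])] at hlt
        linarith
      obtain ⟨s, hs, hsR⟩ : R ∈ (fun t => ‖φ t x‖) '' Icc 0 (B - A) := by
        refine intermediate_value_Icc (sub_nonneg.2 hAB.le) (by fun_prop) ⟨?_, hout.le⟩
        simpa using hxR.le
      have hFs : F (φ s x) = A + s := by
        rw [htrans x s (hx ▸ hA) ⟨by linarith [hA.1, hs.1], by linarith [hB.2, hs.2]⟩, hx]
      refine ⟨φ s x, mem_sphere_zero_iff_norm.2 hsR, ?_⟩
      simp [hFs, ← φ.map_add]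
    · rintro _ ⟨q, hq, rfl⟩
      have hqA : A < F q := by
        by_contra! hle
        exact (mem_ball.1 (hin hle)).ne hq
      have hqB : F q < B := hmax (sphere_subset_closedBall hq)
      change F (φ (A - F q) q) = A
      rw [htrans q _ ⟨hA.1.trans hqA, hqB.trans hB.2⟩ (by rwa [add_sub_cancel]), add_sub_cancel]
  rw [himage]
  exact (isPreconnected_sphere hE 0 R).image _ (by fun_prop)

theorem isPreconnected_levelSet_of_tendsto_atTop [FiniteDimensional ℝ E]
    (hE : 1 < Module.rank ℝ E) (hF : ContDiff ℝ 2 F) (hlim : Tendsto F (cocompact E) atTop)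
    {c A : ℝ} (hcA : c < A) (hreg : ∀ p, c ≤ F p → fderiv ℝ F p ≠ 0) :
    IsPreconnected (F ⁻¹' {A}) := by
  have hsub := isCompact_preimage_Iic_of_tendsto_atTop hF.continuous hlim
  obtain ⟨R, hR⟩ := (hsub A).isBounded.subset_ball 0
  have := FiniteDimensional.proper_real E
  obtain ⟨m, hm⟩ := (isCompact_closedBall (0 : E) R).bddAbove_image hF.continuous.continuousOn
  have hA := le_max_left A m
  set M := max A m
  obtain ⟨φ, hφ⟩ := exists_flow_translating_values hF (a := (c + A) / 2) (b := M + 2)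
    (δ := (A - c) / 2) (by linarith) (by linarith)
    ((hsub _).of_isClosed_subset (isClosed_Icc.preimage hF.continuous) fun p hp => hp.2)
    fun p hp => hreg p (by linarith [hp.1])
  refine isPreconnected_levelSet_of_flow hE hF.continuous φ (B := M + 1) ⟨?_, ?_⟩ ⟨?_, ?_⟩ hφ hR
    fun p hp => (hm (mem_image_of_mem F hp)).trans_lt ?_
  all_goals linarith [le_max_right A m]

end ConnectedLevels

section PlaneLevels

variable {E : Type*} [NormedAddCommGroup E] [NormedSpace ℝ E] [FiniteDimensional ℝ E] {F : E → ℝ}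

theorem exists_hamiltonianFlow (b : Module.Basis (Fin 2) ℝ E) (hF : ContDiff ℝ 2 F) (A : ℝ)
    (hcpt : IsCompact (F ⁻¹' Icc (A - 1) (A + 1))) :
    ∃ φ : Flow ℝ E, (∀ x t, F (φ t x) = F x) ∧
      ∀ x, F x = A → HasStrictDerivAt (φ · x) (coordHamiltonian b F x) 0 := by
  let ψ : ContDiffBump A := ⟨1 / 2, 1, by norm_num, by norm_num⟩
  set V : E → E := fun p => ψ (F p) • coordHamiltonian b F p
  have hV : ContDiff ℝ 1 V :=
    (ψ.contDiff.comp (hF.of_le one_le_two)).smul (contDiff_coordHamiltonian b hF)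
  have hsupp : HasCompactSupport V := by
    refine .of_support_subset_isCompact hcpt fun p hp => ?_
    rw [← Real.closedBall_eq_Icc]
    by_contra hout
    exact hp (by simp only [V, ψ.zero_of_le_dist (not_le.1 hout).le, zero_smul])
  have := FiniteDimensional.complete ℝ E
  obtain ⟨φ, hφ⟩ := exists_flow_of_hasCompactSupport hV hsupp
  refine ⟨φ, fun x t => ?_, fun x hx => ?_⟩
  · have hderiv : ∀ s, HasDerivAt (F ∘ (φ · x)) 0 s := fun s => by
      simpa [V, fderiv_coordHamiltonian] using
        hasDerivAt_comp_integralCurve (hF.differentiable two_ne_zero) (hφ x) s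
    simpa using is_const_of_deriv_eq_zero (fun s => (hderiv s).differentiableAt)
      (fun s => (hderiv s).deriv) t 0
  · have hone : ψ A = 1 := ψ.one_of_mem_closedBall (mem_closedBall_self ψ.rIn_pos.le)
    simpa [V, hx, hone] using hasStrictDerivAt_of_isIntegralCurve hV.continuous (hφ x) 0

theorem orbit_mem_nhdsWithin_levelSet (b : Module.Basis (Fin 2) ℝ E) (hF : ContDiff ℝ 2 F)
    (φ : Flow ℝ E) (hconst : ∀ x t, F (φ t x) = F x) {x : E} (hx : fderiv ℝ F x ≠ 0)
    (hφ : HasStrictDerivAt (φ · x) (coordHamiltonian b F x) 0) :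
    φ.orbit x ∈ 𝓝[F ⁻¹' {F x}] x := by
  have := FiniteDimensional.complete ℝ E
  have hzero : φ 0 x = x := φ.map_zero_apply x
  have hFx : HasStrictFDerivAt F (fderiv ℝ F x) (φ 0 x) := by
    rw [hzero]
    exact hF.contDiffAt.hasStrictFDerivAt two_ne_zero
  have hsurj : (fderiv ℝ F x).range = ⊤ := LinearMap.range_eq_top.2 <|
    LinearMap.surjective fun h => hx (ContinuousLinearMap.coe_injective h)
  have hexact : (ContinuousLinearMap.toSpanSingleton ℝ (coordHamiltonian b F x)).range =
      (fderiv ℝ F x).ker := by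
    rw [ker_fderiv_eq_span_coordHamiltonian b hx]
    exact LinearMap.range_toSpanSingleton _
  have hlocal := eventually_mem_range_of_range_fderiv_eq_ker (γ := (φ · x)) hFx
    hφ.hasStrictFDerivAt hsurj hexact fun t => by rw [hconst, hconst]
  rw [hzero] at hlocal
  exact eventually_nhdsWithin_iff.2 hlocal

theorem nonempty_levelSet_homeomorph_circle (hE : Module.finrank ℝ E = 2) (hF : ContDiff ℝ 2 F)
    (hlim : Tendsto F (cocompact E) atTop) {c A : ℝ} (hcA : c < A)
    (hreg : ∀ p, c ≤ F p → fderiv ℝ F p ≠ 0) (hne : (F ⁻¹' {A}).Nonempty) :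
    Nonempty (F ⁻¹' {A} ≃ₜ Circle) := by
  have hsub := isCompact_preimage_Iic_of_tendsto_atTop hF.continuous hlim
  let b := Module.finBasisOfFinrankEq ℝ E hE
  obtain ⟨φ, hconst, hφ⟩ := exists_hamiltonianFlow b hF A
    ((hsub _).of_isClosed_subset (isClosed_Icc.preimage hF.continuous) fun p hp => hp.2)
  have hinv : IsInvariant φ (F ⁻¹' {A}) := fun t x hx => (hconst x t).trans hx
  have hcompact : CompactSpace (F ⁻¹' {A}) := isCompact_iff_compactSpace.1 <|
    (hsub A).of_isClosed_subset (isClosed_singleton.preimage hF.continuous) fun p hp => le_of_eq hp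
  have hconn : PreconnectedSpace (F ⁻¹' {A}) := Subtype.preconnectedSpace <|
    isPreconnected_levelSet_of_tendsto_atTop (Module.one_lt_rank_of_one_lt_finrank (by omega))
      hF hlim hcA hreg
  have hregA : ∀ x : F ⁻¹' {A}, fderiv ℝ F x ≠ 0 := fun x => hreg x (hcA.le.trans_eq x.2.symm)
  obtain ⟨x⟩ := hne.to_subtype
  refine nonempty_homeomorph_circle_of_flow (φ.restrict hinv) (x := x) (fun y => ?_) ?_
  · have horbit := orbit_mem_nhdsWithin_levelSet b hF φ hconst (hregA y) (hφ y y.2)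
    rw [show F y = A from y.2] at horbit
    rw [φ.orbit_restrict]
    exact preimage_coe_mem_nhds_subtype.2 horbit
  · by_contra! hfix
    have hstat : ∀ t, φ t x = x := fun t => congrArg Subtype.val (hfix t)
    have hzero := (hφ x x.2).hasDerivAt.unique
      (by simpa only [hstat] using hasDerivAt_const (0 : ℝ) (x : E))
    exact coordHamiltonian_ne_zero b (hregA x) hzero

end PlaneLevels

section BehaviourAtInfinity

variable {E : Type*} [NormedAddCommGroup E] [NormedSpace ℝ E] {F : E → ℝ}

theorem isPreconnected_compl_closedBall (hE : 1 < Module.rank ℝ E) (x : E) {R : ℝ} (hR : 0 ≤ R) :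
    IsPreconnected (closedBall x R)ᶜ := by
  have himage : (closedBall x R)ᶜ =
      (fun z : ℝ × E => x + z.1 • z.2) '' (Ioi R ×ˢ sphere (0 : E) 1) := by
    ext p
    simp only [mem_compl_iff, mem_closedBall_iff_norm, not_le, mem_image, mem_prod, mem_Ioi,
      mem_sphere_zero_iff_norm, Prod.exists]
    refine ⟨fun hp => ⟨‖p - x‖, ‖p - x‖⁻¹ • (p - x), ⟨hp, ?_⟩, ?_⟩, ?_⟩
    · simp [norm_smul, (hR.trans_lt hp).ne']
    · simp [smul_smul, (hR.trans_lt hp).ne']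
    · rintro ⟨s, v, ⟨hs, hv⟩, rfl⟩
      simpa [norm_smul, hv] using hs.trans_le (le_abs_self s)
  rw [himage]
  exact (isPreconnected_Ioi.prod (isPreconnected_sphere hE 0 1)).image _ (by fun_prop)

theorem eventually_lt_or_gt_of_isBounded_levelSet (hE : 1 < Module.rank ℝ E) (hF : Continuous F)
    {t : ℝ} (ht : Bornology.IsBounded (F ⁻¹' {t})) :
    (∀ᶠ p in Bornology.cobounded E, t < F p) ∨ ∀ᶠ p in Bornology.cobounded E, F p < t := by
  obtain ⟨R, hR, hball⟩ := ht.subset_closedBall_lt 0 0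
  have hfar : ∀ᶠ p in Bornology.cobounded E, p ∈ (closedBall (0 : E) R)ᶜ :=
    Bornology.isBounded_def.1 isBounded_closedBall
  by_contra! hcon
  obtain ⟨p, hpt, hp⟩ := (hcon.1.and_eventually hfar).exists
  obtain ⟨q, hqt, hq⟩ := (hcon.2.and_eventually hfar).exists
  obtain ⟨x, hx, hxt⟩ := (isPreconnected_compl_closedBall hE 0 hR.le).intermediate_value hp hq
    hF.continuousOn ⟨hpt, hqt⟩
  exact hx (hball hxt)

theorem tendsto_atTop_or_atBot_of_isCompact_levelSets [ProperSpace E] (hE : 1 < Module.rank ℝ E)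
    (hF : Continuous F) (hcpt : ∀ t, IsCompact (F ⁻¹' {t}))
    (hrange : ¬ Bornology.IsBounded (range F)) :
    Tendsto F (cocompact E) atTop ∨ Tendsto F (cocompact E) atBot := by
  have hside := fun t => eventually_lt_or_gt_of_isBounded_levelSet hE hF (hcpt t).isBounded
  simp only [cobounded_eq_cocompact] at hside
  by_contra! hcon
  obtain ⟨t, ht⟩ : ∃ t, ∀ᶠ p in cocompact E, F p < t := by
    by_contra h
    rw [not_exists] at h
    exact hcon.1 <| tendsto_atTop.2 fun t =>
      ((hside t).resolve_right (h t)).mono fun _ => le_of_lt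
  obtain ⟨s, hs⟩ : ∃ s, ∀ᶠ p in cocompact E, s < F p := by
    by_contra h
    rw [not_exists] at h
    exact hcon.2 <| tendsto_atBot.2 fun s =>
      ((hside s).resolve_left (h s)).mono fun _ => le_of_lt
  obtain ⟨K, hK, hKc⟩ := mem_cocompact.1 (hs.and ht)
  refine hrange (((hK.image hF).isBounded.union (isBounded_Ioo s t)).subset ?_)
  rintro _ ⟨p, rfl⟩
  by_cases hp : p ∈ K
  · exact .inl (mem_image_of_mem F hp)
  · exact .inr (hKc hp)

end BehaviourAtInfinity

section LargeLevels

variable {E : Type*} [NormedAddCommGroup E] [NormedSpace ℝ E] {F : E → ℝ}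

theorem nonempty_circle_homeomorph_sq_add_sq_eq_one :
    Nonempty (Circle ≃ₜ {p : ℝ × ℝ | p.1 ^ 2 + p.2 ^ 2 = 1}) := by
  refine ⟨Complex.equivRealProdCLM.toHomeomorph.subtype fun z => ?_⟩
  change z ∈ sphere (0 : ℂ) 1 ↔ z.re ^ 2 + z.im ^ 2 = 1
  rw [mem_sphere_zero_iff_norm, ← sq_eq_sq₀ (norm_nonneg z) zero_le_one, one_pow,
    Complex.sq_norm, Complex.normSq_apply, sq, sq]

theorem eventually_levelSet_homeomorph_circle_of_tendsto_atTop (hE : Module.finrank ℝ E = 2)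
    (hF : ContDiff ℝ 2 F) (hlim : Tendsto F (cocompact E) atTop)
    (hcrit : BddAbove (F '' {p | fderiv ℝ F p = 0})) :
    ∀ᶠ A in atTop, {p | F p = A}.Nonempty ∧ ¬ {p | F p = -A}.Nonempty ∧
      Nonempty ({p | F p = A} ≃ₜ {p : ℝ × ℝ | p.1 ^ 2 + p.2 ^ 2 = 1}) := by
  have := Module.finite_of_finrank_pos (hE ▸ two_pos)
  have := Module.nontrivial_of_finrank_pos (hE ▸ two_pos)
  have := FiniteDimensional.proper_real E
  obtain ⟨c, hc⟩ := hcrit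
  obtain ⟨x, hx⟩ := hF.continuous.exists_forall_le hlim
  filter_upwards [eventually_gt_atTop (c + 1), eventually_ge_atTop (F x),
    eventually_gt_atTop (-F x)] with A hcA hxA hAx
  have hne : {p | F p = A}.Nonempty := by
    obtain ⟨q, hq⟩ := (hlim.eventually_ge_atTop A).exists
    exact mem_range_of_exists_le_of_exists_ge hF.continuous ⟨x, hxA⟩ ⟨q, hq⟩
  refine ⟨hne, ?_, ?_⟩
  · rintro ⟨p, hp : F p = -A⟩
    linarith [hx p]
  · have hreg : ∀ p, c + 1 ≤ F p → fderiv ℝ F p ≠ 0 := fun p hp hzero =>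
      (lt_add_one c).not_ge (hp.trans (hc (mem_image_of_mem F hzero)))
    obtain ⟨e⟩ := nonempty_levelSet_homeomorph_circle hE hF hlim hcA hreg hne
    obtain ⟨e'⟩ := nonempty_circle_homeomorph_sq_add_sq_eq_one
    exact ⟨e.trans e'⟩

theorem eventually_levelSet_homeomorph_circle_of_tendsto_atBot (hE : Module.finrank ℝ E = 2)
    (hF : ContDiff ℝ 2 F) (hlim : Tendsto F (cocompact E) atBot)
    (hcrit : BddBelow (F '' {p | fderiv ℝ F p = 0})) :
    ∀ᶠ A in atTop, {p | F p = -A}.Nonempty ∧ ¬ {p | F p = A}.Nonempty ∧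
      Nonempty ({p | F p = -A} ≃ₜ {p : ℝ × ℝ | p.1 ^ 2 + p.2 ^ 2 = 1}) := by
  have hcritneg : BddAbove ((fun p => -F p) '' {p | fderiv ℝ (fun p => -F p) p = 0}) := by
    simpa [← image_neg_eq_neg, image_image] using hcrit.neg
  have hneg := eventually_levelSet_homeomorph_circle_of_tendsto_atTop hE hF.neg
    (tendsto_neg_atBot_atTop.comp hlim) hcritneg
  have hlevel : ∀ A, {p | -F p = A} = {p | F p = -A} := fun A => by simp only [neg_eq_iff_eq_neg]
  filter_upwards [hneg] with A hA
  rwa [hlevel, hlevel, neg_neg] at hA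

end LargeLevels

section PolynomialFunctions

theorem eq_C_of_isBounded_range_eval {σ 𝕜 : Type*} [NontriviallyNormedField 𝕜]
    {f : MvPolynomial σ 𝕜} (hf : Bornology.IsBounded (range fun x => eval x f)) :
    f = C (eval 0 f) := by
  refine MvPolynomial.funext fun v => ?_
  let q : Polynomial 𝕜 := aeval (fun i => Polynomial.C (v i) * Polynomial.X) f
  have hq : ∀ s, q.eval s = eval (s • v) f := fun s => by
    rw [← Polynomial.coe_aeval_eq_eval, comp_aeval_apply]
    simp [aeval_eq_eval, Pi.smul_def, mul_comm s]
  have hdeg : q.degree ≤ 0 := by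
    by_contra! hpos
    have hlim := q.tendsto_norm_atTop hpos (tendsto_norm_cobounded_atTop (E := 𝕜))
    obtain ⟨c, hc⟩ := isBounded_iff_forall_norm_le.1 hf
    obtain ⟨s, hs⟩ := (hlim.eventually_gt_atTop c).exists
    exact hs.not_ge (hq s ▸ hc _ (mem_range_self _))
  have h0 := hq 0
  have h1 := hq 1
  rw [Polynomial.eq_C_of_degree_le_zero hdeg, Polynomial.eval_C] at h0 h1
  simpa using h1.symm.trans h0

theorem hasFDerivAt_eval {σ 𝕜 : Type*} [Fintype σ] [NontriviallyNormedField 𝕜]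
    (f : MvPolynomial σ 𝕜) (x : σ → 𝕜) :
    HasFDerivAt (fun y => eval y f)
      (∑ i, eval x (pderiv i f) • (ContinuousLinearMap.proj i : (σ → 𝕜) →L[𝕜] 𝕜)) x := by
  classical
  induction f using MvPolynomial.induction_on with
  | C a =>
    simp only [eval_C]
    refine (hasFDerivAt_const a x).congr_fderiv ?_
    ext v
    simp
  | add f g hf hg =>
    simp only [map_add]
    refine (hf.fun_add hg).congr_fderiv ?_
    ext v
    simp [add_mul, Finset.sum_add_distrib]
  | mul_X f i hf =>
    simp only [map_mul, eval_X]
    refine (hf.mul (hasFDerivAt_apply i x)).congr_fderiv ?_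
    ext v
    simp [pderiv_X, Pi.single_apply, apply_ite, add_mul, Finset.sum_add_distrib, Finset.mul_sum,
      mul_assoc]

theorem evalP_eq_eval_comp_finTwoArrow (f : MvPolynomial (Fin 2) ℝ) :
    (fun p : ℝ × ℝ => evalP f p.1 p.2) =
      (fun x => eval x f) ∘ (ContinuousLinearEquiv.finTwoArrow ℝ ℝ).symm := rfl

theorem contDiff_evalP (f : MvPolynomial (Fin 2) ℝ) :
    ContDiff ℝ 2 fun p : ℝ × ℝ => evalP f p.1 p.2 :=
  (AnalyticOnNhd.eval_mvPolynomial f).contDiff.comp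
    (ContinuousLinearEquiv.finTwoArrow ℝ ℝ).symm.contDiff

theorem not_isBounded_range_evalP {f : MvPolynomial (Fin 2) ℝ} (hf : 0 < f.totalDegree) :
    ¬ Bornology.IsBounded (range fun p : ℝ × ℝ => evalP f p.1 p.2) := by
  intro hbdd
  rw [evalP_eq_eval_comp_finTwoArrow,
    (ContinuousLinearEquiv.finTwoArrow ℝ ℝ).symm.surjective.range_comp] at hbdd
  rw [eq_C_of_isBounded_range_eval hbdd, totalDegree_C] at hf
  exact hf.false

theorem isCriticalPt_of_fderiv_eq_zero {f : MvPolynomial (Fin 2) ℝ} {p : ℝ × ℝ}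
    (hp : fderiv ℝ (fun q : ℝ × ℝ => evalP f q.1 q.2) p = 0) : IsCriticalPt f p := by
  have hderiv := ((hasFDerivAt_eval f ![p.1, p.2]).comp p
    (ContinuousLinearEquiv.finTwoArrow ℝ ℝ).symm.hasFDerivAt).fderiv
  have hzero := hderiv.symm.trans hp
  exact ⟨by simpa [evalP] using DFunLike.congr_fun hzero (1, 0),
    by simpa [evalP] using DFunLike.congr_fun hzero (0, 1)⟩

end PolynomialFunctions

end LevelCircle

theorem large_level_set_is_circle_of_compact_levels_general {E : Type*} [NormedAddCommGroup E]
    [NormedSpace ℝ E] (hE : Module.finrank ℝ E = 2) {F : E → ℝ} (hF : ContDiff ℝ 2 F)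
    (hrange : ¬ Bornology.IsBounded (Set.range F))
    (hcrit : Bornology.IsBounded (F '' {p | fderiv ℝ F p = 0}))
    (hcpt : ∀ t, IsCompact {p | F p = t}) :
    ∃ A₀ : ℝ, 0 < A₀ ∧ ∀ A, A₀ ≤ A →
      Xor {p | F p = A}.Nonempty {p | F p = -A}.Nonempty ∧
      ∀ B, B = A ∨ B = -A → {p | F p = B}.Nonempty →
        Nonempty ({p | F p = B} ≃ₜ {p : ℝ × ℝ | p.1 ^ 2 + p.2 ^ 2 = 1}) := by
  have := Module.finite_of_finrank_pos (hE ▸ two_pos)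
  have := FiniteDimensional.proper_real E
  suffices h : ∀ᶠ A in atTop, Xor {p | F p = A}.Nonempty {p | F p = -A}.Nonempty ∧
      ∀ B, B = A ∨ B = -A → {p | F p = B}.Nonempty →
        Nonempty ({p | F p = B} ≃ₜ {p : ℝ × ℝ | p.1 ^ 2 + p.2 ^ 2 = 1}) from
    ((atTop_basis' 1).eventually_iff.1 h).imp fun A₀ h => ⟨one_pos.trans_le h.1, h.2⟩
  have hrank := Module.one_lt_rank_of_one_lt_finrank (by omega : 1 < Module.finrank ℝ E)
  rcases LevelCircle.tendsto_atTop_or_atBot_of_isCompact_levelSets hrank hF.continuous hcpt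
    hrange with hlim | hlim
  · filter_upwards [LevelCircle.eventually_levelSet_homeomorph_circle_of_tendsto_atTop hE hF hlim
      hcrit.bddAbove] with A ⟨hne, hempty, hcircle⟩
    refine ⟨.inl ⟨hne, hempty⟩, ?_⟩
    rintro B (rfl | rfl) hB
    exacts [hcircle, absurd hB hempty]
  · filter_upwards [LevelCircle.eventually_levelSet_homeomorph_circle_of_tendsto_atBot hE hF hlim
      hcrit.bddBelow] with A ⟨hne, hempty, hcircle⟩
    refine ⟨.inr ⟨hne, hempty⟩, ?_⟩
    rintro B (rfl | rfl) hB
    exacts [absurd hB hempty, hcircle]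

theorem large_level_set_is_circle_of_compact_levels
    (f : MvPolynomial (Fin 2) ℝ) (hnc : 0 < f.totalDegree)
    (hfin : {p : ℝ × ℝ | IsCriticalPt f p}.Finite)
    (hcpt : ∀ t : ℝ, IsCompact {p : ℝ × ℝ | evalP f p.1 p.2 = t}) :
    ∃ A₀ : ℝ, 0 < A₀ ∧ ∀ A : ℝ, A₀ ≤ A →
      Xor' ({p : ℝ × ℝ | evalP f p.1 p.2 = A}.Nonempty)
           ({p : ℝ × ℝ | evalP f p.1 p.2 = -A}.Nonempty) ∧
      ∀ B : ℝ, (B = A ∨ B = -A) → {p : ℝ × ℝ | evalP f p.1 p.2 = B}.Nonempty →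
        Nonempty (↥{p : ℝ × ℝ | evalP f p.1 p.2 = B} ≃ₜ
          ↥{p : ℝ × ℝ | p.1 ^ 2 + p.2 ^ 2 = 1}) := by
  exact large_level_set_is_circle_of_compact_levels_general (by simp) (LevelCircle.contDiff_evalP f)
    (LevelCircle.not_isBounded_range_evalP hnc)
    ((hfin.subset fun _ => LevelCircle.isCriticalPt_of_fderiv_eq_zero).image _).isBounded hcpt
end

section
/- Let f : ℝ² → ℝ be a nonconstant real polynomial function in two variables with only finitely many critical points, and suppose that at least one level set {(x,y) : f(x,y) = t} is not compact. Then there exist A₀ > 0 and an integer N ≥ 1 such that for every A ≥ A₀, the set {(x,y) : |f(x,y)| = A} has exactly 2N connected components, and every one of these connected components is noncompact. -/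
open MvPolynomial Filter

/-!
A shear of the plane turns `f` into a constant multiple of a polynomial `P` monic in `y`, so that
on a level set `|x|` tends to infinity.  For large `a` the curve `|P| = a` is regular and has no
compact component: a compact component would bound a domain, which contains a critical point.  If
this happened at arbitrarily high levels, then, the critical points being finite in number, one of
them would lie in domains of arbitrarily high levels, which would exhaust the plane.  Take one
containing all critical points and a larger one reaching a point of the noncompact level set outside
the first: the minimum of the function between the two would be a further critical point.

Each component is therefore a line traced out by the Hamiltonian flow, along which `|x|` tends to
infinity at both ends.  For large `X` such a line enters and leaves `|x| ≤ X` exactly once, so twice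
the number of components is the number of real roots of the four polynomials `P(±X, y) ∓ a`.
The parity of the number of roots is that of the degree, and the sign of the resultant with the
derivative determines it modulo 4.  The product of the four resultants is positive, because each
has the sign of its leading term in `±X` and these multiply to a square, so the number of roots is
a multiple of 4 and that of components is even.  Neither number depends on `a`,
because the four polynomials stay separable.
-/

open Set Topology Function

section Flow

open scoped Manifold NNReal

variable {E : Type*} [NormedAddCommGroup E] [NormedSpace ℝ E]

/-- `Φ p` is the integral curve of the vector field `V` through `p`, defined for all times.  Unlike
in Mathlib's `Flow`, no joint continuity is required, and the starting point comes first. -/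
structure IsFlowOf (V : E → E) (Φ : E → ℝ → E) : Prop where
  map_zero : ∀ p, Φ p 0 = p
  hasDerivAt : ∀ p t, HasDerivAt (Φ p) (V (Φ p t)) t
  map_add : ∀ p s t, Φ p (s + t) = Φ (Φ p s) t

lemma isMIntegralCurve_iff_hasDerivAt {V : E → E} {γ : ℝ → E} :
    IsMIntegralCurve (I := 𝓘(ℝ, E)) γ V ↔ ∀ t, HasDerivAt γ (V (γ t)) t := by
  simp only [hasDerivAt_iff_hasFDerivAt]
  exact forall_congr' fun _ ↦ hasMFDerivAt_iff_hasFDerivAt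

lemma contMDiff_tangent_section {V : E → E} {n : WithTop ℕ∞} (hV : ContDiff ℝ n V) :
    ContMDiff 𝓘(ℝ, E) 𝓘(ℝ, E).tangent n (fun x ↦ (⟨x, V x⟩ : TangentBundle 𝓘(ℝ, E) E)) :=
  contMDiff_vectorSpace_iff_contDiff.2 hV

theorem exists_isFlowOf_of_contDiff [FiniteDimensional ℝ E] {V : E → E} (hV : ContDiff ℝ 1 V)
    {C : ℝ≥0} (hC : ∀ x, ‖V x‖ ≤ C) : ∃ Φ, IsFlowOf V Φ := by
  have : ProperSpace E := FiniteDimensional.proper ℝ E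
  have hV' := contMDiff_tangent_section hV
  have hlocal (p : E) : ∃ γ : ℝ → E, γ 0 = p ∧
      IsMIntegralCurveOn (I := 𝓘(ℝ, E)) γ V (Ioo (-1) 1) := by
    obtain ⟨K, hK⟩ := (hV.contDiffOn (s := Metric.closedBall p C)).exists_lipschitzOnWith
      one_ne_zero (convex_closedBall p _) (isCompact_closedBall p _)
    have hPL : IsPicardLindelof (fun _ ↦ V) (⟨0, by simp⟩ : Icc (-1 : ℝ) 1) p C 0 C K :=
      .of_time_independent (fun x _ ↦ hC x) hK (by simp)
    obtain ⟨γ, hγ0, hγ⟩ := hPL.exists_eq_forall_mem_Icc_hasDerivWithinAt₀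
    exact ⟨γ, hγ0, fun t ht ↦ ((hγ t (Ioo_subset_Icc_self ht)).mono
      Ioo_subset_Icc_self).hasFDerivWithinAt.hasMFDerivWithinAt⟩
  choose Φ hΦ0 hΦ using exists_isMIntegralCurve_of_isMIntegralCurveOn hV' one_pos hlocal
  refine ⟨Φ, hΦ0, fun p ↦ isMIntegralCurve_iff_hasDerivAt.1 (hΦ p), fun p s t ↦ ?_⟩
  have hshift : IsMIntegralCurve (I := 𝓘(ℝ, E)) (Φ p ∘ (· + s)) V := (hΦ p).comp_add s
  simpa [add_comm] using congrFun (isMIntegralCurve_Ioo_eq_of_contMDiff_boundaryless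
    (t₀ := 0) hV' hshift (hΦ (Φ p s)) (by simp [hΦ0])) t

end Flow

section OneDim

variable {h h' : ℝ → ℝ} {c : ℝ}

lemma exists_mem_Ioo_eq_zero_of_pos_of_le (hd : ∀ t, HasDerivAt h (h' t) t) {a b : ℝ} (hab : a < b)
    (ha : 0 < h' a) (hle : h b ≤ h a) : ∃ m ∈ Ioo a b, h a ≤ h m ∧ h' m = 0 := by
  have hcont : ContinuousOn h (Icc a b) := fun s _ ↦ (hd s).continuousAt.continuousWithinAt
  obtain ⟨m, hm, hmax⟩ := isCompact_Icc.exists_isMaxOn (nonempty_Icc.2 hab.le) hcont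
  have hinc : ∀ᶠ s in 𝓝[>] a, h a < h s := by
    have := (hasDerivAt_iff_tendsto_slope.1 (hd a)).mono_left (nhdsGT_le_nhdsNE a)
    filter_upwards [this.eventually (lt_mem_nhds ha), self_mem_nhdsWithin] with s hs has
    rw [slope_def_field] at hs
    exact sub_pos.1 ((div_pos_iff_of_pos_right (sub_pos.2 has)).1 hs)
  obtain ⟨s, has, hs⟩ := (hinc.and (Ioo_mem_nhdsGT hab)).exists
  have hsm : h a < h m := has.trans_le (hmax (Ioo_subset_Icc_self hs))
  have hm' : m ∈ Ioo a b := ⟨hm.1.lt_of_ne (by rintro rfl; exact hsm.false),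
    hm.2.lt_of_ne (by rintro rfl; exact (hsm.trans_le hle).false)⟩
  exact ⟨m, hm', hsm.le, (hmax.isLocalMax (Icc_mem_nhds hm'.1 hm'.2)).hasDerivAt_eq_zero (hd m)⟩

lemma existsUnique_eq_and_deriv_pos (hd : ∀ t, HasDerivAt h (h' t) t)
    (hne : ∀ t, c ≤ h t → h' t ≠ 0) (hh : Tendsto h (cocompact ℝ) atTop) :
    ∃! t, h t = c ∧ 0 < h' t := by
  have hcont : Continuous h := continuous_iff_continuousAt.2 fun s ↦ (hd s).continuousAt
  obtain ⟨m, hm⟩ := hcont.exists_forall_le hh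
  have hmc : h m < c := lt_of_not_ge fun hc ↦
    hne m hc ((show IsLocalMin h m from .of_forall hm).hasDerivAt_eq_zero (hd m))
  have hstay {a b : ℝ} (ha : h a = c ∧ 0 < h' a) (hab : a < b) : c < h b := by
    by_contra! hb
    obtain ⟨s, -, has, hs⟩ := exists_mem_Ioo_eq_zero_of_pos_of_le hd hab ha.2 (ha.1 ▸ hb)
    exact hne s (ha.1 ▸ has) hs
  have hexit : ∃ t, h t = c ∧ 0 < h' t := by
    obtain ⟨K, hK, hKc⟩ := mem_cocompact.1 (hh.eventually_gt_atTop c)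
    have hcpt : IsCompact {t | h t ≤ c} :=
      hK.of_isClosed_subset (isClosed_le hcont continuous_const)
        fun t ht ↦ by_contra fun htK ↦ (hKc htK).out.not_ge ht.out
    obtain ⟨t, htc, ht⟩ := hcpt.exists_isGreatest ⟨m, hmc.le⟩
    have hlast {s : ℝ} (hs : t < s) : c < h s := lt_of_not_ge fun hsc ↦ (ht hsc).not_gt hs
    have heq : h t = c := htc.eq_of_not_lt fun hlt ↦ by
      obtain ⟨s, hts, hs⟩ := ((frequently_gt_nhds t).and_eventually
        ((hcont.tendsto t).eventually_lt_const hlt)).exists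
      exact (hlast hts).not_gt hs
    refine ⟨t, heq, (hne t heq.ge).lt_of_le' (le_of_not_gt fun hneg ↦ ?_)⟩
    obtain ⟨s, hs, hts, -⟩ := exists_mem_Ioo_eq_zero_of_pos_of_le (fun s ↦ (hd s).neg)
      (lt_add_one t) (neg_pos.2 hneg) (neg_le_neg (heq.trans_lt (hlast (lt_add_one t))).le)
    exact ((neg_le_neg_iff.1 hts).trans_eq heq).not_gt (hlast hs.1)
  obtain ⟨t, ht⟩ := hexit
  refine ⟨t, ht, fun s hs ↦ ?_⟩
  rcases lt_trichotomy s t with hst | rfl | hts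
  · exact absurd ht.1 (hstay hs hst).ne'
  · rfl
  · exact absurd hs.1 (hstay ht hts).ne'

lemma existsUnique_eq_and_deriv_neg (hd : ∀ t, HasDerivAt h (h' t) t)
    (hne : ∀ t, c ≤ h t → h' t ≠ 0) (hh : Tendsto h (cocompact ℝ) atTop) :
    ∃! t, h t = c ∧ h' t < 0 := by
  obtain ⟨t, ht, huniq⟩ := existsUnique_eq_and_deriv_pos (h := fun t ↦ h (-t))
    (h' := fun t ↦ -h' (-t)) (c := c)
    (fun t ↦ by simpa [comp_def] using (hd (-t)).scomp t (hasDerivAt_neg t))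
    (fun t ht ↦ neg_ne_zero.2 (hne _ ht))
    (hh.comp (Homeomorph.neg ℝ).isClosedEmbedding.tendsto_cocompact)
  refine ⟨-t, by simpa using ht, fun s hs ↦ ?_⟩
  rw [← huniq (-s) (by simpa using hs), neg_neg]

end OneDim

section FlowBox

variable {E : Type*} [NormedAddCommGroup E] [NormedSpace ℝ E]

lemma eventually_mem_image_of_hasStrictFDerivAt (hE : Module.finrank ℝ E = 2) {F : E → ℝ}
    {F' : E →L[ℝ] ℝ} {γ : ℝ → E} {v : E} {t₀ : ℝ} {s : Set ℝ}
    (hF : HasStrictFDerivAt F F' (γ t₀)) (hF' : F' ≠ 0) (hγ : HasStrictDerivAt γ v t₀) (hv : v ≠ 0)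
    (hFγ : ∀ t, F (γ t) = F (γ t₀)) (hs : s ∈ 𝓝 t₀) :
    ∀ᶠ q in 𝓝 (γ t₀), F q = F (γ t₀) → q ∈ γ '' s := by
  have : FiniteDimensional ℝ E := Module.finite_of_finrank_pos (by omega)
  have : CompleteSpace E := FiniteDimensional.complete ℝ E
  obtain ⟨π, hπ⟩ := SeparatingDual.exists_eq_one (R := ℝ) hv
  obtain ⟨u, hu⟩ : ∃ u, F' u = 1 :=
    F'.toLinearMap.surjective (by simpa [DFunLike.ext_iff] using hF') 1
  have hF'v : F' v = 0 := by
    refine (hF.hasFDerivAt.comp_hasDerivAt t₀ hγ.hasDerivAt).unique ?_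
    simpa only [comp_def, hFγ] using hasDerivAt_const t₀ (F (γ t₀))
  have hsurj : Surjective (F'.prod π) := fun ⟨a, b⟩ ↦
    ⟨a • u + (b - a * π u) • v, by simp [hu, hπ, hF'v]⟩
  have hinj : Injective (F'.prod π) := (LinearMap.injective_iff_surjective_of_finrank_eq_finrank
    (f := (F'.prod π).toLinearMap) (by simp [hE])).2 hsurj
  let e : E ≃L[ℝ] ℝ × ℝ := .ofBijective (F'.prod π) (LinearMap.ker_eq_bot.2 hinj)
    (LinearMap.range_eq_top.2 hsurj)
  have he : HasStrictFDerivAt (fun q ↦ (F q, π q)) (e : E →L[ℝ] ℝ × ℝ) (γ t₀) := by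
    simpa only [e, ContinuousLinearEquiv.coe_ofBijective] using hF.prodMk π.hasStrictFDerivAt
  have hleft := he.eventually_left_inverse
  have hopen : (π ∘ γ) '' {t ∈ s | he.localInverse _ _ _ (F (γ t), π (γ t)) = γ t} ∈
      𝓝 (π (γ t₀)) := by
    rw [← comp_apply (f := π), ← (π.hasStrictFDerivAt.comp_hasStrictDerivAt t₀ hγ).map_nhds_eq
      (by simp [hπ])]
    exact image_mem_map (inter_mem hs (hγ.hasDerivAt.continuousAt.eventually hleft))
  filter_upwards [hleft, π.continuous.continuousAt hopen] with q hq ⟨t, ⟨hts, ht⟩, hπt⟩ hFq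
  refine ⟨t, hts, ?_⟩
  rw [← ht, ← hq, hFq, hFγ, ← hπt, comp_apply]

end FlowBox

section Orbits

variable {E : Type*} [NormedAddCommGroup E] [NormedSpace ℝ E] {V : E → E} {Φ : E → ℝ → E}

namespace IsFlowOf

lemma continuous (hΦ : IsFlowOf V Φ) (p : E) : Continuous (Φ p) :=
  continuous_iff_continuousAt.2 fun t ↦ (hΦ.hasDerivAt p t).continuousAt

lemma map_map_neg (hΦ : IsFlowOf V Φ) (p : E) (t : ℝ) : Φ (Φ p t) (-t) = p := by
  rw [← hΦ.map_add, add_neg_cancel, hΦ.map_zero]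

lemma mem_range_self (hΦ : IsFlowOf V Φ) (p : E) : p ∈ range (Φ p) := ⟨0, hΦ.map_zero p⟩

lemma range_map (hΦ : IsFlowOf V Φ) (p : E) (t : ℝ) : range (Φ (Φ p t)) = range (Φ p) := by
  have h : Φ (Φ p t) = Φ p ∘ Equiv.addLeft t := funext fun s ↦ (hΦ.map_add p t s).symm
  rw [h, (Equiv.addLeft t).surjective.range_comp]

lemma range_eq_of_mem (hΦ : IsFlowOf V Φ) {p q : E} (hq : q ∈ range (Φ p)) :
    range (Φ q) = range (Φ p) := by
  obtain ⟨t, rfl⟩ := hq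
  exact hΦ.range_map p t

lemma periodic_of_eq (hΦ : IsFlowOf V Φ) {p : E} {a b : ℝ} (hab : Φ p a = Φ p b) :
    Periodic (Φ p) (b - a) := fun t ↦ by
  rw [show t + (b - a) = b + (t - a) by ring, hΦ.map_add, ← hab, ← hΦ.map_add, add_sub_cancel]

lemma injective_of_not_isCompact_range (hΦ : IsFlowOf V Φ) {p : E}
    (hp : ¬ IsCompact (range (Φ p))) : Injective (Φ p) := fun _ _ hab ↦ by
  by_contra hne
  exact hp ((hΦ.periodic_of_eq hab).compact_of_continuous (sub_ne_zero.2 (Ne.symm hne))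
    (hΦ.continuous p))

end IsFlowOf

/-- The set `Z` is a union of orbits of `Φ` that look locally like a curve: near each of its points
`p`, it consists of an arbitrarily short piece of the orbit of `p`. -/
structure IsOrbitCurve (Φ : E → ℝ → E) (Z : Set E) : Prop where
  map_mem : ∀ p ∈ Z, ∀ t, Φ p t ∈ Z
  eventually_mem_image : ∀ p ∈ Z, ∀ s ∈ 𝓝 (0 : ℝ), ∀ᶠ q in 𝓝[Z] p, q ∈ Φ p '' s

namespace IsOrbitCurve

variable {Z : Set E} {p : E}

lemma isClopen_preimage_range (hZ : IsOrbitCurve Φ Z) (hΦ : IsFlowOf V Φ) (p : E) :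
    IsClopen ((↑) ⁻¹' range (Φ p) : Set Z) := by
  have hlocal (q : Z) : ∀ᶠ r : Z in 𝓝 q, range (Φ (r : E)) = range (Φ q) := by
    have := hZ.eventually_mem_image q q.2 univ univ_mem
    rw [nhdsWithin_eq_map_subtype_coe q.2, eventually_map] at this
    filter_upwards [this] with r hr
    exact hΦ.range_eq_of_mem (image_subset_range _ _ hr)
  constructor
  · refine ⟨isOpen_iff_mem_nhds.2 fun q hq ↦ ?_⟩
    filter_upwards [hlocal q] with r hr hrp
    exact hq (by simpa [← hΦ.range_eq_of_mem hrp, hr] using hΦ.mem_range_self q)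
  · refine isOpen_iff_mem_nhds.2 fun q hq ↦ ?_
    filter_upwards [hlocal q] with r hr
    simpa [← hΦ.range_eq_of_mem hq, ← hr] using hΦ.mem_range_self r

lemma connectedComponentIn_eq (hZ : IsOrbitCurve Φ Z) (hΦ : IsFlowOf V Φ) (hp : p ∈ Z) :
    connectedComponentIn Z p = range (Φ p) := by
  refine Subset.antisymm ?_ ((isPreconnected_range (hΦ.continuous p)).subset_connectedComponentIn
    (hΦ.mem_range_self p) (range_subset_iff.2 (hZ.map_mem p hp)))
  rw [connectedComponentIn_eq_image hp, image_subset_iff]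
  exact (hZ.isClopen_preimage_range hΦ p).connectedComponent_subset (hΦ.mem_range_self p)

lemma tendsto_cocompact (hZ : IsOrbitCurve Φ Z) (hΦ : IsFlowOf V Φ) (hcl : IsClosed Z)
    (hp : p ∈ Z) (hnc : ¬ IsCompact (connectedComponentIn Z p)) :
    Tendsto (Φ p) (cocompact ℝ) (cocompact E) := by
  rw [hZ.connectedComponentIn_eq hΦ hp] at hnc
  refine hasBasis_cocompact.tendsto_right_iff.2 fun K hK ↦ ?_
  by_contra hfreq
  obtain ⟨q, -, hq⟩ := hK.exists_mapClusterPt_of_frequently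
    (by simpa only [not_eventually, notMem_compl_iff] using hfreq)
  have hqZ : q ∈ Z := hcl.mem_of_mapClusterPt hq (.of_forall (hZ.map_mem p hp))
  have hbox : ∃ᶠ t in cocompact ℝ, Φ p t ∈ Φ q '' Metric.closedBall 0 1 := by
    have := eventually_nhdsWithin_iff.1
      (hZ.eventually_mem_image q hqZ _ (Metric.closedBall_mem_nhds 0 one_pos))
    exact (hq.frequently this).mono fun t ht ↦ ht (hZ.map_mem p hp t)
  obtain ⟨t, r, -, hr⟩ := hbox.exists
  have hqt : q = Φ p (t - r) := by
    rw [sub_eq_add_neg, hΦ.map_add, ← hr, hΦ.map_map_neg]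
  obtain ⟨t', ⟨r', hr', hr'q⟩, ht'⟩ := (hbox.and_eventually
    (isCompact_closedBall (t - r) 1).compl_mem_cocompact).exists
  rw [hqt, ← hΦ.map_add] at hr'q
  rw [← hΦ.injective_of_not_isCompact_range hnc hr'q] at ht'
  exact ht' (by simpa only [Metric.mem_closedBall, dist_self_add_left, dist_zero_right] using hr')

lemma bijective_mk_of_existsUnique (hZ : IsOrbitCurve Φ Z) (hΦ : IsFlowOf V Φ) {S : Set E}
    (hSZ : S ⊆ Z) (hS : ∀ p ∈ Z, ∃! t, Φ p t ∈ S) :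
    Bijective fun q : S ↦ (ConnectedComponents.mk (⟨q, hSZ q.2⟩ : Z)) := by
  have hmk {q r : Z} : ConnectedComponents.mk q = ConnectedComponents.mk r ↔
      (q : E) ∈ range (Φ r) := by
    rw [ConnectedComponents.coe_eq_coe', ← hZ.connectedComponentIn_eq hΦ r.2,
      connectedComponentIn_eq_image r.2, Subtype.val_injective.mem_set_image]
  constructor
  · intro q r hqr
    obtain ⟨t, ht⟩ := hmk.1 hqr
    have ht0 : t = 0 := (hS r (hSZ r.2)).unique (by simp [ht]) (by simp [hΦ.map_zero])
    exact Subtype.ext (by rw [← ht, ht0, hΦ.map_zero])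
  · intro c
    obtain ⟨p, rfl⟩ := ConnectedComponents.surjective_coe c
    obtain ⟨t, ht, -⟩ := hS p p.2
    exact ⟨⟨Φ p t, ht⟩, hmk.2 ⟨t, rfl⟩⟩

theorem two_mul_card_connectedComponents (hZ : IsOrbitCurve Φ Z) (hΦ : IsFlowOf V Φ)
    (hcl : IsClosed Z) (hnc : ∀ p ∈ Z, ¬ IsCompact (connectedComponentIn Z p)) {h : E → ℝ} {c : ℝ}
    (hd : Differentiable ℝ h) (hne : ∀ p ∈ Z, c ≤ h p → fderiv ℝ h p (V p) ≠ 0)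
    (hproper : Tendsto h (cocompact E ⊓ 𝓟 Z) atTop) (hfin : {p ∈ Z | h p = c}.Finite) :
    Finite (ConnectedComponents Z) ∧
      2 * Nat.card (ConnectedComponents Z) = {p ∈ Z | h p = c}.ncard := by
  have hderiv (p : E) (t : ℝ) : HasDerivAt (h ∘ Φ p) (fderiv ℝ h (Φ p t) (V (Φ p t))) t :=
    (hd _).hasFDerivAt.comp_hasDerivAt t (hΦ.hasDerivAt p t)
  have hcoercive (p : E) (hp : p ∈ Z) : Tendsto (h ∘ Φ p) (cocompact ℝ) atTop :=
    hproper.comp (tendsto_inf.2 ⟨hZ.tendsto_cocompact hΦ hcl hp (hnc p hp),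
      tendsto_principal.2 (.of_forall (hZ.map_mem p hp))⟩)
  let exits : Set E := {p ∈ Z | h p = c ∧ 0 < fderiv ℝ h p (V p)}
  let entries : Set E := {p ∈ Z | h p = c ∧ fderiv ℝ h p (V p) < 0}
  have hexits (p : E) (hp : p ∈ Z) : ∃! t, Φ p t ∈ exits := by
    simpa [exits, hZ.map_mem p hp] using existsUnique_eq_and_deriv_pos (hderiv p)
      (fun t ↦ hne _ (hZ.map_mem p hp t)) (hcoercive p hp)
  have hentries (p : E) (hp : p ∈ Z) : ∃! t, Φ p t ∈ entries := by
    simpa [entries, hZ.map_mem p hp] using existsUnique_eq_and_deriv_neg (hderiv p)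
      (fun t ↦ hne _ (hZ.map_mem p hp t)) (hcoercive p hp)
  have hbij := hZ.bijective_mk_of_existsUnique hΦ (sep_subset _ _) hexits
  have hcard_exits : exits.ncard = Nat.card (ConnectedComponents Z) :=
    Nat.card_eq_of_bijective _ hbij
  have hcard_entries : entries.ncard = Nat.card (ConnectedComponents Z) :=
    Nat.card_eq_of_bijective _ (hZ.bijective_mk_of_existsUnique hΦ (sep_subset _ _) hentries)
  have hunion : {p ∈ Z | h p = c} = exits ∪ entries := by
    ext p
    have := hne p
    grind
  have hdisj : Disjoint exits entries := disjoint_left.2 fun p hp hp' ↦ hp.2.2.not_gt hp'.2.2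
  rw [hunion, finite_union] at hfin
  have := hfin.1.to_subtype
  refine ⟨Finite.of_surjective _ hbij.surjective, ?_⟩
  rw [hunion, ncard_union_eq hdisj hfin.1 hfin.2, hcard_exits, hcard_entries, two_mul]

end IsOrbitCurve

end Orbits

section Hamiltonian

variable {F : ℝ × ℝ → ℝ}

/-- The Hamiltonian vector field `(∂F/∂y, -∂F/∂x)`, divided by `1 + |∇F|²`: this makes it bounded,
hence complete, and only reparametrises its orbits. -/
noncomputable def hamiltonianField (F : ℝ × ℝ → ℝ) (p : ℝ × ℝ) : ℝ × ℝ :=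
  (1 + fderiv ℝ F p (1, 0) ^ 2 + fderiv ℝ F p (0, 1) ^ 2)⁻¹ •
    (fderiv ℝ F p (0, 1), -fderiv ℝ F p (1, 0))

lemma clm_prod_apply (ℓ : ℝ × ℝ →L[ℝ] ℝ) (v : ℝ × ℝ) :
    ℓ v = v.1 * ℓ (1, 0) + v.2 * ℓ (0, 1) := by
  calc ℓ v = ℓ (v.1 • (1, 0) + v.2 • (0, 1)) := by simp
    _ = v.1 * ℓ (1, 0) + v.2 * ℓ (0, 1) := by rw [map_add, map_smul, map_smul]; rfl

lemma clm_prod_ne_zero_iff {ℓ : ℝ × ℝ →L[ℝ] ℝ} : ℓ ≠ 0 ↔ ℓ (1, 0) ≠ 0 ∨ ℓ (0, 1) ≠ 0 := by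
  rw [← not_iff_not]
  push Not
  refine ⟨fun h ↦ by simp [h], fun h ↦ ?_⟩
  ext <;> simp [h]

lemma contDiff_hamiltonianField (hF : ContDiff ℝ 2 F) : ContDiff ℝ 1 (hamiltonianField F) := by
  have hpartial (v : ℝ × ℝ) : ContDiff ℝ 1 fun p ↦ fderiv ℝ F p v :=
    (hF.fderiv_right (m := 1) (by norm_num)).clm_apply contDiff_const
  exact (((contDiff_const.add ((hpartial (1, 0)).pow 2)).add ((hpartial (0, 1)).pow 2)).inv
    fun p ↦ by positivity).smul ((hpartial (0, 1)).prodMk (hpartial (1, 0)).neg)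

lemma norm_hamiltonianField_le (F : ℝ × ℝ → ℝ) (p : ℝ × ℝ) : ‖hamiltonianField F p‖ ≤ 1 := by
  rw [hamiltonianField, norm_smul, norm_inv, Real.norm_of_nonneg (by positivity),
    inv_mul_le_one₀ (by positivity)]
  refine max_le ?_ ?_ <;> simp only [norm_neg, Real.norm_eq_abs, abs_le] <;> constructor <;>
    nlinarith [sq_nonneg (fderiv ℝ F p (1, 0) - 1), sq_nonneg (fderiv ℝ F p (1, 0) + 1),
      sq_nonneg (fderiv ℝ F p (0, 1) - 1), sq_nonneg (fderiv ℝ F p (0, 1) + 1)]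

lemma fderiv_hamiltonianField (F : ℝ × ℝ → ℝ) (p : ℝ × ℝ) :
    fderiv ℝ F p (hamiltonianField F p) = 0 := by
  rw [clm_prod_apply]
  simp only [hamiltonianField, Prod.smul_fst, Prod.smul_snd, smul_eq_mul]
  ring

lemma hamiltonianField_ne_zero {p : ℝ × ℝ} (hp : fderiv ℝ F p ≠ 0) : hamiltonianField F p ≠ 0 := by
  refine smul_ne_zero (by positivity) ?_
  simpa [Prod.ext_iff, imp_iff_not_or, or_comm] using clm_prod_ne_zero_iff.1 hp

lemma exists_isFlowOf_hamiltonianField (hF : ContDiff ℝ 2 F) :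
    ∃ Φ, IsFlowOf (hamiltonianField F) Φ :=
  exists_isFlowOf_of_contDiff (C := 1) (contDiff_hamiltonianField hF) (norm_hamiltonianField_le F)

lemma IsFlowOf.hamiltonian_eq {Φ : ℝ × ℝ → ℝ → ℝ × ℝ} (hΦ : IsFlowOf (hamiltonianField F) Φ)
    (hF : Differentiable ℝ F) (p : ℝ × ℝ) (t : ℝ) : F (Φ p t) = F p := by
  have hderiv (s : ℝ) : HasDerivAt (F ∘ Φ p) 0 s := by
    rw [← fderiv_hamiltonianField F (Φ p s)]
    exact (hF _).hasFDerivAt.comp_hasDerivAt s (hΦ.hasDerivAt p s)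
  have := is_const_of_deriv_eq_zero (fun s ↦ (hderiv s).differentiableAt)
    (fun s ↦ (hderiv s).deriv) t 0
  rwa [comp_apply, comp_apply, hΦ.map_zero] at this

lemma isOrbitCurve_levelSet {Φ : ℝ × ℝ → ℝ → ℝ × ℝ} (hF : ContDiff ℝ 2 F)
    (hΦ : IsFlowOf (hamiltonianField F) Φ) {a : ℝ} (hreg : ∀ p, F p = a → fderiv ℝ F p ≠ 0) :
    IsOrbitCurve Φ {p | F p = a} := by
  have hΦF := hΦ.hamiltonian_eq (hF.differentiable two_ne_zero)
  refine ⟨fun p hp t ↦ (hΦF p t).trans hp, fun p hp s hs ↦ eventually_nhdsWithin_iff.2 ?_⟩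
  have hΦp : HasStrictDerivAt (Φ p) (hamiltonianField F (Φ p 0)) 0 :=
    hasStrictDerivAt_of_hasDerivAt_of_continuousAt (.of_forall (hΦ.hasDerivAt p))
      ((contDiff_hamiltonianField hF).continuous.comp (hΦ.continuous p)).continuousAt
  have hbox := eventually_mem_image_of_hasStrictFDerivAt (by simp)
    (hF.contDiffAt.hasStrictFDerivAt two_ne_zero) (by rw [hΦ.map_zero]; exact hreg p hp) hΦp
    (hamiltonianField_ne_zero (by rw [hΦ.map_zero]; exact hreg p hp)) (by simp [hΦF]) hs
  rw [hΦ.map_zero] at hbox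
  filter_upwards [hbox] with q hq hqa
  exact hq (hqa.trans hp.symm)

theorem two_mul_card_connectedComponents_levelSet (hF : ContDiff ℝ 2 F) {a X : ℝ} (hX : 0 < X)
    (hreg : ∀ p, F p = a → fderiv ℝ F p ≠ 0)
    (hnc : ∀ p ∈ {p | F p = a}, ¬ IsCompact (connectedComponentIn {p | F p = a} p))
    (hproper : Tendsto (fun p : ℝ × ℝ ↦ |p.1|) (cocompact (ℝ × ℝ) ⊓ 𝓟 {p | F p = a}) atTop)
    (hFy : ∀ p, F p = a → X ≤ |p.1| → fderiv ℝ F p (0, 1) ≠ 0)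
    (hfin : {p : ℝ × ℝ | F p = a ∧ |p.1| = X}.Finite) :
    Finite (ConnectedComponents {p | F p = a}) ∧
      2 * Nat.card (ConnectedComponents {p | F p = a}) =
        {p : ℝ × ℝ | F p = a ∧ |p.1| = X}.ncard := by
  obtain ⟨Φ, hΦ⟩ := exists_isFlowOf_hamiltonianField hF
  have hle (x : ℝ) : X ^ 2 ≤ x ^ 2 ↔ X ≤ |x| := by rw [sq_le_sq, abs_of_pos hX]
  have heq (x : ℝ) : x ^ 2 = X ^ 2 ↔ |x| = X := by rw [sq_eq_sq_iff_abs_eq_abs, abs_of_pos hX]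
  have hne (p : ℝ × ℝ) (hp : F p = a) (hXp : X ^ 2 ≤ p.1 ^ 2) :
      fderiv ℝ (fun p : ℝ × ℝ ↦ p.1 ^ 2) p (hamiltonianField F p) ≠ 0 := by
    rw [hle] at hXp
    have hx : p.1 ≠ 0 := abs_pos.1 (hX.trans_le hXp)
    have hder : HasFDerivAt (fun p : ℝ × ℝ ↦ p.1 ^ 2) _ p :=
      (ContinuousLinearMap.fst ℝ ℝ ℝ).hasFDerivAt.pow 2
    rw [hder.fderiv]
    simpa [hamiltonianField, hx, hFy p hp hXp] using
      (by positivity : 1 + fderiv ℝ F p (1, 0) ^ 2 + fderiv ℝ F p (0, 1) ^ 2 ≠ 0)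
  simpa only [heq, mem_ofPred_eq] using
    (isOrbitCurve_levelSet hF hΦ hreg).two_mul_card_connectedComponents hΦ
      (isClosed_eq hF.continuous continuous_const) hnc (h := fun p ↦ p.1 ^ 2) (c := X ^ 2)
      (by fun_prop) hne
      (by simpa only [comp_def, sq_abs] using (tendsto_pow_atTop two_ne_zero).comp hproper)
      (by simpa only [heq, mem_ofPred_eq] using hfin)

end Hamiltonian

section Jordan

theorem exists_continuous_sign_eq_abs_eq_one {X : Type*} [TopologicalSpace X] {F : X → ℝ}
    (hF : Continuous F) {K : Set X} (hK : IsCompact K) (hFK : ∀ p ∈ K, F p ≠ 0) :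
    ∃ χ : X → ℝ, Continuous χ ∧ (∀ p, |χ p| ≤ 1) ∧ (∀ p ∈ K, |χ p| = 1) ∧
      ∀ p, SignType.sign (χ p) = SignType.sign (F p) := by
  obtain ⟨ε, hε, hεK⟩ : ∃ ε > 0, ∀ p ∈ K, ε ≤ |F p| :=
    hK.exists_forall_le' hF.abs.continuousOn fun p hp ↦ abs_pos.2 (hFK p hp)
  refine ⟨fun p ↦ F p / max ε |F p|, ?_, fun p ↦ ?_, fun p hp ↦ ?_, fun p ↦ ?_⟩
  · exact hF.div (continuous_const.max hF.abs) fun p ↦ (lt_max_of_lt_left hε).ne'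
  · rw [abs_div, abs_of_pos (lt_max_of_lt_left hε : 0 < max ε |F p|)]
    exact div_le_one_of_le₀ (le_max_right _ _) (by positivity)
  · simp only [max_eq_right (hεK p hp)]
    rw [abs_div, abs_abs, div_self (abs_pos.2 (hFK p hp)).ne']
  · simp only
    rw [div_eq_mul_inv, sign_mul, sign_pos (inv_pos.2 (lt_max_of_lt_left hε)), mul_one]

-- `G` lifts the map to `ℝ / 2ℤ` which is `χ` on `U` and `1 = -1` elsewhere.
theorem exists_continuousMap_unfolding {X : Type*} [TopologicalSpace X] [SimplyConnectedSpace X]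
    [LocallyPathConnectedSpace X] {U : Set X} {χ : X → ℝ} (hχ : Continuous χ)
    (hfr : ∀ p ∈ frontier U, |χ p| = 1) {q : X} (hq : q ∈ U) :
    ∃ G : C(X, ℝ), G q = χ q ∧ (∀ p ∈ U, ∃ m : ℤ, G p = χ p + m * 2) ∧
      ∀ p ∉ U, ∃ m : ℤ, G p = 1 + m * 2 := by
  classical
  have coe_eq_iff (x y : ℝ) : (x : AddCircle (2 : ℝ)) = y ↔ ∃ m : ℤ, x = y + m * 2 := by
    rw [QuotientAddGroup.eq_iff_sub_mem, AddSubgroup.mem_zmultiples_iff]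
    simp only [zsmul_eq_mul, eq_comm (b := x - y), sub_eq_iff_eq_add']
  let u : X → AddCircle (2 : ℝ) := fun p ↦ if p ∈ U then (χ p : ℝ) else (1 : ℝ)
  have hu : Continuous u := by
    refine Continuous.if (fun p hp ↦ ?_) ((AddCircle.continuous_mk' 2).comp hχ) continuous_const
    rcases eq_or_eq_neg_of_abs_eq (hfr p hp) with h | h
    · rw [h]
    · exact (coe_eq_iff _ _).2 ⟨-1, by rw [h]; norm_num⟩
  obtain ⟨G, ⟨hGq, hG⟩, -⟩ := (AddCircle.isCoveringMap_coe (2 : ℝ)).existsUnique_continuousMap_lifts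
    ⟨u, hu⟩ q (χ q) (if_pos hq).symm
  have hGu (p : X) : (G p : AddCircle (2 : ℝ)) = u p := congrFun hG p
  refine ⟨G, hGq, fun p hp ↦ ?_, fun p hp ↦ ?_⟩
  · exact (coe_eq_iff _ _).1 ((hGu p).trans (if_pos hp))
  · exact (coe_eq_iff _ _).1 ((hGu p).trans (if_neg hp))

theorem isPreconnected_compl_ball {E : Type*} [NormedAddCommGroup E] [NormedSpace ℝ E]
    (h : 1 < Module.rank ℝ E) {r : ℝ} (hr : 0 < r) : IsPreconnected (Metric.ball (0 : E) r)ᶜ := by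
  have himage : (fun z : ℝ × E ↦ z.1 • z.2) '' (Ici r ×ˢ Metric.sphere 0 1) =
      (Metric.ball (0 : E) r)ᶜ := by
    ext p
    simp only [mem_image, mem_prod, mem_Ici, mem_sphere_zero_iff_norm, mem_compl_iff,
      mem_ball_zero_iff, not_lt]
    constructor
    · rintro ⟨⟨s, v⟩, ⟨hs, hv⟩, rfl⟩
      rwa [norm_smul, hv, mul_one, Real.norm_of_nonneg (hr.le.trans hs)]
    · intro hp
      have hp0 : ‖p‖ ≠ 0 := (hr.trans_le hp).ne'
      refine ⟨(‖p‖, ‖p‖⁻¹ • p), ⟨hp, ?_⟩, smul_inv_smul₀ hp0 p⟩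
      rw [norm_smul, norm_inv, norm_norm, inv_mul_cancel₀ hp0]
  rw [← himage]
  exact (isPreconnected_Ici.prod (isPreconnected_sphere h 0 1)).image _ (by fun_prop)

theorem forall_pos_or_forall_neg_of_isPreconnected {X : Type*} [TopologicalSpace X] {S : Set X}
    (hS : IsPreconnected S) {f : X → ℝ} (hf : ContinuousOn f S) (h0 : ∀ p ∈ S, f p ≠ 0) :
    (∀ p ∈ S, 0 < f p) ∨ ∀ p ∈ S, f p < 0 := by
  by_contra! ⟨⟨p, hp, hfp⟩, q, hq, hfq⟩
  obtain ⟨z, hz, hz0⟩ := hS.intermediate_value hp hq hf ⟨hfp, hfq⟩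
  exact h0 z hz hz0

/-- A bounded open set whose frontier lies in the level set `{F = a}`; in the plane, the interior
of an oval of that level set is the typical example. -/
structure IsLevelDomain {E : Type*} [TopologicalSpace E] [Bornology E] (F : E → ℝ) (a : ℝ)
    (D : Set E) : Prop where
  isOpen : IsOpen D
  isBounded : Bornology.IsBounded D
  frontier_subset : frontier D ⊆ {p | F p = a}

theorem exists_isOpen_isBounded_disjoint_frontier {E : Type*} [MetricSpace E] {Z C : Set E}
    (hC : IsCompact C) (hZC : IsClosed (Z \ C)) :
    ∃ U, IsOpen U ∧ Bornology.IsBounded U ∧ C ⊆ U ∧ Disjoint (frontier U) Z := by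
  rcases C.eq_empty_or_nonempty with rfl | ⟨c, -⟩
  · exact ⟨∅, isOpen_empty, Bornology.isBounded_empty, subset_rfl, by simp⟩
  obtain ⟨R, hR⟩ := hC.isBounded.subset_ball c
  obtain ⟨U, hU, hCU, hUcl⟩ := normal_exists_closure_subset hC.isClosed
    (Metric.isOpen_ball.inter hZC.isOpen_compl) fun p hp ↦ ⟨hR hp, fun h ↦ h.2 hp⟩
  refine ⟨U, hU, ?_, hCU, disjoint_left.2 fun p hp hpZ ↦ ?_⟩
  · exact Metric.isBounded_ball.subset (subset_closure.trans (hUcl.trans inter_subset_left))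
  · rw [hU.frontier_eq] at hp
    exact (hUcl hp.1).2 ⟨hpZ, fun hpC ↦ hp.2 (hCU hpC)⟩

-- Unfolding `F - a` along `C` moves its other zeros away, and off a large ball the unfolded
-- function has constant sign.
theorem exists_continuousMap_sign_eq {E : Type*} [NormedAddCommGroup E] [NormedSpace ℝ E]
    [ProperSpace E] {F : E → ℝ} (hF : Continuous F) {a : ℝ} {C : Set E} (hC : IsCompact C)
    (hclosed : IsClosed ({p | F p = a} \ C)) {q : E} (hq : q ∈ C) :
    ∃ G : C(E, ℝ), (∀ p, G p = 0 → F p = a) ∧ (∃ r > 0, ∀ p ∉ Metric.ball 0 r, G p ≠ 0) ∧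
      ∀ᶠ p in 𝓝 q, SignType.sign (G p) = SignType.sign (F p - a) := by
  obtain ⟨U, hU, hUb, hCU, hUfr⟩ := exists_isOpen_isBounded_disjoint_frontier hC hclosed
  obtain ⟨χ, hχ, hχ_le, hχ_fr, hχ_sign⟩ := exists_continuous_sign_eq_abs_eq_one
    (F := fun p ↦ F p - a) (hF.sub continuous_const)
    (Metric.isCompact_of_isClosed_isBounded isClosed_frontier
      (hUb.closure.subset frontier_subset_closure))
    fun p hp ↦ sub_ne_zero.2 fun h ↦ disjoint_left.1 hUfr hp h
  obtain ⟨G, hGq, hGU, hGU'⟩ := exists_continuousMap_unfolding hχ hχ_fr (hCU hq)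
  have hG_ne {p : E} (hp : p ∉ U) : G p ≠ 0 := by
    obtain ⟨m, hm⟩ := hGU' p hp
    rw [hm]
    norm_cast
    omega
  have int_eq_zero {m : ℤ} (hm : |(m : ℝ) * 2| < 2) : m = 0 := by
    rw [← Int.abs_lt_one_iff]
    rw [abs_mul, abs_two] at hm
    exact_mod_cast (mul_lt_iff_lt_one_left two_pos).1 hm
  refine ⟨G, fun p hp ↦ ?_, ?_, ?_⟩
  · obtain ⟨m, hm⟩ := hGU p (by_contra fun h ↦ hG_ne h hp)
    rw [hp, eq_comm, add_eq_zero_iff_eq_neg] at hm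
    have hm0 : m = 0 := int_eq_zero <| by linarith [hχ_le p, (congrArg abs hm).trans (abs_neg _)]
    rw [hm0, Int.cast_zero, zero_mul, neg_zero] at hm
    rwa [← sub_eq_zero, ← sign_eq_zero_iff, ← hχ_sign, sign_eq_zero_iff]
  · obtain ⟨r, hr⟩ := hUb.subset_ball 0
    exact ⟨max r 1, by positivity, fun p hp ↦ hG_ne fun h ↦
      hp (Metric.ball_subset_ball (le_max_left r 1) (hr h))⟩
  · have hnear : ∀ᶠ p in 𝓝 q, |G p - χ p| < 2 :=
      ((G.continuous.sub hχ).abs.tendsto q).eventually_lt_const (by simp [hGq])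
    filter_upwards [hnear, hU.mem_nhds (hCU hq)] with p hp hpU
    obtain ⟨m, hm⟩ := hGU p hpU
    rw [hm, add_sub_cancel_left] at hp
    rw [hm, int_eq_zero hp, Int.cast_zero, zero_mul, add_zero, hχ_sign]

/-- A weak form of the Jordan curve theorem. -/
theorem exists_isLevelDomain {E : Type*} [NormedAddCommGroup E] [NormedSpace ℝ E]
    [ProperSpace E] (hE : 1 < Module.rank ℝ E) {F : E → ℝ} (hF : Continuous F) {a : ℝ} {C : Set E}
    (hC : IsCompact C) (hclosed : IsClosed ({p | F p = a} \ C))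
    {q : E} (hq : q ∈ C) (hlt : ∃ᶠ p in 𝓝 q, a < F p) (hgt : ∃ᶠ p in 𝓝 q, F p < a) :
    ∃ D, IsLevelDomain F a D ∧ D.Nonempty := by
  obtain ⟨G, hG0, ⟨r, hr, hGr⟩, hGq⟩ := exists_continuousMap_sign_eq hF hC hclosed hq
  have isLevelDomain_preimage {s : Set ℝ} (hs : IsOpen s) (hs0 : frontier s = {0})
      (hsr : ∀ p ∈ (Metric.ball 0 r)ᶜ, G p ∉ s) : IsLevelDomain F a (G ⁻¹' s) := by
    refine ⟨hs.preimage G.continuous,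
      Metric.isBounded_ball.subset fun p hp ↦ by_contra fun h ↦ hsr p h hp, fun p hp ↦ hG0 p ?_⟩
    exact hs0.subset (G.continuous.frontier_preimage_subset s hp)
  rcases forall_pos_or_forall_neg_of_isPreconnected (isPreconnected_compl_ball hE hr)
    G.continuous.continuousOn hGr with hpos | hneg
  · obtain ⟨p, hFp, hGp⟩ := (hgt.and_eventually hGq).exists
    refine ⟨_, isLevelDomain_preimage isOpen_Iio frontier_Iio fun p hp ↦ (hpos p hp).not_gt, p, ?_⟩
    rwa [sign_neg (sub_neg.2 hFp), sign_eq_neg_one_iff] at hGp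
  · obtain ⟨p, hFp, hGp⟩ := (hlt.and_eventually hGq).exists
    refine ⟨_, isLevelDomain_preimage isOpen_Ioi frontier_Ioi fun p hp ↦ (hneg p hp).not_gt, p, ?_⟩
    rwa [sign_pos (sub_pos.2 hFp), sign_eq_one_iff] at hGp

end Jordan

section Ovals

namespace IsLevelDomain

theorem eq_of_mem_closure_of_notMem {X : Type*} [TopologicalSpace X] [Bornology X] {F : X → ℝ}
    {a : ℝ} {D : Set X} (hD : IsLevelDomain F a D) {p : X} (hp : p ∈ closure D) (hpD : p ∉ D) :
    F p = a :=
  hD.frontier_subset (hD.isOpen.frontier_eq ▸ ⟨hp, hpD⟩)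

theorem subset_of_isPreconnected {X : Type*} [TopologicalSpace X] [Bornology X] {F : X → ℝ}
    {a : ℝ} {D : Set X} (hD : IsLevelDomain F a D) {S : Set X} (hS : IsPreconnected S)
    (hSD : (S ∩ D).Nonempty) (hFS : ∀ p ∈ S, F p ≠ a) : S ⊆ D :=
  hS.subset_of_closure_inter_subset hD.isOpen hSD fun p hp ↦
    by_contra fun h ↦ hFS p hp.2 (hD.eq_of_mem_closure_of_notMem hp.1 h)

variable {E : Type*} [NormedAddCommGroup E] [NormedSpace ℝ E] [ProperSpace E] {F : E → ℝ}

theorem exists_fderiv_eq_zero (hF : Continuous F) {a : ℝ} {D : Set E}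
    (hD : IsLevelDomain F a D) (hne : D.Nonempty) : ∃ p ∈ D, fderiv ℝ F p = 0 := by
  have hcl : IsCompact (closure D) := hD.isBounded.isCompact_closure
  have hbd {p : E} (hp : p ∈ closure D \ D) : F p = a := hD.eq_of_mem_closure_of_notMem hp.1 hp.2
  by_cases hconst : ∀ p ∈ D, F p = a
  · obtain ⟨p, hp⟩ := hne
    have hFp : F =ᶠ[𝓝 p] fun _ ↦ a := eventually_of_mem (hD.isOpen.mem_nhds hp) hconst
    exact ⟨p, hp, by rw [hFp.fderiv_eq, fderiv_const_apply]⟩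
  push Not at hconst
  obtain ⟨z, hz, hza⟩ := hconst
  rcases hza.lt_or_gt with hlt | hgt
  · obtain ⟨p, hp, hmin⟩ := hcl.exists_isLocalMin_mem_open subset_closure hF.continuousOn
      (subset_closure hz) (fun w hw ↦ (hbd hw).symm ▸ hlt) hD.isOpen
    exact ⟨p, hp, hmin.fderiv_eq_zero⟩
  · obtain ⟨p, hp, hmax⟩ := hcl.exists_isLocalMax_mem_open subset_closure hF.continuousOn
      (subset_closure hz) (fun w hw ↦ (hbd hw).symm ▸ hgt) hD.isOpen
    exact ⟨p, hp, hmax.fderiv_eq_zero⟩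

theorem exists_fderiv_eq_zero_mem_sdiff (hF : Continuous F) {a₁ a₂ t : ℝ}
    {D₁ D₂ : Set E} (hD₁ : IsLevelDomain F a₁ D₁) (hD₂ : IsLevelDomain F a₂ D₂) (ht₁ : t < a₁)
    (ht₂ : t < a₂) {z : E} (hz : F z = t) (hz₁ : z ∉ closure D₁) (hz₂ : z ∈ D₂) :
    ∃ p ∉ D₁, fderiv ℝ F p = 0 := by
  have hzD : z ∈ D₂ \ closure D₁ := ⟨hz₂, hz₁⟩
  have ht_lt : ∀ w ∈ closure (D₂ \ closure D₁) \ (D₂ \ closure D₁), F z < F w := by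
    intro w ⟨hwcl, hw⟩
    rw [hz]
    by_cases hw₁ : w ∈ closure D₁
    · have hwD₁ : w ∉ D₁ := disjoint_left.1
        ((disjoint_sdiff_left.mono_right subset_closure).closure_left hD₁.isOpen) hwcl
      rwa [hD₁.eq_of_mem_closure_of_notMem hw₁ hwD₁]
    · have hwD₂ : w ∉ D₂ := fun h ↦ hw ⟨h, hw₁⟩
      rwa [hD₂.eq_of_mem_closure_of_notMem (closure_mono sdiff_subset hwcl) hwD₂]
  obtain ⟨p, hp, hmin⟩ := (hD₂.isBounded.subset sdiff_subset).isCompact_closure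
    |>.exists_isLocalMin_mem_open subset_closure hF.continuousOn (subset_closure hzD) ht_lt
      (hD₂.isOpen.sdiff isClosed_closure)
  exact ⟨p, fun h ↦ hp.2 (subset_closure h), hmin.fderiv_eq_zero⟩

end IsLevelDomain

theorem frequently_exists_isLevelDomain_superset {E : Type*} [NormedAddCommGroup E]
    [NormedSpace ℝ E] [ProperSpace E] {F : E → ℝ} (hF : Continuous F) {p : E}
    (hp : ∃ᶠ a in atTop, ∃ D, IsLevelDomain F a D ∧ p ∈ D) {B : Set E}
    (hB : Bornology.IsBounded B) : ∃ᶠ a in atTop, ∃ D, IsLevelDomain F a D ∧ B ⊆ D := by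
  obtain ⟨R, hR⟩ := (hB.insert p).subset_closedBall p
  obtain ⟨M, hM⟩ := ((isCompact_closedBall p R).image hF).bddAbove
  refine (hp.and_eventually (eventually_gt_atTop M)).mono fun a ⟨⟨D, hD, hpD⟩, ha⟩ ↦
    ⟨D, hD, ((subset_insert p B).trans hR).trans <| hD.subset_of_isPreconnected
      (convex_closedBall p R).isPreconnected ⟨p, hR (mem_insert p B), hpD⟩ fun q hq ↦ ?_⟩
  exact ((hM (mem_image_of_mem F hq)).trans_lt ha).ne

theorem not_frequently_exists_isLevelDomain {E : Type*} [NormedAddCommGroup E]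
    [NormedSpace ℝ E] [ProperSpace E] {F : E → ℝ} (hF : Continuous F)
    (hfin : {p | fderiv ℝ F p = 0}.Finite) {t : ℝ} (ht : ¬ IsCompact {p | F p = t}) (p : E) :
    ¬ ∃ᶠ a in atTop, ∃ D, IsLevelDomain F a D ∧ p ∈ D := by
  intro hp
  obtain ⟨a₁, ⟨D₁, hD₁, hcrit⟩, hta₁⟩ := ((frequently_exists_isLevelDomain_superset hF hp
    hfin.isBounded).and_eventually (eventually_gt_atTop t)).exists
  obtain ⟨z, hz, hzD₁⟩ : ∃ z, F z = t ∧ z ∉ closure D₁ := by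
    by_contra! h
    exact ht (hD₁.isBounded.isCompact_closure.of_isClosed_subset
      (isClosed_eq hF continuous_const) h)
  obtain ⟨a₂, ⟨D₂, hD₂, hzD₂⟩, hta₂⟩ := ((frequently_exists_isLevelDomain_superset hF hp
    (Bornology.isBounded_singleton (x := z))).and_eventually (eventually_gt_atTop t)).exists
  obtain ⟨q, hqD₁, hq⟩ := hD₁.exists_fderiv_eq_zero_mem_sdiff hF hD₂ hta₁ hta₂ hz hzD₁
    (hzD₂ rfl)
  exact hqD₁ (hcrit hq)

theorem isClosed_levelSet_diff_connectedComponentIn {F : ℝ × ℝ → ℝ} (hF : ContDiff ℝ 2 F) {a : ℝ}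
    (hreg : ∀ p, F p = a → fderiv ℝ F p ≠ 0) {p : ℝ × ℝ} (hp : F p = a) :
    IsClosed ({p | F p = a} \ connectedComponentIn {p | F p = a} p) := by
  obtain ⟨Φ, hΦ⟩ := exists_isFlowOf_hamiltonianField hF
  have hZ := isOrbitCurve_levelSet hF hΦ hreg
  rw [hZ.connectedComponentIn_eq hΦ hp]
  have hclosed : IsClosed {p | F p = a} := isClosed_eq hF.continuous continuous_const
  have := hclosed.isClosedMap_subtype_val _ (hZ.isClopen_preimage_range hΦ p).compl.1
  rwa [← preimage_compl, Subtype.image_preimage_coe] at this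

theorem exists_isLevelDomain_of_isCompact_connectedComponentIn {F : ℝ × ℝ → ℝ}
    (hF : ContDiff ℝ 2 F) {a : ℝ} (hreg : ∀ p, F p = a → fderiv ℝ F p ≠ 0) {p : ℝ × ℝ}
    (hp : F p = a) (hcpt : IsCompact (connectedComponentIn {p | F p = a} p)) :
    ∃ D, IsLevelDomain F a D ∧ D.Nonempty := by
  refine exists_isLevelDomain (by simp [one_add_one_eq_two]) hF.continuous hcpt
    (isClosed_levelSet_diff_connectedComponentIn hF hreg hp) (mem_connectedComponentIn hp) ?_ ?_
  · intro h
    exact hreg p hp (IsLocalMax.fderiv_eq_zero (h.mono fun q hq ↦ hp ▸ not_lt.1 hq))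
  · intro h
    exact hreg p hp (IsLocalMin.fderiv_eq_zero (h.mono fun q hq ↦ hp ▸ not_lt.1 hq))

theorem eventually_not_isCompact_connectedComponentIn {F : ℝ × ℝ → ℝ} (hF : ContDiff ℝ 2 F)
    (hfin : {p | fderiv ℝ F p = 0}.Finite) {t : ℝ} (ht : ¬ IsCompact {p | F p = t}) :
    ∀ᶠ a in atTop, ∀ p, F p = a → ¬ IsCompact (connectedComponentIn {p | F p = a} p) := by
  obtain ⟨M, hM⟩ := (hfin.image F).bddAbove
  have no_domain : ∀ᶠ a in atTop, ∀ p ∈ {p | fderiv ℝ F p = 0},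
      ¬ ∃ D, IsLevelDomain F a D ∧ p ∈ D := (eventually_all_finite hfin).2 fun p _ ↦
    not_frequently.1 (not_frequently_exists_isLevelDomain hF.continuous hfin ht p)
  filter_upwards [no_domain, eventually_gt_atTop M] with a hno haM p hp hcpt
  obtain ⟨D, hD, hne⟩ := exists_isLevelDomain_of_isCompact_connectedComponentIn hF
    (fun q hq hcrit ↦ ((hM (mem_image_of_mem F hcrit)).trans_lt haM).ne hq) hp hcpt
  obtain ⟨q, hqD, hq⟩ := hD.exists_fderiv_eq_zero hF.continuous hne
  exact hno q hq ⟨D, hD, hqD⟩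

theorem connectedComponentIn_abs_eq {X : Type*} [TopologicalSpace X] {F : X → ℝ}
    (hF : Continuous F) {a : ℝ} (ha : 0 < a) {p : X} (hp : F p = a) :
    connectedComponentIn {p | |F p| = a} p = connectedComponentIn {p | F p = a} p := by
  have hsub : {p | F p = a} ⊆ {p | |F p| = a} := fun q hq ↦ by
    rw [mem_ofPred_eq, show F q = a from hq, abs_of_pos ha]
  have hpC : p ∈ connectedComponentIn {p | |F p| = a} p := mem_connectedComponentIn (hsub hp)
  have habs {q : X} (hq : q ∈ connectedComponentIn {p | |F p| = a} p) : |F q| = a :=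
    connectedComponentIn_subset {p | |F p| = a} p hq
  refine subset_antisymm ?_ (connectedComponentIn_mono p hsub)
  refine isPreconnected_connectedComponentIn.subset_connectedComponentIn hpC fun q hq ↦ ?_
  rcases forall_pos_or_forall_neg_of_isPreconnected isPreconnected_connectedComponentIn
    hF.continuousOn fun q hq ↦ abs_pos.1 ((habs hq).symm ▸ ha) with hpos | hneg
  · exact (abs_of_pos (hpos q hq)).symm.trans (habs hq)
  · exact absurd (hneg p hpC) (hp ▸ ha).not_gt

theorem eventually_not_isCompact_connectedComponentIn_abs {F : ℝ × ℝ → ℝ} (hF : ContDiff ℝ 2 F)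
    (hfin : {p | fderiv ℝ F p = 0}.Finite) {t : ℝ} (ht : ¬ IsCompact {p | F p = t}) :
    ∀ᶠ a in atTop, ∀ p, |F p| = a → ¬ IsCompact (connectedComponentIn {p | |F p| = a} p) := by
  have hneg := eventually_not_isCompact_connectedComponentIn (F := -F) (t := -t) hF.neg
    (by simpa only [fderiv_neg, neg_eq_zero] using hfin)
    (by simpa only [Pi.neg_apply, neg_inj] using ht)
  filter_upwards [eventually_gt_atTop 0,
    eventually_not_isCompact_connectedComponentIn hF hfin ht, hneg] with a ha hpos hneg p hp
  rcases eq_or_eq_neg_of_abs_eq hp with h | h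
  · rw [connectedComponentIn_abs_eq hF.continuous ha h]
    exact hpos p h
  · have h' : (-F) p = a := neg_eq_iff_eq_neg.2 h
    have := connectedComponentIn_abs_eq hF.continuous.neg ha h'
    simp only [Pi.neg_apply, abs_neg] at this
    rw [this]
    exact hneg p h'

end Ovals

section Resultants

open scoped Polynomial

variable {R S : Type*} [CommRing R] [CommRing S] {f g : R[X]}

lemma resultant_eq_of_natDegree_le (hf : f.Monic) {n : ℕ} (hn : g.natDegree ≤ n) :
    f.resultant g f.natDegree n = f.resultant g := by
  obtain ⟨k, rfl⟩ := Nat.exists_eq_add_of_le hn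
  rw [Polynomial.resultant_add_right_deg _ _ _ _ _ le_rfl, hf.coeff_natDegree, one_pow, one_mul]

lemma resultant_map_of_monic [Nontrivial S] (φ : R →+* S) (hf : f.Monic) (g : R[X]) :
    (f.map φ).resultant (g.map φ) = φ (f.resultant g) := by
  rw [← resultant_eq_of_natDegree_le (hf.map φ) Polynomial.natDegree_map_le, hf.natDegree_map,
    Polynomial.resultant_map_map]

lemma resultant_mul_right_of_monic (hf : f.Monic) (g h : R[X]) :
    f.resultant (g * h) = f.resultant g * f.resultant h := by
  rw [← Polynomial.resultant_mul_right _ _ _ _ le_rfl,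
    resultant_eq_of_natDegree_le hf Polynomial.natDegree_mul_le]

lemma resultant_add_self_mul_of_monic (hf : f.Monic) (g h : R[X]) :
    f.resultant (g + f * h) = f.resultant g := by
  let n := max g.natDegree (f.natDegree + h.natDegree)
  have hsum : (g + f * h).natDegree ≤ n :=
    (Polynomial.natDegree_add_le _ _).trans (max_le_max le_rfl Polynomial.natDegree_mul_le)
  rw [← resultant_eq_of_natDegree_le hf hsum,
    Polynomial.resultant_add_mul_right _ _ _ _ _ ((add_comm _ _).trans_le (le_max_right _ _))
      le_rfl, resultant_eq_of_natDegree_le hf (le_max_left _ _)]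

theorem resultant_derivative_mul (hf : f.Monic) (hg : g.Monic) :
    (f * g).resultant (f * g).derivative = (-1) ^ (f.natDegree * g.natDegree) *
      f.resultant f.derivative * g.resultant g.derivative * f.resultant g ^ 2 := by
  have hleft : f.resultant (f * g).derivative = f.resultant f.derivative * f.resultant g := by
    rw [Polynomial.derivative_mul, resultant_add_self_mul_of_monic hf,
      resultant_mul_right_of_monic hf]
  have hright : g.resultant (f * g).derivative = g.resultant g.derivative * g.resultant f := by
    rw [mul_comm f g, Polynomial.derivative_mul, resultant_add_self_mul_of_monic hg,
      resultant_mul_right_of_monic hg]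
  nontriviality R
  rw [hf.natDegree_mul hg, Polynomial.resultant_mul_left _ _ _ _ le_rfl,
    resultant_eq_of_natDegree_le hf le_rfl, resultant_eq_of_natDegree_le hg le_rfl, hleft, hright,
    g.resultant_comm f, mul_comm g.natDegree]
  ring

lemma resultant_X_sub_C_of_monic (r : R) (g : R[X]) :
    (Polynomial.X - Polynomial.C r).resultant g = g.eval r := by
  nontriviality R
  rw [Polynomial.natDegree_X_sub_C, Polynomial.resultant_X_sub_C_left _ _ _ le_rfl]

/-- The monic real quadratic polynomial with roots `a ± b i`. -/
noncomputable def complexPairQuadratic (a b : ℝ) : ℝ[X] :=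
  (Polynomial.X - Polynomial.C a) ^ 2 + Polynomial.C (b ^ 2)

section RealPolynomials

variable {a b r : ℝ} {p q : ℝ[X]}

lemma natDegree_complexPairQuadratic (a b : ℝ) : (complexPairQuadratic a b).natDegree = 2 := by
  rw [complexPairQuadratic, Polynomial.natDegree_add_C, Polynomial.natDegree_pow,
    Polynomial.natDegree_X_sub_C]

lemma monic_complexPairQuadratic (a b : ℝ) : (complexPairQuadratic a b).Monic :=
  ((Polynomial.monic_X_sub_C a).pow 2).add_of_left <|
    (Polynomial.degree_C_le).trans_lt <| by simp

lemma roots_complexPairQuadratic (a : ℝ) (hb : b ≠ 0) : (complexPairQuadratic a b).roots = 0 := by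
  refine Multiset.eq_zero_of_forall_notMem fun r hr ↦ ?_
  have hroot : (r - a) ^ 2 + b ^ 2 = 0 := by
    simpa [complexPairQuadratic, Polynomial.IsRoot] using Polynomial.isRoot_of_mem_roots hr
  have : 0 < b ^ 2 := by positivity
  nlinarith [sq_nonneg (r - a)]

lemma resultant_derivative_complexPairQuadratic_pos (a : ℝ) (hb : b ≠ 0) :
    0 < (complexPairQuadratic a b).resultant (complexPairQuadratic a b).derivative := by
  have hderiv : (complexPairQuadratic a b).derivative =
      Polynomial.C 2 * (Polynomial.X - Polynomial.C a) := by
    simp [complexPairQuadratic, Polynomial.derivative_pow]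
  rw [hderiv, resultant_mul_right_of_monic (monic_complexPairQuadratic a b),
    Polynomial.natDegree_C, Polynomial.natDegree_X_sub_C, Polynomial.resultant_C_zero_right,
    Polynomial.resultant_X_sub_C_right _ _ _ le_rfl, natDegree_complexPairQuadratic]
  simp only [complexPairQuadratic, Polynomial.eval_add, Polynomial.eval_pow, Polynomial.eval_sub,
    Polynomial.eval_X, Polynomial.eval_C, sub_self]
  positivity

lemma exists_isRoot_or_complexPairQuadratic_dvd (hp : 0 < p.degree) :
    (∃ r, p.IsRoot r) ∨ ∃ a b, b ≠ 0 ∧ complexPairQuadratic a b ∣ p := by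
  obtain ⟨z, hz⟩ : ∃ z : ℂ, Polynomial.aeval z p = 0 :=
    IsAlgClosed.exists_aeval_eq_zero _ p hp.ne'
  by_cases hreal : z.im = 0
  · refine Or.inl ⟨z.re, ?_⟩
    rw [← Complex.re_add_im z, hreal, Complex.ofReal_zero, zero_mul, add_zero,
      ← Complex.coe_algebraMap, Polynomial.aeval_algebraMap_apply] at hz
    simpa using hz
  · refine Or.inr ⟨z.re, z.im, hreal, ?_⟩
    convert Polynomial.quadratic_dvd_of_aeval_eq_zero_im_ne_zero p hz hreal using 1
    rw [complexPairQuadratic, Complex.sq_norm, Complex.normSq_apply]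
    simp only [map_add, map_mul, map_pow, Polynomial.C_ofNat]
    ring

theorem monic_real_induction {motive : ℝ[X] → Prop} (one : motive 1)
    (linear : ∀ r q, q.Monic → motive q → motive ((Polynomial.X - Polynomial.C r) * q))
    (quadratic : ∀ a b q, b ≠ 0 → q.Monic → motive q → motive (complexPairQuadratic a b * q))
    (hp : p.Monic) : motive p := by
  induction hd : p.natDegree using Nat.strong_induction_on generalizing p with
  | _ d ih =>
    subst hd
    obtain hdeg | hdeg := Nat.eq_zero_or_pos p.natDegree
    · rwa [hp.natDegree_eq_zero.1 hdeg]
    obtain ⟨r, hr⟩ | ⟨a, b, hb, q, rfl⟩ :=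
      exists_isRoot_or_complexPairQuadratic_dvd (Polynomial.natDegree_pos_iff_degree_pos.1 hdeg)
    · obtain ⟨q, rfl⟩ := Polynomial.dvd_iff_isRoot.2 hr
      have hq := (Polynomial.monic_X_sub_C r).of_mul_monic_left hp
      refine linear r q hq (ih _ ?_ hq rfl)
      rw [(Polynomial.monic_X_sub_C r).natDegree_mul hq, Polynomial.natDegree_X_sub_C]
      lia
    · have hq := (monic_complexPairQuadratic a b).of_mul_monic_left hp
      refine quadratic a b q hb hq (ih _ ?_ hq rfl)
      rw [(monic_complexPairQuadratic a b).natDegree_mul hq, natDegree_complexPairQuadratic]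
      lia

lemma roots_X_sub_C_mul (r : ℝ) (hq : q.Monic) :
    ((Polynomial.X - Polynomial.C r) * q).roots = r ::ₘ q.roots := by
  rw [Polynomial.roots_mul ((Polynomial.monic_X_sub_C r).mul hq).ne_zero,
    Polynomial.roots_X_sub_C, Multiset.singleton_add]

lemma roots_complexPairQuadratic_mul (a : ℝ) (hb : b ≠ 0) (hq : q.Monic) :
    (complexPairQuadratic a b * q).roots = q.roots := by
  rw [Polynomial.roots_mul ((monic_complexPairQuadratic a b).mul hq).ne_zero,
    roots_complexPairQuadratic a hb, zero_add]

theorem card_roots_modEq_natDegree (hp : p.Monic) :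
    p.roots.card ≡ p.natDegree [MOD 2] := by
  refine monic_real_induction (motive := fun p ↦ p.roots.card ≡ p.natDegree [MOD 2])
    (by simp [Nat.ModEq]) (fun r q hq ih ↦ ?_) (fun a b q hb hq ih ↦ ?_) hp
  · rw [roots_X_sub_C_mul r hq, Multiset.card_cons, (Polynomial.monic_X_sub_C r).natDegree_mul hq,
      Polynomial.natDegree_X_sub_C, add_comm 1]
    exact ih.add_right 1
  · rw [roots_complexPairQuadratic_mul a hb hq, (monic_complexPairQuadratic a b).natDegree_mul hq,
      natDegree_complexPairQuadratic]
    exact ih.trans (by simp [Nat.ModEq])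

lemma neg_one_pow_succ_half (n : ℕ) : (-1 : ℝ) ^ ((n + 1) / 2) = (-1) ^ (n / 2) * (-1) ^ n := by
  rw [← pow_add, neg_one_pow_congr]
  grind

theorem neg_one_pow_card_roots_half_mul_resultant_derivative_pos (hp : p.Monic)
    (hres : p.resultant p.derivative ≠ 0) :
    0 < (-1) ^ (p.roots.card / 2) * p.resultant p.derivative := by
  refine monic_real_induction (motive := fun p ↦ p.resultant p.derivative ≠ 0 →
    0 < (-1) ^ (p.roots.card / 2) * p.resultant p.derivative)
    (by simp) (fun r q hq ih hres ↦ ?_) (fun a b q hb hq ih hres ↦ ?_) hp hres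
  · have hparity : (-1 : ℝ) ^ q.natDegree = (-1) ^ q.roots.card :=
      neg_one_pow_congr (Nat.even_iff.trans <| (card_roots_modEq_natDegree hq ▸ Nat.even_iff).symm)
    have hfactor := resultant_derivative_mul (Polynomial.monic_X_sub_C r) hq
    rw [Polynomial.derivative_X_sub_C, resultant_X_sub_C_of_monic, resultant_X_sub_C_of_monic,
      Polynomial.eval_one, mul_one, Polynomial.natDegree_X_sub_C, one_mul, hparity] at hfactor
    rw [hfactor, mul_ne_zero_iff, mul_ne_zero_iff, pow_ne_zero_iff two_ne_zero] at hres
    obtain ⟨⟨-, hq0⟩, hr0⟩ := hres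
    calc (0 : ℝ) < (-1) ^ (q.roots.card / 2) * q.resultant q.derivative *
          ((-1) ^ q.roots.card * q.eval r) ^ 2 := mul_pos (ih hq0) (by positivity)
      _ = _ := by
        rw [roots_X_sub_C_mul r hq, Multiset.card_cons, neg_one_pow_succ_half, hfactor]
        ring
  · have hsign : (-1 : ℝ) ^ ((complexPairQuadratic a b).natDegree * q.natDegree) = 1 := by
      rw [natDegree_complexPairQuadratic, pow_mul, neg_one_sq, one_pow]
    have hfactor := resultant_derivative_mul (monic_complexPairQuadratic a b) hq
    rw [hsign, one_mul] at hfactor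
    rw [hfactor, mul_ne_zero_iff, mul_ne_zero_iff, pow_ne_zero_iff two_ne_zero] at hres
    obtain ⟨⟨-, hq0⟩, hcross⟩ := hres
    rw [roots_complexPairQuadratic_mul a hb hq, hfactor, ← mul_assoc, mul_left_comm]
    exact mul_pos (mul_pos (resultant_derivative_complexPairQuadratic_pos a hb) (ih hq0))
      (by positivity)

end RealPolynomials

end Resultants

section EvenlyCovered

variable {E B : Type*} [TopologicalSpace E] [TopologicalSpace B] {f : E → B} {S : Set B}

lemma eventually_ncard_preimage_eq {b : B} {I : Type*} [TopologicalSpace I]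
    (hf : IsEvenlyCovered f b I) : ∀ᶠ c in 𝓝 b, (f ⁻¹' {c}).ncard = (f ⁻¹' {b}).ncard := by
  obtain ⟨hI, U, hbU, hU, hfU, H, hH⟩ := hf
  have hcard : ∀ c ∈ U, Nat.card I = (f ⁻¹' {c}).ncard := fun c hc ↦
    Nat.card_congr (IsEvenlyCovered.fiberHomeomorph ⟨hI, U, hc, hU, hfU, H, hH⟩).toEquiv
  filter_upwards [hU.mem_nhds hbU] with c hc
  rw [← hcard c hc, hcard b hbU]

theorem ncard_preimage_eq_of_isCoveringMapOn (hf : IsCoveringMapOn f S) (hS : IsPreconnected S)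
    {a b : B} (ha : a ∈ S) (hb : b ∈ S) : (f ⁻¹' {a}).ncard = (f ⁻¹' {b}).ncard :=
  hS.constant (f := fun c ↦ (f ⁻¹' {c}).ncard) (fun c hc ↦ (continuousAt_const.congr
    ((eventually_ncard_preimage_eq (hf c hc)).mono fun _ ↦ Eq.symm)).continuousWithinAt) ha hb

end EvenlyCovered

lemma ncard_biUnion_finset {ι α : Type*} {T : Finset ι} {f : ι → Set α}
    (hdisj : (T : Set ι).PairwiseDisjoint f) (hfin : ∀ i ∈ T, (f i).Finite) :
    (⋃ i ∈ T, f i).ncard = ∑ i ∈ T, (f i).ncard := by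
  have : ∀ i : (T : Set ι), Finite (f i) := fun i ↦ hfin i i.2
  rw [← Nat.card_coe_set_eq, ← Finset.sum_coe_sort T]
  exact (Nat.card_congr (biUnionEqSigmaOfDisjoint hdisj)).trans Nat.card_sigma

section BivariatePolynomials

open scoped Polynomial Polynomial.Bivariate

variable {P : ℝ[X][Y]} {x t : ℝ}

/-- The polynomial `P(x, Y) - t` in one variable, whose roots are the points of the level
set `P = t` on the vertical line over `x`. -/
noncomputable def fiberPoly (P : ℝ[X][Y]) (x t : ℝ) : ℝ[X] :=
  P.map (Polynomial.evalRingHom x) - Polynomial.C t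

lemma eval_fiberPoly (P : ℝ[X][Y]) (x t y : ℝ) :
    (fiberPoly P x t).eval y = P.evalEval x y - t := by
  rw [fiberPoly, Polynomial.eval_sub, Polynomial.eval_C, Polynomial.map_evalRingHom_eval]

lemma derivative_fiberPoly (P : ℝ[X][Y]) (x t : ℝ) :
    (fiberPoly P x t).derivative = (P.map (Polynomial.evalRingHom x)).derivative := by
  rw [fiberPoly, Polynomial.derivative_sub, Polynomial.derivative_C, sub_zero]

lemma natDegree_fiberPoly (hP : P.Monic) (x t : ℝ) :
    (fiberPoly P x t).natDegree = P.natDegree := by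
  rw [fiberPoly, Polynomial.natDegree_sub_C, hP.natDegree_map]

lemma monic_sub_C {R : Type*} [CommRing R] {p : R[X]} (hp : p.Monic) (hd : 0 < p.natDegree)
    (r : R) : (p - Polynomial.C r).Monic :=
  hp.sub_of_left (Polynomial.degree_C_le.trans_lt (Polynomial.natDegree_pos_iff_degree_pos.1 hd))

lemma monic_fiberPoly (hP : P.Monic) (hd : 0 < P.natDegree) (x t : ℝ) :
    (fiberPoly P x t).Monic :=
  monic_sub_C (hP.map _) (by rwa [hP.natDegree_map]) t

lemma derivative_eval_ne_zero_of_separable (hsep : (fiberPoly P x t).Separable) {y : ℝ}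
    (hy : P.evalEval x y = t) : (P.map (Polynomial.evalRingHom x)).derivative.eval y ≠ 0 := by
  rw [← derivative_fiberPoly P x t]
  exact hsep.eval₂_derivative_ne_zero (RingHom.id ℝ)
    (by rw [← Polynomial.eval, eval_fiberPoly, hy, sub_self])

lemma setOf_evalEval_eq (h : fiberPoly P x t ≠ 0) :
    {y | P.evalEval x y = t} = ((fiberPoly P x t).roots.toFinset : Set ℝ) := by
  ext y
  simp only [mem_ofPred_eq, Finset.mem_coe, Multiset.mem_toFinset, Polynomial.mem_roots h,
    Polynomial.IsRoot.def, eval_fiberPoly, sub_eq_zero]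

lemma ncard_setOf_evalEval_eq (hsep : (fiberPoly P x t).Separable) :
    {y | P.evalEval x y = t}.ncard = (fiberPoly P x t).roots.card := by
  rw [setOf_evalEval_eq hsep.ne_zero, ncard_coe_finset,
    Multiset.toFinset_card_of_nodup (Polynomial.nodup_roots hsep)]

theorem ncard_setOf_evalEval_eq_of_isPreconnected {S : Set ℝ} (hS : IsPreconnected S)
    (hsep : ∀ t ∈ S, (fiberPoly P x t).Separable) {a b : ℝ} (ha : a ∈ S) (hb : b ∈ S) :
    {y | P.evalEval x y = a}.ncard = {y | P.evalEval x y = b}.ncard := by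
  have hfiber : ∀ t, {y | P.evalEval x y = t} =
      (P.map (Polynomial.evalRingHom x)).eval ⁻¹' {t} := fun t ↦ by
    ext y
    rw [mem_preimage, Polynomial.map_evalRingHom_eval, mem_singleton_iff, mem_ofPred_eq]
  rw [hfiber, hfiber]
  refine ncard_preimage_eq_of_isCoveringMapOn
    ((Polynomial.isCoveringMapOn_eval _).mono fun t ht ↦ ?_) hS ha hb
  rintro ⟨y, hy, rfl⟩
  simp only [Polynomial.map_evalRingHom_eval] at ht
  exact derivative_eval_ne_zero_of_separable (hsep _ ht) rfl hy

/-- The resultant of `P(x, Y) - t` and its `Y`-derivative, as a polynomial in `x` over `ℝ[t]`: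
the inner variable is the level `t` and the outer one is the abscissa `x`. -/
noncomputable def fiberResultant (P : ℝ[X][Y]) : ℝ[X][Y] :=
  (P.map (Polynomial.mapRingHom Polynomial.C) -
      Polynomial.C (Polynomial.C Polynomial.X)).resultant
    (P.map (Polynomial.mapRingHom Polynomial.C) -
      Polynomial.C (Polynomial.C Polynomial.X)).derivative

theorem evalEval_fiberResultant (hP : P.Monic) (hd : 0 < P.natDegree) (x t : ℝ) :
    (fiberResultant P).evalEval t x =
      (fiberPoly P x t).resultant (fiberPoly P x t).derivative := by
  have hmap : (P.map (Polynomial.mapRingHom Polynomial.C) -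
      Polynomial.C (Polynomial.C Polynomial.X)).map (Polynomial.evalEvalRingHom t x) =
      fiberPoly P x t := by
    rw [fiberPoly, Polynomial.map_sub, Polynomial.map_map, Polynomial.map_C]
    congr 2
    · ext <;> simp
    · simp
  rw [← hmap, Polynomial.derivative_map, resultant_map_of_monic _
    (monic_sub_C (hP.map _) (by rwa [hP.natDegree_map]) _), Polynomial.coe_evalEvalRingHom,
    fiberResultant]

theorem separable_fiberPoly_iff (hP : P.Monic) (hd : 0 < P.natDegree) :
    (fiberPoly P x t).Separable ↔ (fiberResultant P).evalEval t x ≠ 0 := by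
  rw [Polynomial.separable_def, ← Polynomial.isUnit_resultant_iff_isCoprime
    (monic_fiberPoly hP hd x t), isUnit_iff_ne_zero, evalEval_fiberResultant hP hd]

lemma exists_separable_sub_C {p : ℝ[X]} (hp : p.derivative ≠ 0) :
    ∃ t, (p - Polynomial.C t).Separable := by
  obtain ⟨t, ht⟩ := ((p.derivative.rootSet_finite ℂ).image
    fun z ↦ (Polynomial.aeval z p).re).exists_notMem
  refine ⟨t, (Polynomial.isCoprime_iff_aeval_ne_zero_of_isAlgClosed ℝ ℂ _ _).2 fun z ↦ ?_⟩
  rw [Polynomial.derivative_sub, Polynomial.derivative_C, sub_zero, or_iff_not_imp_right, not_not]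
  intro hz hpz
  refine ht ⟨z, (Polynomial.mem_rootSet_of_ne hp).2 hz, ?_⟩
  rw [map_sub, Polynomial.aeval_C, sub_eq_zero] at hpz
  simp only [hpz, Complex.coe_algebraMap, Complex.ofReal_re]

theorem fiberResultant_ne_zero (hP : P.Monic) (hd : 0 < P.natDegree) : fiberResultant P ≠ 0 := by
  have hderiv : (P.map (Polynomial.evalRingHom 0)).derivative ≠ 0 := fun h ↦ by
    rw [← hP.natDegree_map (Polynomial.evalRingHom 0)] at hd
    exact hd.ne' (Polynomial.derivative_eq_zero.1 h)
  obtain ⟨t, ht⟩ := exists_separable_sub_C hderiv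
  intro h0
  refine (separable_fiberPoly_iff hP hd).1 ht ?_
  rw [h0, Polynomial.evalEval_zero]

lemma contDiff_evalEval (P : ℝ[X][Y]) : ContDiff ℝ 2 fun p : ℝ × ℝ ↦ P.evalEval p.1 p.2 := by
  induction P using Polynomial.induction_on' with
  | add p q hp hq => simpa only [Polynomial.evalEval_add] using hp.add hq
  | monomial n a =>
    simp only [← Polynomial.C_mul_X_pow_eq_monomial, Polynomial.evalEval_mul,
      Polynomial.evalEval_C, Polynomial.evalEval_pow, Polynomial.evalEval_X]
    exact ((Polynomial.contDiff_aeval a 2).comp contDiff_fst).mul (contDiff_snd.pow _)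

lemma fderiv_evalEval_snd (P : ℝ[X][Y]) (p : ℝ × ℝ) :
    fderiv ℝ (fun p : ℝ × ℝ ↦ P.evalEval p.1 p.2) p (0, 1) =
      (P.map (Polynomial.evalRingHom p.1)).derivative.eval p.2 := by
  have hF : HasFDerivAt (fun p : ℝ × ℝ ↦ P.evalEval p.1 p.2) _ (p.1, p.2) :=
    ((contDiff_evalEval P).differentiable two_ne_zero p).hasFDerivAt
  have hline : HasDerivAt (fun y : ℝ ↦ (p.1, y)) (0, 1) p.2 :=
    (hasDerivAt_const p.2 p.1).prodMk (hasDerivAt_id p.2)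
  refine (hF.comp_hasDerivAt p.2 hline).unique ?_
  simpa only [Function.comp_def, Polynomial.map_evalRingHom_eval] using
    (P.map (Polynomial.evalRingHom p.1)).hasDerivAt p.2

lemma evalEval_eq_evalEval_reverse (P : ℝ[X][Y]) (x : ℝ) {y : ℝ} (hy : y ≠ 0) :
    P.evalEval x y = P.reverse.evalEval x y⁻¹ * y ^ P.natDegree := by
  let _ := invertibleOfNonzero hy
  have hreverse := Polynomial.eval₂_reverse_mul_pow (Polynomial.evalRingHom x) y P
  rw [invOf_eq_inv, Polynomial.eval₂_evalRingHom] at hreverse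
  exact hreverse.symm

lemma evalEval_reverse_zero (P : ℝ[X][Y]) (x : ℝ) :
    P.reverse.evalEval x 0 = P.leadingCoeff.eval x := by
  rw [Polynomial.evalEval, Polynomial.C_0, ← Polynomial.coeff_zero_eq_eval_zero,
    Polynomial.coeff_zero_reverse]

theorem eventually_evalEval_mul_leadingCoeff_pos {K : Set ℝ} (hK : IsCompact K)
    (hlead : ∀ x ∈ K, P.leadingCoeff.eval x ≠ 0) :
    ∀ᶠ y in Bornology.cobounded ℝ, ∀ x ∈ K,
      0 < P.evalEval x y * y ^ P.natDegree * P.leadingCoeff.eval x := by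
  have hcont : Continuous fun q : ℝ × ℝ ↦
      P.reverse.evalEval q.2 q.1 * P.leadingCoeff.eval q.2 :=
    ((contDiff_evalEval P.reverse).continuous.comp continuous_swap).mul
      (P.leadingCoeff.continuous.comp continuous_snd)
  have hnear : ∀ᶠ u in 𝓝 (0 : ℝ), ∀ x ∈ K,
      0 < P.reverse.evalEval x u * P.leadingCoeff.eval x := by
    refine hK.eventually_forall_of_forall_eventually fun x hx ↦
      hcont.continuousAt.eventually_const_lt ?_
    simp only [evalEval_reverse_zero]
    exact mul_self_pos.2 (hlead x hx)
  filter_upwards [Filter.tendsto_inv₀_cobounded.eventually hnear,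
    Bornology.eventually_ne_cobounded 0] with y hy hy0 x hx
  calc 0 < P.reverse.evalEval x y⁻¹ * P.leadingCoeff.eval x * (y ^ P.natDegree) ^ 2 :=
        mul_pos (hy x hx) (by positivity)
    _ = _ := by rw [evalEval_eq_evalEval_reverse P x hy0]; ring

lemma eventually_evalEval_ne (hP : P.Monic) (hd : 0 < P.natDegree) {K : Set ℝ}
    (hK : IsCompact K) (t : ℝ) :
    ∀ᶠ y in Bornology.cobounded ℝ, ∀ x ∈ K, P.evalEval x y ≠ t := by
  have hmonic := monic_sub_C hP hd (Polynomial.C t)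
  filter_upwards [eventually_evalEval_mul_leadingCoeff_pos hK fun x _ ↦ by
    rw [hmonic.leadingCoeff, Polynomial.eval_one]; exact one_ne_zero] with y hy x hx hxy
  have hpos := hy x hx
  rw [Polynomial.evalEval_sub, Polynomial.evalEval_C, Polynomial.eval_C, hxy, sub_self,
    zero_mul, zero_mul] at hpos
  exact lt_irrefl 0 hpos

theorem tendsto_abs_fst_atTop_of_monic (hP : P.Monic) (hd : 0 < P.natDegree) (t : ℝ) :
    Tendsto (fun p : ℝ × ℝ ↦ |p.1|)
      (cocompact (ℝ × ℝ) ⊓ 𝓟 {p | P.evalEval p.1 p.2 = t}) atTop := by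
  refine tendsto_atTop.2 fun r ↦ eventually_inf_principal.2 ?_
  rw [← Metric.cobounded_eq_cocompact, Bornology.cobounded_prod, Filter.coprod, eventually_sup]
  constructor
  · filter_upwards [tendsto_comap.eventually
      (tendsto_norm_cobounded_atTop.eventually_ge_atTop r)] with p hp _ using hp
  · filter_upwards [tendsto_comap.eventually
      (eventually_evalEval_ne hP hd (isCompact_Icc (a := -r) (b := r)) t)] with p hp hpt
    by_contra! hr
    exact hp p.1 (abs_le.1 hr.le) hpt

theorem eventually_exists_abs_evalEval_eq (hP : P.Monic) (hd : 0 < P.natDegree) :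
    ∀ᶠ a in atTop, ∃ p : ℝ × ℝ, |P.evalEval p.1 p.2| = a := by
  have hlarge : Tendsto (fun y ↦ |P.evalEval 0 y|) atTop atTop := by
    simp only [← Polynomial.map_evalRingHom_eval]
    exact Polynomial.tendsto_norm_atTop _
      (Polynomial.natDegree_pos_iff_degree_pos.1 (by rwa [hP.natDegree_map]))
      tendsto_norm_atTop_atTop
  filter_upwards [eventually_ge_atTop |P.evalEval 0 0|] with a ha
  obtain ⟨y, hy⟩ := (hlarge.eventually_ge_atTop a).exists
  exact mem_range_of_exists_le_of_exists_ge (contDiff_evalEval P).continuous.abs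
    ⟨(0, 0), ha⟩ ⟨(0, y), hy⟩

/-- The corners `(±X, ±a)`: the abscissae and levels met by `|P| = a` on the lines `|x| = X`. -/
noncomputable def signedPairs (X a : ℝ) : Finset (ℝ × ℝ) := {X, -X} ×ˢ {a, -a}

lemma mem_signedPairs {X a : ℝ} (hX : 0 < X) (ha : 0 < a) {q : ℝ × ℝ} :
    q ∈ signedPairs X a ↔ |q.1| = X ∧ |q.2| = a := by
  simp only [signedPairs, Finset.mem_product, Finset.mem_insert, Finset.mem_singleton,
    abs_eq hX.le, abs_eq ha.le]

lemma card_signedPairs {X a : ℝ} (hX : 0 < X) (ha : 0 < a) : (signedPairs X a).card = 4 := by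
  rw [signedPairs, Finset.card_product, Finset.card_pair (self_ne_neg.2 hX.ne'),
    Finset.card_pair (self_ne_neg.2 ha.ne')]

@[to_additive]
lemma prod_signedPairs {M : Type*} [CommMonoid M] {X a : ℝ} (hX : 0 < X) (ha : 0 < a)
    (g : ℝ × ℝ → M) :
    ∏ q ∈ signedPairs X a, g q = g (X, a) * g (X, -a) * (g (-X, a) * g (-X, -a)) := by
  rw [signedPairs, Finset.prod_product, Finset.prod_pair (self_ne_neg.2 hX.ne'),
    Finset.prod_pair (self_ne_neg.2 ha.ne'), Finset.prod_pair (self_ne_neg.2 ha.ne')]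

lemma setOf_abs_eq_and_abs_fst_eq {X a : ℝ} (hX : 0 < X) (ha : 0 < a) :
    {p : ℝ × ℝ | |P.evalEval p.1 p.2| = a ∧ |p.1| = X} =
      ⋃ q ∈ signedPairs X a, Prod.mk q.1 '' {y | P.evalEval q.1 y = q.2} := by
  ext ⟨x, y⟩
  simp only [mem_ofPred_eq, mem_iUnion₂, mem_signedPairs hX ha, mem_image, Prod.mk.injEq]
  constructor
  · rintro ⟨hy, hx⟩
    exact ⟨(x, P.evalEval x y), ⟨hx, hy⟩, y, rfl, rfl, rfl⟩
  · rintro ⟨q, ⟨hx, ht⟩, z, hz, rfl, rfl⟩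
    exact ⟨hz ▸ ht, hx⟩

lemma pairwiseDisjoint_fibers (S : Set (ℝ × ℝ)) :
    S.PairwiseDisjoint fun q ↦ Prod.mk q.1 '' {y | P.evalEval q.1 y = q.2} := by
  refine fun q _ r _ hne ↦ Set.disjoint_left.2 ?_
  rintro _ ⟨y, hy, rfl⟩ ⟨z, hz, hyz⟩
  obtain ⟨hfst, rfl⟩ := Prod.mk.inj hyz
  rw [mem_ofPred_eq, hfst] at hz
  exact hne (Prod.ext hfst.symm (hy.symm.trans hz))

/-- A level `a` for which the curve `|P| = a` is smooth, has no compact component, and is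
transverse to all vertical lines far away: the discriminant locus of the projection to the
first coordinate is bounded for the levels `±a`. -/
structure IsTameLevel (P : ℝ[X][Y]) (a : ℝ) : Prop where
  pos : 0 < a
  fderiv_ne_zero : ∀ p : ℝ × ℝ, |P.evalEval p.1 p.2| = a →
    fderiv ℝ (fun p : ℝ × ℝ ↦ P.evalEval p.1 p.2) p ≠ 0
  not_isCompact : ∀ p : ℝ × ℝ, |P.evalEval p.1 p.2| = a →
    ¬ IsCompact (connectedComponentIn {p : ℝ × ℝ | |P.evalEval p.1 p.2| = a} p)
  leadingCoeff_ne_zero : ∀ t, |t| = a → (fiberResultant P).leadingCoeff.eval t ≠ 0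

variable {a b X : ℝ}

lemma ncard_setOf_abs_eq_and_abs_fst_eq (hP : P.Monic) (hd : 0 < P.natDegree) (hX : 0 < X)
    (ha : 0 < a) : {p : ℝ × ℝ | |P.evalEval p.1 p.2| = a ∧ |p.1| = X}.Finite ∧
      {p : ℝ × ℝ | |P.evalEval p.1 p.2| = a ∧ |p.1| = X}.ncard =
        ∑ q ∈ signedPairs X a, {y | P.evalEval q.1 y = q.2}.ncard := by
  have hfin : ∀ q : ℝ × ℝ, (Prod.mk q.1 '' {y | P.evalEval q.1 y = q.2}).Finite := fun q ↦ by
    rw [setOf_evalEval_eq (monic_fiberPoly hP hd q.1 q.2).ne_zero]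
    exact (Finset.finite_toSet _).image _
  rw [setOf_abs_eq_and_abs_fst_eq hX ha]
  refine ⟨(signedPairs X a).finite_toSet.biUnion fun q _ ↦ hfin q, ?_⟩
  rw [ncard_biUnion_finset (pairwiseDisjoint_fibers _) fun q _ ↦ hfin q]
  exact Finset.sum_congr rfl fun q _ ↦
    ncard_image_of_injective _ (Prod.mk_right_injective q.1)

theorem IsTameLevel.two_mul_card (hP : P.Monic) (hd : 0 < P.natDegree) (h : IsTameLevel P a)
    (hX : 0 < X) (hsep : ∀ x, X ≤ |x| → ∀ t, |t| = a → (fiberPoly P x t).Separable) :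
    Finite (ConnectedComponents {p : ℝ × ℝ | |P.evalEval p.1 p.2| = a}) ∧
      2 * Nat.card (ConnectedComponents {p : ℝ × ℝ | |P.evalEval p.1 p.2| = a}) =
        ∑ q ∈ signedPairs X a, {y | P.evalEval q.1 y = q.2}.ncard := by
  obtain ⟨hfin, hncard⟩ := ncard_setOf_abs_eq_and_abs_fst_eq hP hd hX h.pos
  have habs : ∀ p : ℝ × ℝ, P.evalEval p.1 p.2 ^ 2 = a ^ 2 ↔ |P.evalEval p.1 p.2| = a := fun p ↦ by
    rw [sq_eq_sq_iff_abs_eq_abs, abs_of_pos h.pos]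
  have hset : {p : ℝ × ℝ | P.evalEval p.1 p.2 ^ 2 = a ^ 2} =
      {p : ℝ × ℝ | |P.evalEval p.1 p.2| = a} := Set.ext habs
  have hfderiv : ∀ p : ℝ × ℝ, fderiv ℝ (fun p : ℝ × ℝ ↦ P.evalEval p.1 p.2 ^ 2) p =
      (2 * P.evalEval p.1 p.2) • fderiv ℝ (fun p : ℝ × ℝ ↦ P.evalEval p.1 p.2) p := fun p ↦ by
    simpa using fderiv_fun_pow (𝕜 := ℝ) 2 ((contDiff_evalEval P).differentiable two_ne_zero p)
  have hcoeff : ∀ p : ℝ × ℝ, |P.evalEval p.1 p.2| = a → 2 * P.evalEval p.1 p.2 ≠ 0 := fun p hp ↦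
    mul_ne_zero two_ne_zero (abs_pos.1 (hp ▸ h.pos))
  have hproper : Tendsto (fun p : ℝ × ℝ ↦ |p.1|)
      (cocompact (ℝ × ℝ) ⊓ 𝓟 {p | P.evalEval p.1 p.2 ^ 2 = a ^ 2}) atTop := by
    simp only [sq_eq_sq_iff_eq_or_eq_neg, ofPred_or, ← sup_principal, inf_sup_left]
    exact (tendsto_abs_fst_atTop_of_monic hP hd a).sup
      (tendsto_abs_fst_atTop_of_monic hP hd (-a))
  have hmain := two_mul_card_connectedComponents_levelSet (a := a ^ 2)
    ((contDiff_evalEval P).pow 2) hX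
  simp only [habs, hfderiv] at hmain
  rw [hset] at hmain hproper
  rw [hncard] at hmain
  refine hmain (fun p hp ↦ smul_ne_zero (hcoeff p hp) (h.fderiv_ne_zero p hp)) h.not_isCompact
    hproper (fun p hp hpX ↦ mul_ne_zero (hcoeff p hp) ?_) hfin
  exact (fderiv_evalEval_snd P p).trans_ne
    (derivative_eval_ne_zero_of_separable (hsep p.1 hpX _ hp) rfl)

lemma exists_forall_fiberResultant_pos (h : ∀ c ∈ Icc a b, IsTameLevel P c) :
    ∃ X > 0, ∀ x, X ≤ |x| → ∀ t, |t| ∈ Icc a b →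
      0 < (fiberResultant P).evalEval t x * x ^ (fiberResultant P).natDegree *
        (fiberResultant P).leadingCoeff.eval t := by
  have hK : IsCompact {t : ℝ | |t| ∈ Icc a b} := isCompact_Icc.of_isClosed_subset
    (isClosed_Icc.preimage continuous_abs) fun t ht ↦ abs_le.1 ht.2
  obtain ⟨X, -, hX⟩ := hasBasis_cobounded_norm.eventually_iff.1
    (eventually_evalEval_mul_leadingCoeff_pos hK fun t ht ↦ (h _ ht).leadingCoeff_ne_zero t rfl)
  exact ⟨max X 1, by positivity, fun x hx ↦ hX ((le_max_left _ _).trans hx)⟩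

lemma separable_fiberPoly_of_fiberResultant_pos (hP : P.Monic) (hd : 0 < P.natDegree) {r s : ℝ}
    (h : 0 < (fiberResultant P).evalEval t x * r * s) : (fiberPoly P x t).Separable :=
  (separable_fiberPoly_iff hP hd).2 (left_ne_zero_of_mul (left_ne_zero_of_mul h.ne'))

lemma four_dvd_sum_of_prod_pos {ι : Type*} {T : Finset ι} {n : ι → ℕ} {d : ℕ} {D : ι → ℝ}
    (hT : 4 ∣ T.card) (hn : ∀ i ∈ T, n i ≡ d [MOD 2])
    (hD : ∀ i ∈ T, 0 < (-1) ^ (n i / 2) * D i) (hprod : 0 < ∏ i ∈ T, D i) :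
    4 ∣ ∑ i ∈ T, n i := by
  have hsign : 0 < (-1 : ℝ) ^ (∑ i ∈ T, n i / 2) := by
    have := Finset.prod_pos hD
    rw [Finset.prod_mul_distrib, Finset.prod_pow_eq_pow_sum] at this
    exact pos_of_mul_pos_left this hprod.le
  have heven : Even (∑ i ∈ T, n i / 2) := by
    by_contra hodd
    rw [(Nat.not_even_iff_odd.1 hodd).neg_one_pow] at hsign
    linarith
  have hsum : ∑ i ∈ T, n i = 2 * ∑ i ∈ T, n i / 2 + T.card * (d % 2) := by
    rw [Finset.mul_sum, Finset.card_eq_sum_ones, Finset.sum_mul, ← Finset.sum_add_distrib]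
    refine Finset.sum_congr rfl fun i hi ↦ ?_
    rw [one_mul, ← hn i hi, Nat.div_add_mod]
  rw [hsum]
  exact dvd_add (mul_dvd_mul_left 2 heven.two_dvd) (hT.mul_right _)

lemma four_dvd_sum_signedPairs (hP : P.Monic) (hd : 0 < P.natDegree) (hX : 0 < X) (ha : 0 < a)
    (hpos : ∀ q ∈ signedPairs X a, 0 < (fiberResultant P).evalEval q.2 q.1 *
      q.1 ^ (fiberResultant P).natDegree * (fiberResultant P).leadingCoeff.eval q.2) :
    4 ∣ ∑ q ∈ signedPairs X a, {y | P.evalEval q.1 y = q.2}.ncard := by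
  have hprod : 0 < ∏ q ∈ signedPairs X a, (fiberResultant P).evalEval q.2 q.1 := by
    have := Finset.prod_pos hpos
    simp only [prod_signedPairs hX ha] at this ⊢
    refine pos_of_mul_pos_left (b := (X ^ (fiberResultant P).natDegree *
      (-X) ^ (fiberResultant P).natDegree * (fiberResultant P).leadingCoeff.eval a *
      (fiberResultant P).leadingCoeff.eval (-a)) ^ 2) (this.trans_eq ?_) (sq_nonneg _)
    ring
  have hsep : ∀ q ∈ signedPairs X a, (fiberPoly P q.1 q.2).Separable := fun q hq ↦
    separable_fiberPoly_of_fiberResultant_pos hP hd (hpos q hq)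
  refine four_dvd_sum_of_prod_pos (card_signedPairs hX ha).symm.dvd (d := P.natDegree)
    (fun q hq ↦ ?_) (fun q hq ↦ ?_) hprod <;> rw [ncard_setOf_evalEval_eq (hsep q hq)]
  · rw [← natDegree_fiberPoly hP q.1 q.2]
    exact card_roots_modEq_natDegree (monic_fiberPoly hP hd _ _)
  · have hres := (separable_fiberPoly_iff hP hd).1 (hsep q hq)
    rw [evalEval_fiberResultant hP hd] at hres ⊢
    exact neg_one_pow_card_roots_half_mul_resultant_derivative_pos (monic_fiberPoly hP hd _ _) hres

theorem IsTameLevel.finite_connectedComponents_and_even_card (hP : P.Monic) (hd : 0 < P.natDegree)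
    (h : IsTameLevel P a) :
    Finite (ConnectedComponents {p : ℝ × ℝ | |P.evalEval p.1 p.2| = a}) ∧
      Even (Nat.card (ConnectedComponents {p : ℝ × ℝ | |P.evalEval p.1 p.2| = a})) := by
  obtain ⟨X, hX, hpos⟩ := exists_forall_fiberResultant_pos (a := a) (b := a)
    fun c hc ↦ le_antisymm hc.1 hc.2 ▸ h
  simp only [Icc_self, mem_singleton_iff] at hpos
  obtain ⟨hfin, hcard⟩ := h.two_mul_card hP hd hX fun x hx t ht ↦
    separable_fiberPoly_of_fiberResultant_pos hP hd (hpos x hx t ht)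
  have hfour := four_dvd_sum_signedPairs hP hd hX h.pos fun q hq ↦ by
    obtain ⟨hx, ht⟩ := (mem_signedPairs hX h.pos).1 hq
    exact hpos q.1 hx.ge q.2 ht
  rw [← hcard] at hfour
  exact ⟨hfin, even_iff_two_dvd.2 (Nat.dvd_of_mul_dvd_mul_left two_pos hfour)⟩

lemma ncard_setOf_evalEval_eq_of_le (ha : 0 < a) (hab : a ≤ b)
    (hsep : ∀ t, |t| ∈ Icc a b → (fiberPoly P x t).Separable) :
    {y | P.evalEval x y = a}.ncard = {y | P.evalEval x y = b}.ncard ∧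
      {y | P.evalEval x y = -a}.ncard = {y | P.evalEval x y = -b}.ncard := by
  refine ⟨ncard_setOf_evalEval_eq_of_isPreconnected isPreconnected_Icc (fun t ht ↦ hsep t ?_)
    (left_mem_Icc.2 hab) (right_mem_Icc.2 hab),
    ncard_setOf_evalEval_eq_of_isPreconnected isPreconnected_Icc (fun t ht ↦ hsep t ?_)
    (right_mem_Icc.2 (neg_le_neg hab)) (left_mem_Icc.2 (neg_le_neg hab))⟩
  · rwa [abs_of_pos (ha.trans_le ht.1)]
  · rw [abs_of_neg (ht.2.trans_lt (neg_neg_of_pos ha))]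
    exact ⟨le_neg_of_le_neg ht.2, neg_le_of_neg_le ht.1⟩

theorem card_connectedComponents_eq_of_forall_isTameLevel (hP : P.Monic) (hd : 0 < P.natDegree)
    (hab : a ≤ b) (h : ∀ c ∈ Icc a b, IsTameLevel P c) :
    Nat.card (ConnectedComponents {p : ℝ × ℝ | |P.evalEval p.1 p.2| = a}) =
      Nat.card (ConnectedComponents {p : ℝ × ℝ | |P.evalEval p.1 p.2| = b}) := by
  obtain ⟨X, hX, hpos⟩ := exists_forall_fiberResultant_pos h
  have hsep : ∀ x, X ≤ |x| → ∀ t, |t| ∈ Icc a b → (fiberPoly P x t).Separable :=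
    fun x hx t ht ↦ separable_fiberPoly_of_fiberResultant_pos hP hd (hpos x hx t ht)
  have ha := h a (left_mem_Icc.2 hab)
  have hb := h b (right_mem_Icc.2 hab)
  have hright := ncard_setOf_evalEval_eq_of_le ha.pos hab (hsep X (le_abs_self X))
  have hleft := ncard_setOf_evalEval_eq_of_le ha.pos hab
    (hsep (-X) ((le_abs_self X).trans_eq (abs_neg X).symm))
  have hcarda := (ha.two_mul_card hP hd hX fun x hx t ht ↦
    hsep x hx t ⟨ht.ge, ht.trans_le hab⟩).2
  have hcardb := (hb.two_mul_card hP hd hX fun x hx t ht ↦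
    hsep x hx t ⟨hab.trans ht.ge, ht.le⟩).2
  rw [sum_signedPairs hX ha.pos] at hcarda
  rw [sum_signedPairs hX hb.pos] at hcardb
  lia

end BivariatePolynomials

section MonicNormalForm

variable {R S σ : Type*} [CommSemiring R]

section CommSemiring

variable [CommSemiring S] [Algebra R S] {g : σ → Polynomial S}

lemma coeff_finsuppProd_pow_of_natDegree_le_one (hg : ∀ i, (g i).natDegree ≤ 1) (m : σ →₀ ℕ) :
    (m.prod fun i k ↦ g i ^ k).coeff m.degree = m.prod fun i k ↦ (g i).coeff 1 ^ k := by
  have hprod (T : Type _) [CommSemiring T] (u : σ → T) :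
      (m.toMultiset.map u).prod = m.prod fun i k ↦ u i ^ k := by
    rw [Finsupp.toMultiset_map, Finsupp.prod_toMultiset,
      Finsupp.prod_mapDomain_index (fun _ ↦ pow_zero _) fun _ _ _ ↦ pow_add _ _ _]
  have h := Polynomial.coeff_multiset_prod_of_natDegree_le (m.toMultiset.map g) 1
    (Multiset.forall_mem_map_iff.2 fun i _ ↦ hg i)
  rw [Multiset.card_map, Finsupp.card_toMultiset, mul_one, hprod, Multiset.map_map] at h
  exact h.trans (hprod _ _)

lemma natDegree_finsuppProd_pow_le (hg : ∀ i, (g i).natDegree ≤ 1) (m : σ →₀ ℕ) :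
    (m.prod fun i k ↦ g i ^ k).natDegree ≤ m.degree :=
  (Polynomial.natDegree_prod_le _ _).trans <| Finset.sum_le_sum fun i _ ↦
    (Polynomial.natDegree_pow_le_of_le _ (hg i)).trans (mul_one _).le

lemma coeff_aeval_of_natDegree_le_one (hg : ∀ i, (g i).natDegree ≤ 1) {f : MvPolynomial σ R}
    {d : ℕ} (hd : f.totalDegree ≤ d) :
    (aeval g f).coeff d = aeval (fun i ↦ (g i).coeff 1) (homogeneousComponent d f) := by
  have hle : ∀ m ∈ f.support, m.degree ≤ d := fun m hm ↦ (le_totalDegree hm).trans hd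
  rw [homogeneousComponent_apply, map_sum, aeval_def, eval₂_eq, Polynomial.finsetSum_coeff,
    Finset.sum_filter]
  refine Finset.sum_congr rfl fun m hm ↦ ?_
  rw [Polynomial.algebraMap_apply, Polynomial.coeff_C_mul]
  split_ifs with hmd
  · rw [aeval_monomial, ← coeff_finsuppProd_pow_of_natDegree_le_one hg, hmd]
    rfl
  · have hlt := (natDegree_finsuppProd_pow_le hg m).trans_lt ((hle m hm).lt_of_ne hmd)
    exact mul_eq_zero_of_right _ (Polynomial.coeff_eq_zero_of_natDegree_lt hlt)

lemma natDegree_aeval_le_totalDegree (hg : ∀ i, (g i).natDegree ≤ 1) (f : MvPolynomial σ R) :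
    (aeval g f).natDegree ≤ f.totalDegree :=
  Polynomial.natDegree_le_iff_coeff_eq_zero.2 fun d hd ↦ by
    rw [coeff_aeval_of_natDegree_le_one hg hd.le, homogeneousComponent_eq_zero _ _ hd, map_zero]

end CommSemiring

lemma homogeneousComponent_totalDegree_ne_zero {f : MvPolynomial σ R} (hf : f ≠ 0) :
    homogeneousComponent f.totalDegree f ≠ 0 := by
  obtain ⟨m, hm, hmd⟩ := Finset.exists_mem_eq_sup f.support (support_nonempty.2 hf) fun m ↦
    m.sum fun _ k ↦ k
  refine ne_zero_iff.2 ⟨m, ?_⟩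
  rw [coeff_homogeneousComponent, if_pos (show m.degree = f.totalDegree from hmd.symm)]
  exact mem_support_iff.1 hm

lemma eval_smul_of_isHomogeneous {h : MvPolynomial σ R} {d : ℕ} (hh : h.IsHomogeneous d) (c : R)
    (v : σ → R) : eval (c • v) h = c ^ d * eval v h := by
  rw [eval_eq, eval_eq, Finset.mul_sum]
  refine Finset.sum_congr rfl fun m hm ↦ ?_
  have hm : m.degree = d := by
    rw [Finsupp.degree_eq_weight_one]; exact hh (mem_support_iff.1 hm)
  simp only [Pi.smul_apply, smul_eq_mul, mul_pow, Finset.prod_mul_distrib,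
    Finset.prod_pow_eq_pow_sum]
  rw [← hm, Finsupp.degree_apply]
  ring

lemma exists_eval_vecCons_one_ne_zero {K : Type*} [Field K] [Infinite K]
    {h : MvPolynomial (Fin 2) K} {d : ℕ} (hh : h.IsHomogeneous d) (h0 : h ≠ 0) :
    ∃ s, eval ![s, 1] h ≠ 0 := by
  obtain ⟨v, hv⟩ : ∃ v, eval v (h * X 1) ≠ 0 := by
    by_contra! hall
    exact mul_ne_zero h0 (X_ne_zero 1) <| MvPolynomial.funext fun v ↦
      (hall v).trans (map_zero _).symm
  rw [map_mul, eval_X, mul_ne_zero_iff] at hv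
  have hsmul : v = v 1 • ![v 0 / v 1, 1] := by
    ext i
    fin_cases i <;> simp [mul_div_cancel₀, hv.2]
  rw [hsmul, eval_smul_of_isHomogeneous hh] at hv
  exact ⟨_, right_ne_zero_of_mul hv.1⟩

section Shear

open scoped Polynomial Polynomial.Bivariate

/-- The polynomial `f (X + s Y, Y)`, as a polynomial in `Y` with coefficients in `R[X]`. -/
noncomputable def shearPoly (s : R) (f : MvPolynomial (Fin 2) R) : R[X][Y] :=
  aeval ![.C .X + .C (.C s) * .X, .X] f

lemma evalEval_shearPoly (s : R) (f : MvPolynomial (Fin 2) R) (x y : R) :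
    (shearPoly s f).evalEval x y = eval ![x + s * y, y] f := by
  rw [shearPoly, ← Polynomial.coe_evalEvalRingHom, map_aeval]
  refine eval₂Hom_congr (RingHom.ext fun r ↦ ?_) (funext fun i ↦ ?_) rfl
  · simp [Polynomial.algebraMap_apply]
  · fin_cases i <;> simp

lemma natDegree_shear_le_one (s : R) (i : Fin 2) :
    ((![.C .X + .C (.C s) * .X, .X] : Fin 2 → R[X][Y]) i).natDegree ≤ 1 := by
  fin_cases i
  · exact (add_comm (Polynomial.C (.C s) * .X) (.C .X : R[X][Y])).symm ▸
      Polynomial.natDegree_linear_le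
  · exact Polynomial.natDegree_X_le

lemma natDegree_shearPoly_le (s : R) (f : MvPolynomial (Fin 2) R) :
    (shearPoly s f).natDegree ≤ f.totalDegree :=
  natDegree_aeval_le_totalDegree (natDegree_shear_le_one s) f

lemma coeff_totalDegree_shearPoly (s : R) (f : MvPolynomial (Fin 2) R) :
    (shearPoly s f).coeff f.totalDegree =
      .C (eval ![s, 1] (homogeneousComponent f.totalDegree f)) := by
  have hlin : (fun i ↦ ((![.C .X + .C (.C s) * .X, .X] : Fin 2 → R[X][Y]) i).coeff 1) =
      algebraMap R R[X] ∘ ![s, 1] := by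
    ext1 i
    fin_cases i <;> simp [Polynomial.coeff_C]
  rw [shearPoly, coeff_aeval_of_natDegree_le_one (natDegree_shear_le_one s) le_rfl, hlin,
    aeval_algebraMap_apply, aeval_eq_eval, Polynomial.algebraMap_eq]

theorem exists_monic_shear {K : Type*} [Field K] [Infinite K] {f : MvPolynomial (Fin 2) K}
    (hf : 0 < f.totalDegree) : ∃ (s c : K) (P : K[X][Y]), c ≠ 0 ∧ P.Monic ∧ 0 < P.natDegree ∧
      ∀ x y, eval ![x + s * y, y] f = c * P.evalEval x y := by
  have hf0 : f ≠ 0 := by rintro rfl; simp at hf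
  obtain ⟨s, hs⟩ := exists_eval_vecCons_one_ne_zero
    (homogeneousComponent_isHomogeneous f.totalDegree f)
    (homogeneousComponent_totalDegree_ne_zero hf0)
  set c := eval ![s, 1] (homogeneousComponent f.totalDegree f)
  have hcoeff : ((.C (.C c⁻¹) * shearPoly s f : K[X][Y])).coeff f.totalDegree = 1 := by
    rw [Polynomial.coeff_C_mul, coeff_totalDegree_shearPoly, ← map_mul, inv_mul_cancel₀ hs, map_one]
  refine ⟨s, c, .C (.C c⁻¹) * shearPoly s f, hs, ?_, ?_, fun x y ↦ ?_⟩
  · exact Polynomial.monic_of_natDegree_le_of_coeff_eq_one _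
      ((Polynomial.natDegree_C_mul_le _ _).trans (natDegree_shearPoly_le s f)) hcoeff
  · exact hf.trans_le (Polynomial.le_natDegree_of_ne_zero (hcoeff.trans_ne one_ne_zero))
  · rw [Polynomial.evalEval_mul, Polynomial.evalEval_C, Polynomial.eval_C, evalEval_shearPoly,
      mul_inv_cancel_left₀ hs]

end Shear

end MonicNormalForm

section Levels

open scoped Polynomial Polynomial.Bivariate

/-- The property asserted by the main theorem for a function `F` in place of a polynomial: for
some `N ≥ 1`, all sufficiently large levels of `|F|` have exactly `2 * N` connected components,
none of which is compact. -/
def HasEvenNoncompactLevels {X : Type*} [TopologicalSpace X] (F : X → ℝ) : Prop :=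
  ∃ A₀ : ℝ, 0 < A₀ ∧ ∃ N : ℕ, 1 ≤ N ∧ ∀ A : ℝ, A₀ ≤ A →
    Nat.card (ConnectedComponents {p | |F p| = A}) = 2 * N ∧
    ∀ p ∈ {p | |F p| = A}, ¬ IsCompact (connectedComponentIn {p | |F p| = A} p)

lemma card_connectedComponents_congr {X Z : Type*} [TopologicalSpace X] [TopologicalSpace Z]
    (L : X ≃ₜ Z) : Nat.card (ConnectedComponents X) = Nat.card (ConnectedComponents Z) :=
  Nat.card_congr (L.isQuotientMap.isCoinducing.connectedComponentsHomeomorph fun y ↦ by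
    rw [← L.image_symm, image_singleton]
    exact isConnected_singleton).toEquiv

lemma HasEvenNoncompactLevels.of_comp_homeomorph {X Z : Type*} [TopologicalSpace X]
    [TopologicalSpace Z] {F : Z → ℝ} {G : X → ℝ} {c : ℝ} (L : X ≃ₜ Z) (hc : c ≠ 0)
    (hFG : ∀ p, F (L p) = c * G p) (hG : HasEvenNoncompactLevels G) :
    HasEvenNoncompactLevels F := by
  obtain ⟨A₀, hA₀, N, hN, hlevels⟩ := hG
  have hc' : 0 < |c| := abs_pos.2 hc
  refine ⟨A₀ * |c|, by positivity, N, hN, fun A hA ↦ ?_⟩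
  obtain ⟨hcard, hcompact⟩ := hlevels (A / |c|) ((le_div_iff₀ hc').2 hA)
  have himage : {q | |F q| = A} = L '' {p | |G p| = A / |c|} := by
    rw [← L.image_preimage {q | |F q| = A}]
    congr 1
    ext p
    simp only [mem_preimage, mem_ofPred_eq, hFG, abs_mul, eq_div_iff hc'.ne', mul_comm]
  rw [himage]
  refine ⟨(card_connectedComponents_congr (L.image _)).symm.trans hcard, ?_⟩
  rintro _ ⟨p, hp, rfl⟩
  rw [← L.image_connectedComponentIn hp, L.isCompact_image]
  exact hcompact p hp

variable {P : ℝ[X][Y]}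

lemma eventually_isTameLevel (hP : P.Monic) (hd : 0 < P.natDegree)
    (hfin : {p | fderiv ℝ (fun p : ℝ × ℝ ↦ P.evalEval p.1 p.2) p = 0}.Finite) {t : ℝ}
    (ht : ¬ IsCompact {p : ℝ × ℝ | P.evalEval p.1 p.2 = t}) :
    ∀ᶠ a in atTop, IsTameLevel P a := by
  have hlead := Polynomial.leadingCoeff_ne_zero.2 (fiberResultant_ne_zero hP hd)
  obtain ⟨B, hB⟩ := (hfin.image fun p ↦ |P.evalEval p.1 p.2|).bddAbove
  obtain ⟨C, hC⟩ := ((fiberResultant P).leadingCoeff.roots.toFinset.image abs).bddAbove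
  filter_upwards [eventually_gt_atTop 0, eventually_gt_atTop B, eventually_gt_atTop C,
    eventually_not_isCompact_connectedComponentIn_abs (contDiff_evalEval P) hfin ht]
    with a ha hBa hCa hcompact
  refine ⟨ha, fun p hp h0 ↦ ?_, hcompact, fun r hr h0 ↦ ?_⟩
  · exact hBa.not_ge (hp ▸ hB (mem_image_of_mem _ h0))
  · refine hCa.not_ge (hr ▸ hC ?_)
    exact Finset.mem_image_of_mem _ (Multiset.mem_toFinset.2 ((Polynomial.mem_roots hlead).2 h0))

theorem hasEvenNoncompactLevels_evalEval (hP : P.Monic) (hd : 0 < P.natDegree)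
    (hfin : {p | fderiv ℝ (fun p : ℝ × ℝ ↦ P.evalEval p.1 p.2) p = 0}.Finite) {t : ℝ}
    (ht : ¬ IsCompact {p : ℝ × ℝ | P.evalEval p.1 p.2 = t}) :
    HasEvenNoncompactLevels fun p : ℝ × ℝ ↦ P.evalEval p.1 p.2 := by
  obtain ⟨a, ha⟩ := eventually_atTop.1
    ((eventually_isTameLevel hP hd hfin ht).and (eventually_exists_abs_evalEval_eq hP hd))
  obtain ⟨hfinite, N, hN⟩ := (ha a le_rfl).1.finite_connectedComponents_and_even_card hP hd
  rw [← two_mul] at hN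
  have hpos : 0 < 2 * N := by
    obtain ⟨p, hp⟩ := (ha a le_rfl).2
    have : Nonempty {p : ℝ × ℝ | |P.evalEval p.1 p.2| = a} := ⟨⟨p, hp⟩⟩
    exact hN ▸ Nat.card_pos
  refine ⟨a, (ha a le_rfl).1.pos, N, by lia, fun A hA ↦ ⟨?_, (ha A hA).1.not_isCompact⟩⟩
  rw [← card_connectedComponents_eq_of_forall_isTameLevel hP hd hA fun c hc ↦ (ha c hc.1).1, hN]

lemma hasFDerivAt_evalP (f : MvPolynomial (Fin 2) ℝ) (p : ℝ × ℝ) :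
    HasFDerivAt (fun p : ℝ × ℝ ↦ evalP f p.1 p.2)
      (evalP (pderiv 0 f) p.1 p.2 • ContinuousLinearMap.fst ℝ ℝ ℝ +
        evalP (pderiv 1 f) p.1 p.2 • ContinuousLinearMap.snd ℝ ℝ ℝ) p := by
  induction f using MvPolynomial.induction_on with
  | C a =>
    simp only [evalP, pderiv_C, map_zero, zero_smul, add_zero, eval_C]
    exact hasFDerivAt_const a p
  | add f g hf hg =>
    simp only [evalP, map_add] at hf hg ⊢
    refine (hf.add hg).congr_fderiv ?_
    module
  | mul_X f i hf =>
    have hX : HasFDerivAt (fun p : ℝ × ℝ ↦ evalP (X i) p.1 p.2)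
        (evalP (pderiv 0 (X i)) p.1 p.2 • ContinuousLinearMap.fst ℝ ℝ ℝ +
          evalP (pderiv 1 (X i)) p.1 p.2 • ContinuousLinearMap.snd ℝ ℝ ℝ) p := by
      fin_cases i
      · simpa [evalP, pderiv_X] using (hasFDerivAt_fst (𝕜 := ℝ) (p := p))
      · simpa [evalP, pderiv_X] using (hasFDerivAt_snd (𝕜 := ℝ) (p := p))
    simp only [evalP, map_mul, map_add, Derivation.leibniz, smul_eq_mul] at hf hX ⊢
    refine (hf.mul hX).congr_fderiv ?_
    module

lemma isCriticalPt_iff_fderiv_eq_zero {f : MvPolynomial (Fin 2) ℝ} {p : ℝ × ℝ} :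
    IsCriticalPt f p ↔ fderiv ℝ (fun p : ℝ × ℝ ↦ evalP f p.1 p.2) p = 0 := by
  rw [(hasFDerivAt_evalP f p).fderiv]
  refine ⟨fun ⟨h₀, h₁⟩ ↦ by simp [h₀, h₁], fun h ↦ ⟨?_, ?_⟩⟩
  · simpa using DFunLike.congr_fun h (1, 0)
  · simpa using DFunLike.congr_fun h (0, 1)

lemma finite_setOf_fderiv_eq_zero_of_comp {𝕜 E E' : Type*} [NontriviallyNormedField 𝕜]
    [NormedAddCommGroup E] [NormedSpace 𝕜 E] [NormedAddCommGroup E'] [NormedSpace 𝕜 E']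
    {F : E' → 𝕜} {G : E → 𝕜} {c : 𝕜} (L : E ≃L[𝕜] E') (hFG : ∀ p, F (L p) = c * G p)
    (hF : {q | fderiv 𝕜 F q = 0}.Finite) : {p | fderiv 𝕜 G p = 0}.Finite := by
  refine (hF.preimage L.injective.injOn).subset fun p hp ↦ ?_
  have hcomp : F ∘ L = c • G := funext hFG
  have hfderiv := L.comp_right_fderiv (f := F) (x := p)
  rw [hcomp, fderiv_const_smul_field, Pi.smul_apply, hp, smul_zero] at hfderiv
  ext v
  simpa using (DFunLike.congr_fun hfderiv (L.symm v)).symm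

/-- The shear `(x, y) ↦ (x + s y, y)` of the plane. -/
def shear (s : ℝ) : (ℝ × ℝ) ≃L[ℝ] ℝ × ℝ :=
  .equivOfInverse
    ((ContinuousLinearMap.fst ℝ ℝ ℝ + s • ContinuousLinearMap.snd ℝ ℝ ℝ).prod
      (ContinuousLinearMap.snd ℝ ℝ ℝ))
    ((ContinuousLinearMap.fst ℝ ℝ ℝ - s • ContinuousLinearMap.snd ℝ ℝ ℝ).prod
      (ContinuousLinearMap.snd ℝ ℝ ℝ))
    (fun p ↦ by simp) (fun p ↦ by simp)

end Levels

theorem large_absolute_level_sets_have_2N_noncompact_components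
    (f : MvPolynomial (Fin 2) ℝ) (hnc : 0 < f.totalDegree)
    (hfin : {p : ℝ × ℝ | IsCriticalPt f p}.Finite)
    (hnoncpt : ∃ t : ℝ, ¬ IsCompact {p : ℝ × ℝ | evalP f p.1 p.2 = t}) :
    ∃ A₀ : ℝ, 0 < A₀ ∧ ∃ N : ℕ, 1 ≤ N ∧ ∀ A : ℝ, A₀ ≤ A →
      Nat.card (ConnectedComponents ↥{p : ℝ × ℝ | |evalP f p.1 p.2| = A}) = 2 * N ∧
      ∀ p ∈ {p : ℝ × ℝ | |evalP f p.1 p.2| = A},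
        ¬ IsCompact (connectedComponentIn {p : ℝ × ℝ | |evalP f p.1 p.2| = A} p) := by
  obtain ⟨s, c, P, hc, hP, hd, hfP⟩ := exists_monic_shear hnc
  obtain ⟨t, ht⟩ := hnoncpt
  have hshear : ∀ p : ℝ × ℝ, evalP f (shear s p).1 (shear s p).2 = c * P.evalEval p.1 p.2 :=
    fun p ↦ hfP p.1 p.2
  have hlevel : {p : ℝ × ℝ | P.evalEval p.1 p.2 = t / c} =
      (shear s).toHomeomorph ⁻¹' {q | evalP f q.1 q.2 = t} := by
    ext p
    exact (eq_div_iff hc).trans (by rw [mul_comm, ← hshear]; rfl)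
  have hfinP : {p | fderiv ℝ (fun p : ℝ × ℝ ↦ P.evalEval p.1 p.2) p = 0}.Finite := by
    simp only [isCriticalPt_iff_fderiv_eq_zero] at hfin
    exact finite_setOf_fderiv_eq_zero_of_comp (shear s) hshear hfin
  refine HasEvenNoncompactLevels.of_comp_homeomorph (shear s).toHomeomorph hc hshear
    (hasEvenNoncompactLevels_evalEval hP hd hfinP (t := t / c) ?_)
  rwa [hlevel, Homeomorph.isCompact_preimage]
end
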